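/- Let q = 2^f with f ≥ 4, and let G be a finite group satisfying the two-prime hypothesis with normal subgroups N ≤ M such that M/N ≅ PSL_2(q) and the centralizer of M/N in G/N is trivial. Let B_2 be the union, over all irreducible characters θ of N that are not M-invariant, of cd(G|θ) \ cd(G/N). Then |B_2| ≤ 5. -/

import Mathlib

open CategoryTheory

/-- The set of degrees of the complex irreducible characters of `G`. -/
def charDegrees (G : Type) [Group G] : Set ℕ :=
  {n | ∃ V : FDRep ℂ G, Simple V ∧ Module.finrank ℂ V = n}

/-- `G` satisfies the two-prime hypothesis: for any distinct irreducible character degrees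
`a`, `b`, the gcd `gcd a b` has at most two prime divisors counted with multiplicity. -/
def TwoPrimeHypothesis (G : Type) [Group G] : Prop :=
  ∀ a ∈ charDegrees G, ∀ b ∈ charDegrees G, a ≠ b →
    (Nat.gcd a b).primeFactorsList.length ≤ 2

/-- A character `θ` of a subgroup `N ⊴ G` is `M`-invariant if it is fixed by conjugation by
every element of `M`. -/
def IsMInvariant {G : Type} [Group G] {N : Subgroup G} (M : Subgroup G)
    (θ : FDRep ℂ N) : Prop :=
  ∀ m ∈ M, ∀ x : N, ∀ hx : m * (x : G) * m⁻¹ ∈ N,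
    θ.character ⟨m * (x : G) * m⁻¹, hx⟩ = θ.character x

/-- `cd(G|θ)`: the set of degrees of irreducible characters of `G` whose restriction to `N`
contains `θ` as a constituent (detected by a nonzero inner product of characters). -/
def charDegreesOver (G : Type) [Group G] (N : Subgroup G) (θ : FDRep ℂ N) : Set ℕ :=
  {n | ∃ V : FDRep ℂ G, Simple V ∧ Module.finrank ℂ V = n ∧
    (∑ᶠ x : N, V.character (x : G) * θ.character x⁻¹) ≠ 0}

/-- `PSL₂(F)`: the quotient of `SL₂(F)` by its center. -/
abbrev PSL2 (F : Type) [Field F] : Type :=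
  Matrix.SpecialLinearGroup (Fin 2) F ⧸
    Subgroup.center (Matrix.SpecialLinearGroup (Fin 2) F)

/-!
Since `q` is even, `M / N` is isomorphic to `SL₂(q)`. Let `χ` be an irreducible character of `G` of
degree other than `q` over a character `θ` of `N` that is not `M`-invariant, and let `H < SL₂(q)` be
the image of the inertia group of `θ` in `M`; its index divides `χ(1)`. The action of `G` on the
Sylow `2`-subgroups of `SL₂(q)` is doubly transitive, so `q ∈ cd(G)`, and the two-prime hypothesis
forbids `8 ∣ χ(1)`. Hence `q` divides `4 |H|`, which forces `q + 1` to divide the index of `H`.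

If `4 ∣ χ(1)`, then `4 (q + 1) ∣ χ(1)`, and the two-prime hypothesis leaves one value for `χ(1)`.
Otherwise `H` is, up to conjugacy, contained in a Borel subgroup and contains a subgroup of index at
most `2` of its unipotent radical. Twisting by linear characters of the torus then produces, next to
`χ(1)`, a partner degree that is divisible by `q ^ 2 - 1`. There is only one such degree, and its
odd part leaves at most three other values for `χ(1)`. The exceptional configurations with
`θ(1) = 1` are controlled by the linear character `θ θ^w`, where `w` is the Weyl element: its
inertia group contains the diagonal part of `H` and `w`, but no nontrivial unipotent upper
triangular matrix, and this is only possible for `q = 16`.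
-/

/-! ### Representations of finite groups -/

theorem character_eq_add_of_isCompl {k K V : Type*} [Group K] [Field k] [AddCommGroup V]
    [Module k V] [FiniteDimensional k V] (ρ : Representation k K V) {A B : Subrepresentation ρ}
    (h : IsCompl A.toSubmodule B.toSubmodule) (g : K) :
    ρ.character g = A.toRepresentation.character g + B.toRepresentation.character g := by
  have internal : DirectSum.IsInternal fun b : Bool ↦ cond b A.toSubmodule B.toSubmodule := by
    rw [DirectSum.isInternal_submodule_iff_isCompl (i := true) (j := false) _ (by simp)
      (by ext b; cases b <;> simp)]
    exact h
  have mapsTo (b : Bool) : Set.MapsTo (ρ g) (cond b A.toSubmodule B.toSubmodule : Submodule k V)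
      (cond b A.toSubmodule B.toSubmodule : Submodule k V) := by
    cases b
    · exact fun v hv ↦ B.apply_mem_toSubmodule g hv
    · exact fun v hv ↦ A.apply_mem_toSubmodule g hv
  rw [Representation.character, LinearMap.trace_eq_sum_trace_restrict internal mapsTo,
    Fintype.sum_bool]
  rfl

theorem exists_isCompl_of_not_isIrreducible {k K V : Type*} [Group K] [Finite K] [Field k]
    [NeZero (Nat.card K : k)] [AddCommGroup V] [Module k V] [Nontrivial V]
    (ρ : Representation k K V) (h : ¬ ρ.IsIrreducible) :
    ∃ A B : Subrepresentation ρ,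
      IsCompl A.toSubmodule B.toSubmodule ∧ A.toSubmodule ≠ ⊥ ∧ A.toSubmodule ≠ ⊤ := by
  obtain ⟨A, hbot, htop⟩ : ∃ A : Subrepresentation ρ, A ≠ ⊥ ∧ A ≠ ⊤ := by
    by_contra! hA
    have hne : (⊥ : Subrepresentation ρ) ≠ ⊤ :=
      fun h ↦ bot_ne_top (congrArg Subrepresentation.toSubmodule h)
    exact h { exists_pair_ne := ⟨⊥, ⊤, hne⟩
              eq_bot_or_eq_top := fun A ↦ or_iff_not_imp_left.2 (hA A) }
  have semisimple : ρ.IsSemisimpleRepresentation := inferInstance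
  obtain ⟨B, hAB⟩ := (semisimple : ComplementedLattice (Subrepresentation ρ)).exists_isCompl A
  have hinj := Subrepresentation.toSubmodule_injective (ρ := ρ)
  refine ⟨A, B, ⟨?_, ?_⟩, fun h ↦ hbot (hinj h), fun h ↦ htop (hinj h)⟩
  · exact disjoint_iff.2 (congrArg Subrepresentation.toSubmodule hAB.inf_eq_bot)
  · exact codisjoint_iff.2 (congrArg Subrepresentation.toSubmodule hAB.sup_eq_top)

section IrreducibleRepresentations

variable {K : Type} [Group K]

theorem simple_of_isIrreducible [Finite K] {V : Type} [AddCommGroup V] [Module ℂ V]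
    [FiniteDimensional ℂ V] (ρ : Representation ℂ K V) (h : ρ.IsIrreducible) :
    Simple (FDRep.of ρ) := by
  have := Fintype.ofFinite K
  have := invertibleOfNonzero (NeZero.ne (Nat.card K : ℂ))
  have horth := Representation.char_orthonormal ρ ρ
  rw [if_pos ⟨Representation.Equiv.refl ρ⟩, inv_mul_eq_one₀ (NeZero.ne _)] at horth
  exact (FDRep.simple_iff_char_is_norm_one _).2 horth.symm

theorem exists_character_eq_sum_simple [Finite K] {V : Type} [AddCommGroup V] [Module ℂ V]
    [FiniteDimensional ℂ V] (ρ : Representation ℂ K V) :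
    ∃ l : List (FDRep ℂ K), (∀ W ∈ l, Simple W) ∧
      ∀ g, ρ.character g = (l.map fun W ↦ W.character g).sum := by
  induction hn : Module.finrank ℂ V using Nat.strong_induction_on generalizing V with
  | _ n ih =>
  rcases subsingleton_or_nontrivial V with hV | hV
  · refine ⟨[], by simp, fun g ↦ ?_⟩
    simp [Representation.character, Subsingleton.elim (ρ g) 0]
  by_cases hirr : ρ.IsIrreducible
  · refine ⟨[FDRep.of ρ], by simpa using simple_of_isIrreducible ρ hirr, fun g ↦ ?_⟩
    simp [FDRep.character, Representation.character]
  obtain ⟨A, B, hAB, hbot, htop⟩ := exists_isCompl_of_not_isIrreducible ρ hirr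
  have hadd := Submodule.finrank_add_eq_of_isCompl hAB
  have hApos : 0 < Module.finrank ℂ A.toSubmodule :=
    Module.finrank_pos_iff.2 (Submodule.nontrivial_iff_ne_bot.2 hbot)
  have hAlt := Submodule.finrank_lt htop
  obtain ⟨l₁, hl₁, hsum₁⟩ := ih _ (hn ▸ hAlt) A.toRepresentation rfl
  obtain ⟨l₂, hl₂, hsum₂⟩ := ih _ (by omega) B.toRepresentation rfl
  refine ⟨l₁ ++ l₂, fun W hW ↦ (List.mem_append.1 hW).elim (hl₁ W) (hl₂ W), fun g ↦ ?_⟩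
  rw [character_eq_add_of_isCompl ρ hAB, hsum₁, hsum₂, List.map_append, List.sum_append]

theorem exists_eq_smul_id_of_commute [Finite K] (V : FDRep ℂ K) (hV : Simple V) (T : V →ₗ[ℂ] V)
    (hT : ∀ g, T ∘ₗ V.ρ g = V.ρ g ∘ₗ T) : ∃ c : ℂ, T = c • LinearMap.id := by
  have := Fintype.ofFinite K
  have := invertibleOfNonzero (NeZero.ne (Nat.card K : ℂ))
  have hrank : Module.finrank ℂ (Representation.IntertwiningMap V.ρ V.ρ) = 1 := by
    have hfin := Representation.card_inv_mul_sum_char_mul_char_eq_finrank V.ρ V.ρ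
    rw [show ∑ g : K, Representation.character V.ρ g * Representation.character V.ρ g⁻¹ = _ from
      (FDRep.simple_iff_char_is_norm_one V).1 hV, inv_mul_cancel₀ (NeZero.ne _)] at hfin
    exact_mod_cast hfin.symm
  by_cases hid : Representation.IntertwiningMap.id V.ρ = 0
  · refine ⟨0, LinearMap.ext fun v ↦ ?_⟩
    have hv : v = 0 :=
      LinearMap.congr_fun (congrArg Representation.IntertwiningMap.toLinearMap hid) v
    simp [hv]
  obtain ⟨c, hc⟩ := (finrank_eq_one_iff_of_nonzero' _ hid).1 hrank ⟨T, fun g ↦ hT g⟩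
  exact ⟨c, (congrArg Representation.IntertwiningMap.toLinearMap hc).symm⟩

-- The class function `f` acts on `V` by a scalar, by Schur's lemma; compare traces.
theorem character_one_mul_sum_classFun_mul [Fintype K] (V : FDRep ℂ K) (hV : Simple V) (f : K → ℂ)
    (hf : ∀ g x, f (g * x * g⁻¹) = f x) (y : K) :
    V.character 1 * ∑ x, f x⁻¹ * V.character (x * y) =
      (∑ x, f x⁻¹ * V.character x) * V.character y := by
  have hcomm (g : K) : (∑ x, f x⁻¹ • V.ρ x) * V.ρ g = V.ρ g * ∑ x, f x⁻¹ • V.ρ x := by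
    rw [Finset.sum_mul, Finset.mul_sum]
    refine Fintype.sum_equiv (MulAut.conj g⁻¹).toEquiv _ _ fun x ↦ ?_
    have hinv : f (g⁻¹ * (x⁻¹ * g)) = f x⁻¹ := by
      simpa [mul_assoc] using hf g⁻¹ x⁻¹
    simp [hinv, ← map_mul, mul_assoc]
  obtain ⟨c, hc⟩ := exists_eq_smul_id_of_commute V hV _ hcomm
  have hscalar (y : K) : ∑ x, f x⁻¹ * V.character (x * y) = c * V.character y := by
    have := congrArg (fun T ↦ LinearMap.trace ℂ V (T * V.ρ y)) hc
    simp only [Finset.sum_mul, map_sum, smul_mul_assoc, ← map_mul, map_smul, smul_eq_mul] at this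
    exact this
  have hone : ∑ x, f x⁻¹ * V.character x = c * V.character 1 := by simpa using hscalar 1
  rw [hscalar, hone]
  ring

theorem character_mul_of_finrank_eq_one (V : FDRep ℂ K) (hV : Module.finrank ℂ V = 1)
    (x y : K) : V.character (x * y) = V.character x * V.character y := by
  have hscalar (T : V →ₗ[ℂ] V) : T = LinearMap.trace ℂ V T • LinearMap.id := by
    obtain ⟨v, -, hspan⟩ := finrank_eq_one_iff'.1 hV
    obtain ⟨c, hc⟩ := hspan (T v)
    have hT : T = c • LinearMap.id := by
      ext w
      obtain ⟨d, rfl⟩ := hspan w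
      simp [← hc, smul_smul, mul_comm]
    simp [hT, hV]
  change LinearMap.trace ℂ V (V.ρ (x * y)) = _
  rw [map_mul, hscalar (V.ρ x), smul_mul_assoc, map_smul]
  rfl

theorem exists_representation_character_eq_card_fixedBy (K Ω : Type) [Group K] [Finite Ω]
    [MulAction K Ω] :
    ∃ ρ : Representation ℂ K (Ω → ℂ),
      ∀ g, ρ.character g = (Nat.card (MulAction.fixedBy Ω g) : ℂ) := by
  classical
  have := Fintype.ofFinite Ω
  let ρ : Representation ℂ K (Ω → ℂ) :=
    { toFun g := LinearMap.funLeft ℂ ℂ fun w ↦ g⁻¹ • w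
      map_one' := by ext; simp [LinearMap.funLeft]
      map_mul' a b := by ext; simp [LinearMap.funLeft, mul_smul] }
  refine ⟨ρ, fun g ↦ ?_⟩
  have hdiag (i : Ω) : (LinearMap.toMatrix (Pi.basisFun ℂ Ω) (Pi.basisFun ℂ Ω) (ρ g)).diag i =
      if g • i = i then 1 else 0 := by
    rw [Matrix.diag, LinearMap.toMatrix_apply, Pi.basisFun_apply, Pi.basisFun_repr]
    change (Pi.single i 1 : Ω → ℂ) (g⁻¹ • i) = _
    simp only [Pi.single_apply, inv_smul_eq_iff, eq_comm (a := i)]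
  rw [Representation.character, LinearMap.trace_eq_matrix_trace ℂ (Pi.basisFun ℂ Ω), Matrix.trace,
    Finset.sum_congr rfl fun i _ ↦ hdiag i, Finset.sum_boole, Nat.card_eq_fintype_card,
    Fintype.card_subtype]
  rfl

end IrreducibleRepresentations

/-! ### Characters of subgroups -/

section Characters

variable {G : Type} [Group G]

/-- Extension by zero to `G` of a function on the subgroup `X`. Characters of all subgroups of `G`
are encoded in this way as functions `G → ℂ`, so that they can be compared with each other. -/
noncomputable def extendByZero (X : Subgroup G) (a : X → ℂ) : G → ℂ :=
  Function.extend (↑) a 0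

/-- `χ : G → ℂ` is the extension by zero of a character of the subgroup `X`. -/
def IsCharacter (X : Subgroup G) (χ : G → ℂ) : Prop :=
  ∃ V : FDRep ℂ X, χ = extendByZero X V.character

/-- `χ : G → ℂ` is the extension by zero of an irreducible character of the subgroup `X`. -/
def IsIrredCharacter (X : Subgroup G) (χ : G → ℂ) : Prop :=
  ∃ V : FDRep ℂ X, Simple V ∧ χ = extendByZero X V.character

/-- The inner product of characters of the subgroup `X`. If only `ψ` vanishes off `X`, this is the
inner product of the restriction of `χ` to `X` with `ψ`. -/
noncomputable def charInner (X : Subgroup G) (χ ψ : G → ℂ) : ℂ :=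
  (Nat.card X : ℂ)⁻¹ * ∑ᶠ g, χ g * ψ g⁻¹

/-- The degree of a character; it is `0` by convention if `χ 1` has negative real part. -/
noncomputable def charDegree (χ : G → ℂ) : ℕ := ⌊(χ 1).re⌋₊

variable {X T K : Subgroup G} {χ ψ ξ : G → ℂ}

@[simp]
theorem extendByZero_coe (a : X → ℂ) (x : X) : extendByZero X a x = a x :=
  Subtype.coe_injective.extend_apply a 0 x

theorem extendByZero_of_mem (a : X → ℂ) {g : G} (hg : g ∈ X) : extendByZero X a g = a ⟨g, hg⟩ :=
  extendByZero_coe a ⟨g, hg⟩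

theorem extendByZero_of_notMem (a : X → ℂ) {g : G} (hg : g ∉ X) : extendByZero X a g = 0 :=
  Function.extend_apply' _ _ _ (by simpa using hg)

theorem eq_extendByZero_iff {a : X → ℂ} :
    χ = extendByZero X a ↔ (∀ x : X, χ x = a x) ∧ ∀ g ∉ X, χ g = 0 := by
  refine ⟨?_, fun ⟨hmem, hnotMem⟩ ↦ funext fun g ↦ ?_⟩
  · rintro rfl
    exact ⟨extendByZero_coe a, fun g ↦ extendByZero_of_notMem a⟩
  · by_cases hg : g ∈ X
    · rw [extendByZero_of_mem a hg, ← hmem]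
    · rw [extendByZero_of_notMem a hg, hnotMem g hg]

theorem sum_eq_sum_subgroup [Fintype G] [Fintype X] {φ : G → ℂ} (hφ : ∀ g ∉ X, φ g = 0) :
    ∑ g, φ g = ∑ x : X, φ x := by
  classical
  rw [← Finset.sum_subtype (Finset.univ.filter (· ∈ X)) (by simp), Finset.sum_filter]
  refine Finset.sum_congr rfl fun g _ ↦ ?_
  split_ifs with h
  exacts [rfl, hφ g h]

theorem natCard_subgroup_ne_zero [Finite G] (X : Subgroup G) : (Nat.card X : ℂ) ≠ 0 :=
  Nat.cast_ne_zero.2 Nat.card_pos.ne'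

theorem isCharacter_of_representation {V : Type} [AddCommGroup V] [Module ℂ V]
    [FiniteDimensional ℂ V] (ρ : Representation ℂ X V) (hmem : ∀ x : X, χ x = ρ.character x)
    (hnotMem : ∀ g ∉ X, χ g = 0) : IsCharacter X χ :=
  ⟨FDRep.of ρ, eq_extendByZero_iff.2 ⟨hmem, hnotMem⟩⟩

theorem IsIrredCharacter.isCharacter (h : IsIrredCharacter X χ) : IsCharacter X χ :=
  let ⟨V, _, hχ⟩ := h; ⟨V, hχ⟩

theorem IsCharacter.eq_zero (h : IsCharacter X χ) {g : G} (hg : g ∉ X) : χ g = 0 := by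
  obtain ⟨V, rfl⟩ := h
  exact extendByZero_of_notMem _ hg

theorem IsCharacter.exists_apply_one_eq_natCast (h : IsCharacter X χ) : ∃ n : ℕ, χ 1 = n := by
  obtain ⟨V, rfl⟩ := h
  exact ⟨Module.finrank ℂ V, by rw [extendByZero_of_mem _ X.one_mem]; exact V.char_one⟩

theorem natCast_floor_re {z : ℂ} (h : ∃ n : ℕ, z = n) : ((⌊z.re⌋₊ : ℕ) : ℂ) = z := by
  obtain ⟨n, rfl⟩ := h
  simp

theorem IsCharacter.natCast_charDegree (h : IsCharacter X χ) : (charDegree χ : ℂ) = χ 1 :=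
  natCast_floor_re h.exists_apply_one_eq_natCast

theorem charDegree_extendByZero (V : FDRep ℂ X) :
    charDegree (extendByZero X V.character) = Module.finrank ℂ V := by
  rw [charDegree, extendByZero_of_mem _ X.one_mem, show V.character ⟨1, X.one_mem⟩ = _ from
    V.char_one, Complex.natCast_re, Nat.floor_natCast]

theorem IsCharacter.conj_mul (h : IsCharacter X χ) {g : G} (hg : g ∈ X) (x : G) :
    χ (g * x * g⁻¹) = χ x := by
  by_cases hx : x ∈ X
  · obtain ⟨V, rfl⟩ := h
    rw [extendByZero_of_mem _ hx,
      extendByZero_of_mem _ (X.mul_mem (X.mul_mem hg hx) (X.inv_mem hg))]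
    exact V.char_conj ⟨x, hx⟩ ⟨g, hg⟩
  · rw [h.eq_zero hx, h.eq_zero]
    rwa [X.mul_mem_cancel_right (X.inv_mem hg), X.mul_mem_cancel_left hg]

theorem IsCharacter.restrict (h : IsCharacter K χ) (hX : X ≤ K) :
    IsCharacter X ((X : Set G).indicator χ) := by
  obtain ⟨V, rfl⟩ := h
  refine isCharacter_of_representation
    (MonoidHom.comp V.ρ (Subgroup.inclusion hX) : Representation ℂ X V) (fun x ↦ ?_)
    fun g hg ↦ Set.indicator_of_notMem hg _
  rw [Set.indicator_of_mem (SetLike.mem_coe.2 x.2), extendByZero_of_mem _ (hX x.2)]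
  rfl

theorem IsCharacter.twist (h : IsCharacter X χ) {μ : G → ℂ} (hone : μ 1 = 1)
    (hmul : ∀ x ∈ X, ∀ y ∈ X, μ (x * y) = μ x * μ y) : IsCharacter X (μ * χ) := by
  obtain ⟨V, rfl⟩ := h
  let ρ : Representation ℂ X V :=
    { toFun x := μ x • V.ρ x
      map_one' := by simp [hone]
      map_mul' a b := by
        rw [smul_mul_smul_comm, ← map_mul, ← hmul a a.2 b b.2]; rfl }
  refine isCharacter_of_representation ρ (fun x ↦ ?_) fun g hg ↦ ?_
  · change μ x * _ = LinearMap.trace ℂ V (μ x • V.ρ x)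
    rw [extendByZero_coe, map_smul]
    rfl
  · simp [extendByZero_of_notMem _ hg]

open Classical in
/-- The character of the regular representation of `X`. -/
noncomputable def regularChar (X : Subgroup G) : G → ℂ :=
  fun g ↦ if g = 1 then (Nat.card X : ℂ) else 0

theorem isCharacter_regularChar [Finite G] (X : Subgroup G) : IsCharacter X (regularChar X) := by
  have := Fintype.ofFinite X
  obtain ⟨ρ, hρ⟩ := exists_representation_character_eq_card_fixedBy X X
  refine isCharacter_of_representation ρ (fun x ↦ ?_) fun g hg ↦ if_neg ?_
  · have hfixed : MulAction.fixedBy X x = {_y | x = 1} := by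
      ext y
      simp [MulAction.mem_fixedBy]
    rw [hρ, hfixed]
    by_cases hx : x = 1 <;> simp [regularChar, hx]
  · rintro rfl
    exact hg X.one_mem

theorem IsCharacter.apply_mul_of_apply_one_eq_one (h : IsCharacter X χ) (hone : χ 1 = 1) :
    ∀ x ∈ X, ∀ y ∈ X, χ (x * y) = χ x * χ y := by
  obtain ⟨V, rfl⟩ := h
  rw [extendByZero_of_mem _ X.one_mem] at hone
  have hrank : Module.finrank ℂ V = 1 := by exact_mod_cast V.char_one.symm.trans hone
  intro x hx y hy
  rw [extendByZero_of_mem _ hx, extendByZero_of_mem _ hy, extendByZero_of_mem _ (X.mul_mem hx hy)]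
  exact character_mul_of_finrank_eq_one V hrank ⟨x, hx⟩ ⟨y, hy⟩

theorem IsIrredCharacter.one_mul_sum_classFun_mul [Fintype G] (h : IsIrredCharacter X χ) {φ : G → ℂ}
    (hφ : ∀ g ∉ X, φ g = 0) (hconj : ∀ g ∈ X, ∀ x, φ (g * x * g⁻¹) = φ x) {y : G} (hy : y ∈ X) :
    χ 1 * ∑ x, φ x⁻¹ * χ (x * y) = (∑ x, φ x⁻¹ * χ x) * χ y := by
  have := Fintype.ofFinite X
  obtain ⟨V, hV, rfl⟩ := h
  have hoff (a : G → ℂ) (g : G) (hg : g ∉ X) : φ g⁻¹ * a g = 0 := by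
    rw [hφ _ (by simpa using hg), zero_mul]
  rw [sum_eq_sum_subgroup (hoff fun x ↦ extendByZero X V.character (x * y)),
    sum_eq_sum_subgroup (hoff (extendByZero X V.character))]
  have hmem (x : X) : extendByZero X V.character (x * y) = V.character (x * ⟨y, hy⟩) :=
    extendByZero_of_mem _ (X.mul_mem x.2 hy)
  simp only [hmem, extendByZero_coe, extendByZero_of_mem _ hy, extendByZero_of_mem _ X.one_mem]
  exact character_one_mul_sum_classFun_mul V hV (fun x ↦ φ x) (fun g x ↦ hconj g g.2 x) ⟨y, hy⟩

theorem charInner_eq_sum [Fintype G] (X : Subgroup G) (χ ψ : G → ℂ) :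
    charInner X χ ψ = (Nat.card X : ℂ)⁻¹ * ∑ g, χ g * ψ g⁻¹ := by
  rw [charInner, finsum_eq_sum_of_fintype]

theorem charInner_indicator (hXT : X ≤ T) (χ : G → ℂ) (hψ : IsCharacter X ψ) :
    charInner X ((T : Set G).indicator χ) ψ = charInner X χ ψ := by
  unfold charInner
  congr 1
  refine finsum_congr fun g ↦ ?_
  by_cases hg : g ∈ X
  · rw [Set.indicator_of_mem (SetLike.mem_coe.2 (hXT hg))]
  · rw [hψ.eq_zero (g := g⁻¹) (by simpa using hg), mul_zero, mul_zero]

end Characters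

section Orthogonality

variable {G : Type} [Group G] [Finite G] {X T K : Subgroup G} {χ ψ ξ : G → ℂ}

theorem charInner_extendByZero [Fintype X] (a b : X → ℂ) :
    charInner X (extendByZero X a) (extendByZero X b) =
      (Nat.card X : ℂ)⁻¹ * ∑ x : X, a x * b x⁻¹ := by
  have := Fintype.ofFinite G
  rw [charInner_eq_sum, sum_eq_sum_subgroup (X := X)]
  · simp [← Subgroup.coe_inv, -InvMemClass.coe_inv]
  · intro g hg
    rw [extendByZero_of_notMem _ hg, zero_mul]

theorem IsCharacter.exists_charInner_eq_natCast (hχ : IsCharacter X χ) (hψ : IsCharacter X ψ) :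
    ∃ n : ℕ, charInner X χ ψ = n := by
  have := Fintype.ofFinite X
  have := invertibleOfNonzero (natCard_subgroup_ne_zero X)
  obtain ⟨V, rfl⟩ := hχ
  obtain ⟨W, rfl⟩ := hψ
  rw [charInner_extendByZero]
  exact ⟨_, Representation.card_inv_mul_sum_char_mul_char_eq_finrank W.ρ V.ρ⟩

theorem IsCharacter.isIrredCharacter_iff (h : IsCharacter X χ) :
    IsIrredCharacter X χ ↔ charInner X χ χ = 1 := by
  have := Fintype.ofFinite X
  have norm (V : FDRep ℂ X) : Simple V ↔
      charInner X (extendByZero X V.character) (extendByZero X V.character) = 1 := by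
    rw [FDRep.simple_iff_char_is_norm_one, charInner_extendByZero,
      inv_mul_eq_one₀ (natCard_subgroup_ne_zero X), eq_comm]
  constructor
  · rintro ⟨V, hV, rfl⟩
    exact (norm V).1 hV
  · obtain ⟨V, rfl⟩ := h
    exact fun h ↦ ⟨V, (norm V).2 h, rfl⟩

theorem IsIrredCharacter.charInner_self (h : IsIrredCharacter X χ) : charInner X χ χ = 1 :=
  h.isCharacter.isIrredCharacter_iff.1 h

theorem IsIrredCharacter.charInner_eq_zero (h : IsIrredCharacter X χ) (h' : IsIrredCharacter X ψ)
    (hne : χ ≠ ψ) : charInner X χ ψ = 0 := by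
  classical
  have := Fintype.ofFinite X
  have := invertibleOfNonzero (natCard_subgroup_ne_zero X)
  obtain ⟨V, hV, rfl⟩ := h
  obtain ⟨W, hW, rfl⟩ := h'
  rw [charInner_extendByZero]
  refine (FDRep.char_orthonormal V W).trans (if_neg ?_)
  rintro ⟨i⟩
  exact hne (by rw [FDRep.char_iso i])

open Classical in
theorem IsIrredCharacter.charInner_eq_ite (h : IsIrredCharacter X χ) (h' : IsIrredCharacter X ψ) :
    charInner X χ ψ = if χ = ψ then 1 else 0 := by
  split_ifs with hne
  · exact hne ▸ h.charInner_self
  · exact h.charInner_eq_zero h' hne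

theorem IsIrredCharacter.charDegree_pos (h : IsIrredCharacter X χ) : 0 < charDegree χ := by
  have := Fintype.ofFinite X
  obtain ⟨V, -, rfl⟩ := id h
  rw [charDegree_extendByZero]
  by_contra! hzero
  have : Subsingleton V := Module.finrank_zero_iff (R := ℂ).1 (Nat.le_zero.1 hzero)
  have hchar (x : X) : V.character x = 0 := by
    simp [FDRep.character, Subsingleton.elim (V.ρ x) 0]
  simpa [charInner_extendByZero, hchar] using h.charInner_self

theorem IsIrredCharacter.apply_one_ne_zero (h : IsIrredCharacter X χ) : χ 1 ≠ 0 := by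
  rw [← h.isCharacter.natCast_charDegree]
  exact Nat.cast_ne_zero.2 h.charDegree_pos.ne'

theorem IsCharacter.exists_eq_list_sum (h : IsCharacter X χ) :
    ∃ l : List (G → ℂ), (∀ φ ∈ l, IsIrredCharacter X φ) ∧ χ = l.sum := by
  obtain ⟨V, rfl⟩ := h
  obtain ⟨l, hl, hsum⟩ := exists_character_eq_sum_simple V.ρ
  refine ⟨l.map fun W ↦ extendByZero X W.character, by simpa using fun W hW ↦ ⟨W, hl W hW, rfl⟩,
    (eq_extendByZero_iff.2 ⟨fun x ↦ ?_, fun g hg ↦ ?_⟩).symm⟩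
  · rw [Pi.list_sum_apply, List.map_map]
    simp only [Function.comp_def, extendByZero_coe]
    exact (hsum x).symm
  · rw [Pi.list_sum_apply, List.map_map]
    simp [Function.comp_def, extendByZero_of_notMem _ hg]

theorem IsIrredCharacter.twist (h : IsIrredCharacter X χ) {μ : G → ℂ} (hone : μ 1 = 1)
    (hmul : ∀ x ∈ X, ∀ y ∈ X, μ (x * y) = μ x * μ y) : IsIrredCharacter X (μ * χ) := by
  rw [(h.isCharacter.twist hone hmul).isIrredCharacter_iff, ← h.charInner_self]
  unfold charInner
  congr 1
  refine finsum_congr fun x ↦ ?_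
  by_cases hx : x ∈ X
  · have hinv : μ x * μ x⁻¹ = 1 := by rw [← hmul x hx _ (X.inv_mem hx), mul_inv_cancel, hone]
    simp only [Pi.mul_apply]
    linear_combination (χ x * χ x⁻¹) * hinv
  · simp [h.isCharacter.eq_zero hx]

theorem isIrredCharacter_of_map_mul {μ : G → ℂ} (hone : μ 1 = 1) (hzero : ∀ x ∉ X, μ x = 0)
    (hmul : ∀ x ∈ X, ∀ y ∈ X, μ (x * y) = μ x * μ y) : IsIrredCharacter X μ := by
  have := Fintype.ofFinite X
  have htriv : IsIrredCharacter X (extendByZero X fun _ ↦ 1) := by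
    have hchar : IsCharacter X (extendByZero X fun _ ↦ 1) :=
      isCharacter_of_representation (Representation.trivial ℂ X ℂ)
        (fun x ↦ by simp [Representation.character]) fun g ↦ extendByZero_of_notMem _
    rw [hchar.isIrredCharacter_iff, charInner_extendByZero]
    simp
  convert htriv.twist hone hmul using 1
  ext x
  by_cases hx : x ∈ X
  · simp [extendByZero_of_mem _ hx]
  · simp [hzero x hx]

end Orthogonality

/-! ### Clifford theory -/

section Multiplicity

variable {G : Type} [Group G] {H X T K : Subgroup G} {χ ψ ξ : G → ℂ}

/-- The multiplicity of the character `ψ` of `X` in the restriction of `χ` to `X`. -/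
noncomputable def charMultiplicity (X : Subgroup G) (χ ψ : G → ℂ) : ℕ := ⌊(charInner X χ ψ).re⌋₊

theorem charInner_list_sum [Finite G] (X : Subgroup G) (l : List (G → ℂ)) (ψ : G → ℂ) :
    charInner X l.sum ψ = (l.map fun φ ↦ charInner X φ ψ).sum := by
  have := Fintype.ofFinite G
  induction l with
  | nil => simp [charInner_eq_sum]
  | cons φ l ih =>
    rw [List.map_cons, List.sum_cons, List.sum_cons, ← ih]
    simp only [charInner_eq_sum, Pi.add_apply, add_mul, Finset.sum_add_distrib, mul_add]

theorem charInner_regularChar [Finite G] (X K : Subgroup G) (ψ : G → ℂ) :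
    charInner X (regularChar K) ψ = (Nat.card X : ℂ)⁻¹ * (Nat.card K * ψ 1) := by
  have := Fintype.ofFinite G
  rw [charInner_eq_sum, Fintype.sum_eq_single 1] <;> simp +contextual [regularChar]

variable [Finite G]

theorem IsCharacter.natCast_charMultiplicity (hχ : IsCharacter K χ) (hX : X ≤ K)
    (hψ : IsCharacter X ψ) : (charMultiplicity X χ ψ : ℂ) = charInner X χ ψ := by
  apply natCast_floor_re
  rw [← charInner_indicator le_rfl χ hψ]
  exact (hχ.restrict hX).exists_charInner_eq_natCast hψ

theorem IsCharacter.charMultiplicity_pos_iff (hχ : IsCharacter K χ) (hX : X ≤ K)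
    (hψ : IsCharacter X ψ) : 0 < charMultiplicity X χ ψ ↔ charInner X χ ψ ≠ 0 := by
  rw [← hχ.natCast_charMultiplicity hX hψ, Nat.cast_ne_zero, Nat.pos_iff_ne_zero]

open Classical in
theorem IsIrredCharacter.charInner_list_sum_eq_count (hψ : IsIrredCharacter X ψ)
    {l : List (G → ℂ)} (hl : ∀ φ ∈ l, IsIrredCharacter X φ) :
    charInner X l.sum ψ = l.count ψ := by
  rw [charInner_list_sum]
  induction l with
  | nil => simp
  | cons φ l ih =>
    rw [List.map_cons, List.sum_cons, ih fun φ hφ ↦ hl φ (List.mem_cons_of_mem _ hφ),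
      (hl φ List.mem_cons_self).charInner_eq_ite hψ, List.count_cons]
    by_cases h : φ = ψ <;> simp [h, add_comm]

open Classical in
theorem IsCharacter.exists_restrict_eq_list_sum (hχ : IsCharacter K χ) (hX : X ≤ K) :
    ∃ l : List (G → ℂ), (∀ φ ∈ l, IsIrredCharacter X φ) ∧ (X : Set G).indicator χ = l.sum ∧
      ∀ ψ, IsIrredCharacter X ψ → l.count ψ = charMultiplicity X χ ψ := by
  obtain ⟨l, hl, hsum⟩ := (hχ.restrict hX).exists_eq_list_sum
  refine ⟨l, hl, hsum, fun ψ hψ ↦ ?_⟩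
  have hcount := hψ.charInner_list_sum_eq_count hl
  rw [← hsum, charInner_indicator le_rfl χ hψ.isCharacter,
    ← hχ.natCast_charMultiplicity hX hψ.isCharacter] at hcount
  exact_mod_cast hcount.symm

theorem IsCharacter.charMultiplicity_eq_list_sum (hχ : IsCharacter K χ) (hHT : H ≤ T) (hTK : T ≤ K)
    (hψ : IsCharacter H ψ) {l : List (G → ℂ)} (hl : ∀ φ ∈ l, IsCharacter T φ)
    (hsum : (T : Set G).indicator χ = l.sum) :
    charMultiplicity H χ ψ = (l.map fun φ ↦ charMultiplicity H φ ψ).sum := by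
  rw [← Nat.cast_inj (R := ℂ), hχ.natCast_charMultiplicity (hHT.trans hTK) hψ,
    ← charInner_indicator hHT χ hψ, hsum, charInner_list_sum, Nat.cast_list_sum, List.map_map]
  exact congrArg List.sum (List.map_congr_left fun φ hφ ↦
    ((hl φ hφ).natCast_charMultiplicity hHT hψ).symm)

theorem IsCharacter.charMultiplicity_le (hχ : IsCharacter K χ) (hHT : H ≤ T) (hTK : T ≤ K)
    (hψ : IsCharacter H ψ) (hξ : IsIrredCharacter T ξ) (hχξ : charInner T χ ξ ≠ 0) :
    charMultiplicity H ξ ψ ≤ charMultiplicity H χ ψ := by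
  classical
  obtain ⟨l, hl, hsum, hcount⟩ := hχ.exists_restrict_eq_list_sum hTK
  rw [hχ.charMultiplicity_eq_list_sum hHT hTK hψ (fun φ hφ ↦ (hl φ hφ).isCharacter) hsum]
  have hmem : ξ ∈ l := by
    rw [← List.count_pos_iff, hcount ξ hξ]
    exact (hχ.charMultiplicity_pos_iff hTK hξ.isCharacter).2 hχξ
  exact List.single_le_sum (by simp) _ (List.mem_map_of_mem hmem)

theorem IsCharacter.charInner_ne_zero_trans (hχ : IsCharacter K χ) (hHT : H ≤ T) (hTK : T ≤ K)
    (hψ : IsCharacter H ψ) (hξ : IsIrredCharacter T ξ) (hχξ : charInner T χ ξ ≠ 0)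
    (hξψ : charInner H ξ ψ ≠ 0) : charInner H χ ψ ≠ 0 := by
  rw [← hχ.charMultiplicity_pos_iff (hHT.trans hTK) hψ]
  exact ((hξ.isCharacter.charMultiplicity_pos_iff hHT hψ).2 hξψ).trans_le
    (hχ.charMultiplicity_le hHT hTK hψ hξ hχξ)

theorem IsCharacter.exists_intermediate_constituent (hχ : IsCharacter K χ) (hHT : H ≤ T)
    (hTK : T ≤ K) (hψ : IsCharacter H ψ) (hχψ : charInner H χ ψ ≠ 0) :
    ∃ ξ, IsIrredCharacter T ξ ∧ charInner T χ ξ ≠ 0 ∧ charInner H ξ ψ ≠ 0 := by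
  classical
  obtain ⟨l, hl, hsum, hcount⟩ := hχ.exists_restrict_eq_list_sum hTK
  have hpos := (hχ.charMultiplicity_pos_iff (hHT.trans hTK) hψ).2 hχψ
  rw [hχ.charMultiplicity_eq_list_sum hHT hTK hψ (fun φ hφ ↦ (hl φ hφ).isCharacter) hsum] at hpos
  obtain ⟨ξ, hξ, hξψ⟩ : ∃ ξ ∈ l, 0 < charMultiplicity H ξ ψ := by
    by_contra! hzero
    refine hpos.ne' (List.sum_eq_zero fun n hn ↦ ?_)
    obtain ⟨φ, hφ, rfl⟩ := List.mem_map.1 hn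
    exact Nat.le_zero.1 (hzero φ hφ)
  refine ⟨ξ, hl ξ hξ, ?_, ((hl ξ hξ).isCharacter.charMultiplicity_pos_iff hHT hψ).1 hξψ⟩
  rw [← hχ.charMultiplicity_pos_iff hTK (hl ξ hξ).isCharacter, ← hcount ξ (hl ξ hξ)]
  exact List.count_pos_iff.2 hξ

theorem IsIrredCharacter.exists_irredCharacter_over (hψ : IsIrredCharacter H ψ) (hHK : H ≤ K) :
    ∃ χ, IsIrredCharacter K χ ∧ charInner H χ ψ ≠ 0 := by
  classical
  have hreg : charInner H (regularChar K) ψ ≠ 0 := by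
    rw [charInner_regularChar]
    exact mul_ne_zero (inv_ne_zero (natCard_subgroup_ne_zero H))
      (mul_ne_zero (natCard_subgroup_ne_zero K) hψ.apply_one_ne_zero)
  obtain ⟨χ, hχ, -, hχψ⟩ :=
    (isCharacter_regularChar K).exists_intermediate_constituent hHK le_rfl hψ.isCharacter hreg
  exact ⟨χ, hχ, hχψ⟩

-- Compare the multiplicities of `χ` and `ξ` in the regular character of `K`.
theorem IsIrredCharacter.charDegree_mul_card_le (hχ : IsIrredCharacter K χ) (hTK : T ≤ K)
    (hξ : IsIrredCharacter T ξ) (hχξ : charInner T χ ξ ≠ 0) :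
    charDegree χ * Nat.card T ≤ Nat.card K * charDegree ξ := by
  classical
  have hreg := isCharacter_regularChar K
  obtain ⟨l, hl, hsum, hcount⟩ := hreg.exists_restrict_eq_list_sum le_rfl
  have hmultξ : charMultiplicity T (regularChar K) ξ * Nat.card T = Nat.card K * charDegree ξ := by
    have h := hreg.natCast_charMultiplicity hTK hξ.isCharacter
    rw [charInner_regularChar, ← hξ.isCharacter.natCast_charDegree, ← div_eq_inv_mul,
      eq_div_iff (natCard_subgroup_ne_zero T)] at h
    exact_mod_cast h
  have hmultχ : charMultiplicity K (regularChar K) χ = charDegree χ := by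
    have h := hreg.natCast_charMultiplicity le_rfl hχ.isCharacter
    rw [charInner_regularChar, ← hχ.isCharacter.natCast_charDegree,
      inv_mul_cancel_left₀ (natCard_subgroup_ne_zero K)] at h
    exact_mod_cast h
  have hmem : χ ∈ l.toFinset := by
    rw [List.mem_toFinset, ← List.count_pos_iff, hcount χ hχ, hmultχ]
    exact hχ.charDegree_pos
  rw [← hmultξ, ← hmultχ, ← hcount χ hχ, hreg.charMultiplicity_eq_list_sum hTK le_rfl
    hξ.isCharacter (fun φ hφ ↦ (hl φ hφ).isCharacter) hsum, Finset.sum_list_map_count]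
  refine Nat.mul_le_mul_right _ (le_trans ?_ (Finset.single_le_sum (by simp) hmem))
  exact Nat.le_mul_of_pos_right _
    ((hχ.isCharacter.charMultiplicity_pos_iff hTK hξ.isCharacter).2 hχξ)

end Multiplicity

section Conjugation

variable {G : Type} [Group G] {H K T : Subgroup G} {χ ψ ψ' ξ : G → ℂ}

/-- The conjugate `x ↦ ψ (k x k⁻¹)` of a function on `G`. -/
def conjFun (k : G) (ψ : G → ℂ) : G → ℂ := fun x ↦ ψ (k * x * k⁻¹)

@[simp]
theorem conjFun_apply (k : G) (ψ : G → ℂ) (x : G) : conjFun k ψ x = ψ (k * x * k⁻¹) := rfl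

@[simp]
theorem conjFun_one (ψ : G → ℂ) : conjFun 1 ψ = ψ := by
  ext; simp

theorem conjFun_conjFun (a b : G) (ψ : G → ℂ) : conjFun b (conjFun a ψ) = conjFun (a * b) ψ := by
  ext; simp [mul_assoc]

/-- The inertia subgroup of `ψ` in `K`. -/
def inertia (K : Subgroup G) (ψ : G → ℂ) : Subgroup G where
  carrier := {k | k ∈ K ∧ conjFun k ψ = ψ}
  one_mem' := ⟨K.one_mem, conjFun_one ψ⟩
  mul_mem' := by
    rintro a b ⟨ha, hψa⟩ ⟨hb, hψb⟩
    exact ⟨K.mul_mem ha hb, by rw [← conjFun_conjFun, hψa, hψb]⟩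
  inv_mem' := by
    rintro a ⟨ha, hψa⟩
    refine ⟨K.inv_mem ha, ?_⟩
    rw [← hψa, conjFun_conjFun, mul_inv_cancel, conjFun_one, hψa]

theorem mem_inertia {k : G} : k ∈ inertia K ψ ↔ k ∈ K ∧ conjFun k ψ = ψ := Iff.rfl

theorem inertia_le (K : Subgroup G) (ψ : G → ℂ) : inertia K ψ ≤ K := fun _ hk ↦ hk.1

theorem inertia_inertia (K : Subgroup G) (ψ : G → ℂ) : inertia (inertia K ψ) ψ = inertia K ψ :=
  le_antisymm (inertia_le _ _) fun _ hk ↦ ⟨hk, hk.2⟩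

theorem IsCharacter.le_inertia (hψ : IsCharacter H ψ) (hHK : H ≤ K) : H ≤ inertia K ψ :=
  fun _ hh ↦ ⟨hHK hh, funext fun x ↦ hψ.conj_mul hh x⟩

/-- The `K`-conjugates of `ψ`. -/
noncomputable def conjOrbit [Finite G] (K : Subgroup G) (ψ : G → ℂ) : Finset (G → ℂ) :=
  (Set.toFinite ((fun k ↦ conjFun k ψ) '' K)).toFinset

theorem mem_conjOrbit [Finite G] {φ : G → ℂ} :
    φ ∈ conjOrbit K ψ ↔ ∃ k ∈ K, conjFun k ψ = φ := by
  simp [conjOrbit]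

theorem card_conjOrbit [Finite G] (K : Subgroup G) (ψ : G → ℂ) :
    (conjOrbit K ψ).card = (inertia K ψ).relIndex K := by
  let : MulAction G (G → ℂ) :=
    { smul k φ := conjFun k⁻¹ φ
      one_smul φ := by change conjFun 1⁻¹ φ = φ; rw [inv_one, conjFun_one]
      mul_smul a b φ := by
        change conjFun (a * b)⁻¹ φ = conjFun a⁻¹ (conjFun b⁻¹ φ)
        rw [conjFun_conjFun, mul_inv_rev] }
  have smul_def (k : K) : k • ψ = conjFun (k : G)⁻¹ ψ := rfl
  have hstab : (inertia K ψ).subgroupOf K = MulAction.stabilizer K ψ := by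
    ext k
    rw [Subgroup.mem_subgroupOf, ← inv_mem_iff, mem_inertia, MulAction.mem_stabilizer_iff, smul_def]
    exact and_iff_right (K.inv_mem k.2)
  rw [Subgroup.relIndex, hstab, MulAction.index_stabilizer, conjOrbit,
    ← Set.ncard_eq_toFinset_card _]
  congr 1
  ext φ
  constructor
  · rintro ⟨k, hk, rfl⟩
    exact ⟨⟨k, hk⟩⁻¹, by simp [smul_def]⟩
  · rintro ⟨k, rfl⟩
    exact ⟨(k : G)⁻¹, K.inv_mem k.2, (smul_def k).symm⟩

theorem IsCharacter.conj (hψ : IsCharacter H ψ) {k : G}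
    (hk : k ∈ Subgroup.normalizer (H : Set G)) : IsCharacter H (conjFun k ψ) := by
  have hmem (x : G) : x ∈ H ↔ k * x * k⁻¹ ∈ H := Subgroup.mem_normalizer_iff.1 hk x
  obtain ⟨V, rfl⟩ := hψ
  let c : H →* H := ((MulAut.conj k).toMonoidHom.comp H.subtype).codRestrict H
    fun x ↦ (hmem x).1 x.2
  refine isCharacter_of_representation (MonoidHom.comp V.ρ c : Representation ℂ H V)
    (fun x ↦ extendByZero_of_mem _ ((hmem x).1 x.2)) fun x hx ↦ ?_
  exact extendByZero_of_notMem _ fun h ↦ hx ((hmem x).2 h)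

theorem IsIrredCharacter.conj [Finite G] (hψ : IsIrredCharacter H ψ) {k : G}
    (hk : k ∈ Subgroup.normalizer (H : Set G)) : IsIrredCharacter H (conjFun k ψ) := by
  have := Fintype.ofFinite G
  rw [(hψ.isCharacter.conj hk).isIrredCharacter_iff, ← hψ.charInner_self, charInner_eq_sum,
    charInner_eq_sum]
  congr 1
  exact Fintype.sum_equiv (MulAut.conj k).toEquiv _ _ fun x ↦ by simp [mul_assoc]

theorem IsCharacter.charInner_conjFun [Finite G] (hχ : IsCharacter K χ) {k : G} (hk : k ∈ K) :
    charInner H χ (conjFun k ψ) = charInner H χ ψ := by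
  have := Fintype.ofFinite G
  rw [charInner_eq_sum, charInner_eq_sum]
  congr 1
  refine Fintype.sum_equiv (MulAut.conj k).toEquiv _ _ fun x ↦ ?_
  simp [mul_assoc, ← hχ.conj_mul hk x]

theorem IsIrredCharacter.sum_inv_mul_apply_mul_eq_zero [Fintype G] (hψ : IsIrredCharacter H ψ)
    (hψ' : IsIrredCharacter H ψ') (hne : ψ ≠ ψ') (y : G) : ∑ x, ψ' x⁻¹ * ψ (x * y) = 0 := by
  by_cases hy : y ∈ H
  · have horth : ∑ x, ψ' x⁻¹ * ψ x = 0 := by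
      have h := hψ.charInner_eq_zero hψ' hne
      rw [charInner_eq_sum, mul_eq_zero_iff_left (inv_ne_zero (natCard_subgroup_ne_zero H))] at h
      simpa only [mul_comm] using h
    have hschur := hψ.one_mul_sum_classFun_mul (fun g ↦ hψ'.isCharacter.eq_zero)
      (fun g ↦ hψ'.isCharacter.conj_mul) hy
    rw [horth, zero_mul] at hschur
    exact (mul_eq_zero.1 hschur).resolve_left hψ.apply_one_ne_zero
  · refine Finset.sum_eq_zero fun x _ ↦ ?_
    by_cases hx : x ∈ H
    · rw [hψ.isCharacter.eq_zero (mt (H.mul_mem_cancel_left hx).1 hy), mul_zero]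
    · rw [hψ'.isCharacter.eq_zero (mt H.inv_mem_iff.1 hx), zero_mul]

end Conjugation

section Clifford

variable {G : Type} [Group G] {H K T : Subgroup G} {χ ψ ψ' ξ : G → ℂ}

/-- The sum of `conjFun k ψ` over all `k` in `K`. -/
noncomputable def conjSum (K : Subgroup G) [Fintype K] (ψ : G → ℂ) : G → ℂ :=
  fun x ↦ ∑ k : K, conjFun (k : G) ψ x

theorem conjSum_conj_mul [Fintype K] (ψ : G → ℂ) {g : G} (hg : g ∈ K) (x : G) :
    conjSum K ψ (g * x * g⁻¹) = conjSum K ψ x :=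
  Fintype.sum_equiv (Equiv.mulRight (⟨g, hg⟩ : K)) _ _ fun k ↦ by simp [mul_assoc]

theorem IsCharacter.sum_conjSum_inv_mul [Fintype G] [Fintype K] (hχ : IsCharacter K χ)
    (H : Subgroup G) (ψ : G → ℂ) :
    ∑ x, conjSum K ψ x⁻¹ * χ x = Nat.card K * (Nat.card H * charInner H χ ψ) := by
  have hterm (k : K) :
      ∑ x, conjFun (k : G) ψ x⁻¹ * χ x = Nat.card H * charInner H χ ψ := by
    rw [← hχ.charInner_conjFun k.2, charInner_eq_sum,
      mul_inv_cancel_left₀ (natCard_subgroup_ne_zero H)]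
    simp only [mul_comm]
  simp only [conjSum, Finset.sum_mul]
  rw [Finset.sum_comm, Finset.sum_congr rfl fun k _ ↦ hterm k, Finset.sum_const,
    Finset.card_univ, ← Nat.card_eq_fintype_card, nsmul_eq_mul]

-- By Schur's lemma `conjSum K ψ` acts on `χ` by a nonzero scalar, whereas its convolution with a
-- character of `H` not conjugate to `ψ` vanishes.
theorem IsIrredCharacter.mem_conjOrbit_of_charInner_ne_zero [Finite G] (hHK : H ≤ K)
    (hnorm : K ≤ Subgroup.normalizer (H : Set G)) (hχ : IsIrredCharacter K χ)
    (hψ : IsIrredCharacter H ψ) (hψ' : IsIrredCharacter H ψ') (hχψ : charInner H χ ψ ≠ 0)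
    (hχψ' : charInner H χ ψ' ≠ 0) : ψ' ∈ conjOrbit K ψ := by
  have := Fintype.ofFinite G
  have := Fintype.ofFinite K
  by_contra hnotMem
  have hconj (k : K) : IsIrredCharacter H (conjFun (k : G) ψ) := hψ.conj (hnorm k.2)
  have hne (k : K) : conjFun (k : G) ψ ≠ ψ' := fun h ↦ hnotMem (mem_conjOrbit.2 ⟨k, k.2, h⟩)
  have hoff (g : G) (hg : g ∉ K) : conjSum K ψ g = 0 :=
    Finset.sum_eq_zero fun k _ ↦ (hconj k).isCharacter.eq_zero fun h ↦ hg (hHK h)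
  have hconv (w : G) : ∑ y, ψ' y⁻¹ * conjSum K ψ (y * w) = 0 := by
    simp only [conjSum, Finset.mul_sum]
    rw [Finset.sum_comm]
    exact Finset.sum_eq_zero fun k _ ↦ (hconj k).sum_inv_mul_apply_mul_eq_zero hψ' (hne k) w
  have hschur (y : G) : ψ' y⁻¹ * ∑ x, conjSum K ψ x⁻¹ * χ (x * y) =
      ψ' y⁻¹ * ((∑ x, conjSum K ψ x⁻¹ * χ x) * χ y / χ 1) := by
    by_cases hy : y ∈ K
    · rw [eq_div_of_mul_eq hχ.apply_one_ne_zero ((mul_comm _ _).trans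
        (hχ.one_mul_sum_classFun_mul hoff (fun g hg ↦ conjSum_conj_mul ψ hg) hy))]
    · rw [hψ'.isCharacter.eq_zero fun h ↦ hy (hHK (H.inv_mem_iff.1 h)), zero_mul, zero_mul]
  have hzero : ∑ y, ψ' y⁻¹ * ∑ x, conjSum K ψ x⁻¹ * χ (x * y) = 0 := by
    have hshift (y : G) : ∑ x, conjSum K ψ x⁻¹ * χ (x * y) = ∑ z, χ z * conjSum K ψ (y * z⁻¹) :=
      Fintype.sum_equiv (Equiv.mulRight y) _ _ fun x ↦ by simp [mul_comm]
    simp only [hshift, Finset.mul_sum, mul_left_comm (ψ' _)]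
    rw [Finset.sum_comm]
    exact Finset.sum_eq_zero fun z _ ↦ by rw [← Finset.mul_sum, hconv, mul_zero]
  have hinner : ∑ y, ψ' y⁻¹ * χ y = Nat.card H * charInner H χ ψ' := by
    rw [charInner_eq_sum, mul_inv_cancel_left₀ (natCard_subgroup_ne_zero H)]
    simp only [mul_comm]
  have hfactor : ∑ y, ψ' y⁻¹ * ((∑ x, conjSum K ψ x⁻¹ * χ x) * χ y / χ 1) =
      (∑ x, conjSum K ψ x⁻¹ * χ x) / χ 1 * ∑ y, ψ' y⁻¹ * χ y := by
    rw [Finset.mul_sum]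
    exact Finset.sum_congr rfl fun y _ ↦ by ring
  rw [Finset.sum_congr rfl fun y _ ↦ hschur y, hfactor, hinner,
    hχ.isCharacter.sum_conjSum_inv_mul H ψ] at hzero
  have hH := natCard_subgroup_ne_zero H
  simp [hH, hχψ, hχψ', hχ.apply_one_ne_zero] at hzero

variable [Finite G]

theorem IsIrredCharacter.indicator_eq_smul_sum_conjOrbit (hHK : H ≤ K)
    (hnorm : K ≤ Subgroup.normalizer (H : Set G)) (hχ : IsIrredCharacter K χ)
    (hψ : IsIrredCharacter H ψ) (hχψ : charInner H χ ψ ≠ 0) :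
    (H : Set G).indicator χ = charMultiplicity H χ ψ • ∑ φ ∈ conjOrbit K ψ, φ := by
  classical
  obtain ⟨l, hl, hsum, hcount⟩ := hχ.isCharacter.exists_restrict_eq_list_sum hHK
  have horbit {φ : G → ℂ} (hφ : φ ∈ conjOrbit K ψ) : l.count φ = charMultiplicity H χ ψ := by
    obtain ⟨k, hk, rfl⟩ := mem_conjOrbit.1 hφ
    rw [hcount _ (hψ.conj (hnorm hk)), charMultiplicity, charMultiplicity,
      hχ.isCharacter.charInner_conjFun hk]
  have hset : l.toFinset = conjOrbit K ψ := by
    ext φ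
    rw [List.mem_toFinset]
    refine ⟨fun hφ ↦ ?_, fun hφ ↦ ?_⟩
    · refine hχ.mem_conjOrbit_of_charInner_ne_zero hHK hnorm hψ (hl φ hφ) hχψ ?_
      rw [← hχ.isCharacter.charMultiplicity_pos_iff hHK (hl φ hφ).isCharacter, ← hcount φ (hl φ hφ)]
      exact List.count_pos_iff.2 hφ
    · rw [← List.count_pos_iff, horbit hφ]
      exact (hχ.isCharacter.charMultiplicity_pos_iff hHK hψ.isCharacter).2 hχψ
  rw [hsum, Finset.sum_list_count, hset, Finset.smul_sum]
  exact Finset.sum_congr rfl fun φ hφ ↦ by rw [horbit hφ]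

theorem IsIrredCharacter.charDegree_eq_mul_relIndex (hHK : H ≤ K)
    (hnorm : K ≤ Subgroup.normalizer (H : Set G)) (hχ : IsIrredCharacter K χ)
    (hψ : IsIrredCharacter H ψ) (hχψ : charInner H χ ψ ≠ 0) :
    charDegree χ = charMultiplicity H χ ψ * (inertia K ψ).relIndex K * charDegree ψ := by
  have hone := congrFun (hχ.indicator_eq_smul_sum_conjOrbit hHK hnorm hψ hχψ) 1
  have horbit (φ : G → ℂ) (hφ : φ ∈ conjOrbit K ψ) : φ 1 = ψ 1 := by
    obtain ⟨k, -, rfl⟩ := mem_conjOrbit.1 hφ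
    simp
  rw [Set.indicator_of_mem H.one_mem, Pi.smul_apply, Finset.sum_apply,
    Finset.sum_congr rfl horbit, Finset.sum_const, ← hχ.isCharacter.natCast_charDegree,
    ← hψ.isCharacter.natCast_charDegree, card_conjOrbit, ← mul_smul, nsmul_eq_mul] at hone
  exact_mod_cast hone

theorem IsIrredCharacter.charDegree_dvd (hHK : H ≤ K)
    (hnorm : K ≤ Subgroup.normalizer (H : Set G)) (hχ : IsIrredCharacter K χ)
    (hψ : IsIrredCharacter H ψ) (hχψ : charInner H χ ψ ≠ 0) : charDegree ψ ∣ charDegree χ := by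
  rw [hχ.charDegree_eq_mul_relIndex hHK hnorm hψ hχψ]
  exact dvd_mul_left _ _

theorem IsIrredCharacter.charInner_indicator_self (hHK : H ≤ K)
    (hnorm : K ≤ Subgroup.normalizer (H : Set G)) (hχ : IsIrredCharacter K χ)
    (hψ : IsIrredCharacter H ψ) (hχψ : charInner H χ ψ ≠ 0) :
    charInner H ((H : Set G).indicator χ) ((H : Set G).indicator χ) =
      (charMultiplicity H χ ψ ^ 2 * (inertia K ψ).relIndex K : ℕ) := by
  have := Fintype.ofFinite G
  have hlin (a : G → ℂ) (n : ℕ) (s : Finset (G → ℂ)) :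
      charInner H a (n • ∑ φ ∈ s, φ) = n * ∑ φ ∈ s, charInner H a φ := by
    simp only [charInner_eq_sum, Finset.sum_apply, Finset.smul_sum, Finset.mul_sum]
    rw [Finset.sum_comm]
    refine Finset.sum_congr rfl fun φ _ ↦ Finset.sum_congr rfl fun g _ ↦ ?_
    rw [Pi.smul_apply, nsmul_eq_mul]
    ring
  have horbit (φ : G → ℂ) (hφ : φ ∈ conjOrbit K ψ) :
      charInner H ((H : Set G).indicator χ) φ = charMultiplicity H χ ψ := by
    obtain ⟨k, hk, rfl⟩ := mem_conjOrbit.1 hφ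
    rw [charInner_indicator le_rfl χ (hψ.conj (hnorm hk)).isCharacter,
      hχ.isCharacter.charInner_conjFun hk,
      hχ.isCharacter.natCast_charMultiplicity hHK hψ.isCharacter]
  conv_lhs => rw [hχ.indicator_eq_smul_sum_conjOrbit hHK hnorm hψ hχψ, hlin]
  rw [← hχ.indicator_eq_smul_sum_conjOrbit hHK hnorm hψ hχψ, Finset.sum_congr rfl horbit,
    Finset.sum_const, card_conjOrbit, nsmul_eq_mul]
  push_cast
  ring

-- Frobenius reciprocity bounds the degree of `χ` above, the multiplicity of `ψ` in `χ` below.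
theorem IsIrredCharacter.charDegree_eq_relIndex_mul (hHK : H ≤ K)
    (hnorm : K ≤ Subgroup.normalizer (H : Set G)) (hχ : IsIrredCharacter K χ)
    (hψ : IsIrredCharacter H ψ) (hξ : IsIrredCharacter (inertia K ψ) ξ)
    (hχξ : charInner (inertia K ψ) χ ξ ≠ 0) (hξψ : charInner H ξ ψ ≠ 0) :
    charDegree χ = (inertia K ψ).relIndex K * charDegree ξ := by
  have hHT := hψ.isCharacter.le_inertia hHK
  have hTK := inertia_le K ψ
  have hχψ := hχ.isCharacter.charInner_ne_zero_trans hHT hTK hψ.isCharacter hξ hχξ hξψ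
  have hξdeg := hξ.charDegree_eq_mul_relIndex hHT (hTK.trans hnorm) hψ hξψ
  rw [inertia_inertia, Subgroup.relIndex_self, mul_one] at hξdeg
  refine le_antisymm (Nat.le_of_mul_le_mul_right ?_ (Nat.card_pos (α := inertia K ψ))) ?_
  · calc charDegree χ * Nat.card (inertia K ψ) ≤ Nat.card K * charDegree ξ :=
          hχ.charDegree_mul_card_le hTK hξ hχξ
      _ = (inertia K ψ).relIndex K * charDegree ξ * Nat.card (inertia K ψ) := by
          rw [← Subgroup.relIndex_bot_left K, ← Subgroup.relIndex_mul_relIndex ⊥ _ K bot_le hTK,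
            Subgroup.relIndex_bot_left]
          ring
  · rw [hχ.charDegree_eq_mul_relIndex hHK hnorm hψ hχψ, hξdeg, ← mul_assoc,
      mul_comm (Subgroup.relIndex _ _)]
    exact Nat.mul_le_mul_right _ (Nat.mul_le_mul_right _
      (hχ.isCharacter.charMultiplicity_le hHT hTK hψ.isCharacter hξ hχξ))

end Clifford

/-! ### Twisting by linear characters -/

section Twist

variable {G : Type} [Group G] {A : Type} [CommGroup A] {H K T : Subgroup G} {χ ψ : G → ℂ}

theorem sum_dual_apply [Finite A] [Fintype (A →* ℂˣ)] [DecidableEq A] (a : A) :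
    ∑ l : A →* ℂˣ, (l a : ℂ) = if a = 1 then (Nat.card A : ℂ) else 0 := by
  classical
  have heval : (Units.coeHom ℂ).comp (MonoidHom.eval a : (A →* ℂˣ) →* ℂˣ) = 1 ↔ a = 1 := by
    refine ⟨fun h ↦ ?_, fun h ↦ by ext; simp [h]⟩
    by_contra ha
    obtain ⟨l, hl⟩ := CommGroup.exists_apply_ne_one_of_hasEnoughRootsOfUnity A ℂ ha
    exact hl (Units.ext (DFunLike.congr_fun h l))
  have hsum := sum_hom_units ((Units.coeHom ℂ).comp (MonoidHom.eval a : (A →* ℂˣ) →* ℂˣ))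
  simpa [heval, ← Nat.card_eq_fintype_card,
    CommGroup.card_monoidHom_of_hasEnoughRootsOfUnity A ℂ] using hsum

/-- The linear character of `K` obtained by inflating `l` along `p`, extended by zero to `G`. -/
noncomputable def linearChar (p : K →* A) (l : A →* ℂˣ) : G → ℂ :=
  extendByZero K fun k ↦ (l (p k) : ℂ)

theorem linearChar_one_apply (p : K →* A) (l : A →* ℂˣ) : linearChar p l 1 = 1 := by
  rw [linearChar, extendByZero_of_mem _ K.one_mem, show (⟨1, K.one_mem⟩ : K) = 1 from rfl,
    map_one, map_one, Units.val_one]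

theorem linearChar_apply_mul (p : K →* A) (l : A →* ℂˣ) :
    ∀ x ∈ K, ∀ y ∈ K, linearChar p l (x * y) = linearChar p l x * linearChar p l y := by
  intro x hx y hy
  rw [linearChar, extendByZero_of_mem _ hx, extendByZero_of_mem _ hy,
    extendByZero_of_mem _ (K.mul_mem hx hy), ← Units.val_mul, ← map_mul, ← map_mul]
  rfl

theorem linearChar_mul (p : K →* A) (l m : A →* ℂˣ) :
    linearChar p (l * m) = linearChar p l * linearChar p m := by
  ext x
  by_cases hx : x ∈ K
  · simp [linearChar, extendByZero_of_mem _ hx]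
  · simp [linearChar, extendByZero_of_notMem _ hx]

theorem IsCharacter.linearChar_one_mul (hχ : IsCharacter K χ) (p : K →* A) :
    linearChar p 1 * χ = χ := by
  ext x
  by_cases hx : x ∈ K
  · simp [linearChar, extendByZero_of_mem _ hx]
  · simp [hχ.eq_zero hx]

theorem IsIrredCharacter.linearChar_mul [Finite G] (hχ : IsIrredCharacter K χ) (p : K →* A)
    (l : A →* ℂˣ) : IsIrredCharacter K (linearChar p l * χ) :=
  hχ.twist (linearChar_one_apply p l) (linearChar_apply_mul p l)

/-- The linear characters of `A` whose inflation to `K` fixes `χ` under multiplication. -/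
def twistStabilizer (p : K →* A) (χ : G → ℂ) : Subgroup (A →* ℂˣ) where
  carrier := {l | ∀ k : K, (l (p k) : ℂ) * χ k = χ k}
  one_mem' k := by simp
  mul_mem' {l m} hl hm k := by simp [mul_assoc, hm k, hl k]
  inv_mem' {l} hl k := by
    rw [MonoidHom.inv_apply, Units.inv_mul_eq_iff_eq_mul, hl k]

theorem IsCharacter.mem_twistStabilizer (hχ : IsCharacter K χ) {p : K →* A} {l : A →* ℂˣ} :
    l ∈ twistStabilizer p χ ↔ linearChar p l * χ = χ := by
  refine ⟨fun h ↦ funext fun x ↦ ?_, fun h k ↦ ?_⟩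
  · by_cases hx : x ∈ K
    · simpa [linearChar, extendByZero_of_mem _ hx] using h ⟨x, hx⟩
    · simp [hχ.eq_zero hx]
  · simpa [linearChar] using congrFun h k

variable {p : K →* A}

theorem le_normalizer_of_ker_eq (hHK : H ≤ K) (hker : p.ker = H.subgroupOf K) :
    K ≤ Subgroup.normalizer (H : Set G) := by
  rw [← Subgroup.normal_subgroupOf_iff_le_normalizer hHK, ← hker]
  exact p.normal_ker

theorem relIndex_eq_natCard_of_ker_eq (hp : Function.Surjective p)
    (hker : p.ker = H.subgroupOf K) : H.relIndex K = Nat.card A := by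
  rw [Subgroup.relIndex, ← hker, Subgroup.index_ker, MonoidHom.range_eq_top.2 hp,
    Nat.card_congr Subgroup.topEquiv.toEquiv]

theorem charInner_linearChar_mul (hHK : H ≤ K) (hker : p.ker = H.subgroupOf K)
    (hψ : IsCharacter H ψ) (l : A →* ℂˣ) (χ : G → ℂ) :
    charInner H (linearChar p l * χ) ψ = charInner H χ ψ := by
  unfold charInner
  congr 1
  refine finsum_congr fun g ↦ ?_
  by_cases hg : g ∈ H
  · have hpg : p ⟨g, hHK hg⟩ = 1 := by
      rw [← MonoidHom.mem_ker, hker]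
      exact hg
    rw [Pi.mul_apply, linearChar, extendByZero_of_mem _ (hHK hg), hpg, map_one, Units.val_one,
      one_mul]
  · rw [hψ.eq_zero (mt H.inv_mem_iff.1 hg), mul_zero, mul_zero]

theorem sum_linearChar [Finite A] [Fintype (A →* ℂˣ)] (hHK : H ≤ K)
    (hker : p.ker = H.subgroupOf K) (g : G) :
    ∑ l : A →* ℂˣ, linearChar p l g = (H : Set G).indicator (fun _ ↦ (Nat.card A : ℂ)) g := by
  classical
  by_cases hg : g ∈ K
  · simp only [linearChar, extendByZero_of_mem _ hg, sum_dual_apply, Set.indicator_apply,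
      ← MonoidHom.mem_ker, hker, Subgroup.mem_subgroupOf, SetLike.mem_coe]
  · simp [linearChar, extendByZero_of_notMem _ hg, mt (@hHK g) hg]

variable [Finite G] [Finite A]

theorem IsIrredCharacter.natCard_twistStabilizer (hp : Function.Surjective p) (hHK : H ≤ K)
    (hker : p.ker = H.subgroupOf K) (hχ : IsIrredCharacter K χ) :
    (Nat.card (twistStabilizer p χ) : ℂ) =
      charInner H ((H : Set G).indicator χ) ((H : Set G).indicator χ) := by
  classical
  have := Fintype.ofFinite G
  have := Fintype.ofFinite (A →* ℂˣ)
  have hcount : (Nat.card (twistStabilizer p χ) : ℂ) =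
      ∑ l : A →* ℂˣ, charInner K (linearChar p l * χ) χ := by
    simp only [(hχ.linearChar_mul p _).charInner_eq_ite hχ, ← hχ.isCharacter.mem_twistStabilizer,
      Finset.sum_boole, Nat.card_eq_fintype_card, Fintype.card_subtype]
  have hcard : Nat.card K = Nat.card A * Nat.card H := by
    rw [← relIndex_eq_natCard_of_ker_eq hp hker, ← Subgroup.relIndex_bot_left K,
      ← Subgroup.relIndex_mul_relIndex ⊥ _ K bot_le hHK, Subgroup.relIndex_bot_left, mul_comm]
  have hsum : ∑ l : A →* ℂˣ, ∑ g, linearChar p l g * χ g * χ g⁻¹ =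
      Nat.card A * ∑ g, (H : Set G).indicator χ g * (H : Set G).indicator χ g⁻¹ := by
    rw [Finset.sum_comm, Finset.mul_sum]
    refine Finset.sum_congr rfl fun g _ ↦ ?_
    rw [← Finset.sum_mul, ← Finset.sum_mul, sum_linearChar hHK hker]
    by_cases hg : g ∈ H <;> simp [hg, mul_assoc]
  have hA : (Nat.card A : ℂ) ≠ 0 := Nat.cast_ne_zero.2 Nat.card_pos.ne'
  simp only [hcount, charInner_eq_sum, ← Finset.mul_sum, Pi.mul_apply, hsum, hcard]
  rw [Nat.cast_mul, mul_inv, mul_assoc, mul_left_comm, inv_mul_cancel_left₀ hA]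

theorem IsIrredCharacter.natCard_twistStabilizer_eq (hp : Function.Surjective p) (hHK : H ≤ K)
    (hker : p.ker = H.subgroupOf K) (hχ : IsIrredCharacter K χ) (hψ : IsIrredCharacter H ψ)
    (hχψ : charInner H χ ψ ≠ 0) :
    Nat.card (twistStabilizer p χ) = charMultiplicity H χ ψ ^ 2 * (inertia K ψ).relIndex K := by
  rw [← Nat.cast_inj (R := ℂ), hχ.natCard_twistStabilizer hp hHK hker,
    hχ.charInner_indicator_self hHK (le_normalizer_of_ker_eq hHK hker) hψ hχψ]

theorem IsIrredCharacter.charMultiplicity_sq_mul_relIndex_dvd (hp : Function.Surjective p)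
    (hHK : H ≤ K) (hker : p.ker = H.subgroupOf K) (hχ : IsIrredCharacter K χ)
    (hψ : IsIrredCharacter H ψ) (hχψ : charInner H χ ψ ≠ 0) :
    charMultiplicity H χ ψ ^ 2 * (inertia K ψ).relIndex K ∣ Nat.card A := by
  rw [← hχ.natCard_twistStabilizer_eq hp hHK hker hψ hχψ,
    ← CommGroup.card_monoidHom_of_hasEnoughRootsOfUnity A ℂ]
  exact Subgroup.card_subgroup_dvd_card _

end Twist

section RegularTwist

variable {G : Type} [Group G] {N P T : Subgroup G} {A Z : Type} [CommGroup A] [CommGroup Z]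
  {p : P →* A} {t : G} {τ : A →* A} {φ ψ θ η : G → ℂ}

/-- Conjugation by `t` induces the endomorphism `τ` on the quotient `p : P →* A` of `P`. -/
def ConjInduces (p : P →* A) (t : G) (τ : A →* A) : Prop :=
  ∀ x : P, ∀ hx : t * (x : G) * t⁻¹ ∈ P, p ⟨t * x * t⁻¹, hx⟩ = τ (p x)

theorem ConjInduces.conjFun_linearChar_mul (hτ : ConjInduces p t τ)
    (ht : t ∈ Subgroup.normalizer (P : Set G)) (l : A →* ℂˣ) (φ : G → ℂ) :
    conjFun t (linearChar p l * φ) = linearChar p (l.comp τ) * conjFun t φ := by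
  ext x
  rw [conjFun_apply, Pi.mul_apply, Pi.mul_apply, conjFun_apply]
  congr 1
  by_cases hx : x ∈ P
  · have hx' := (Subgroup.mem_normalizer_iff.1 ht x).1 hx
    rw [linearChar, extendByZero_of_mem _ hx', linearChar, extendByZero_of_mem _ hx,
      hτ ⟨x, hx⟩ hx', MonoidHom.comp_apply]
  · have hx' := mt (Subgroup.mem_normalizer_iff.1 ht x).2 hx
    rw [linearChar, extendByZero_of_notMem _ hx', linearChar, extendByZero_of_notMem _ hx]

-- `γ ↦ γ ∘ τ / γ` is injective on the dual of `A` and preserves the finite group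
-- `twistStabilizer p φ`, hence so does its inverse.
theorem ConjInduces.linearChar_mul_eq_self [Finite A] (hτ : ConjInduces p t τ)
    (ht : t ∈ Subgroup.normalizer (P : Set G)) (hsurj : Function.Surjective fun a ↦ τ a * a⁻¹)
    (hφ : IsCharacter P φ) (hfix : conjFun t φ = φ) {l : A →* ℂˣ}
    (hfixl : conjFun t (linearChar p l * φ) = linearChar p l * φ) : linearChar p l * φ = φ := by
  let S := twistStabilizer p φ
  have hstab (γ : A →* ℂˣ) (hγ : γ ∈ S) : γ.comp τ ∈ S := by
    have h := hτ.conjFun_linearChar_mul ht γ φ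
    rw [hφ.mem_twistStabilizer.1 hγ, hfix] at h
    exact hφ.mem_twistStabilizer.2 h.symm
  have hinj (γ δ : A →* ℂˣ) (h : γ.comp τ * γ⁻¹ = δ.comp τ * δ⁻¹) : γ = δ := by
    ext a
    obtain ⟨b, rfl⟩ := hsurj a
    have hb := DFunLike.congr_fun h b
    simp only [MonoidHom.mul_apply, MonoidHom.comp_apply, MonoidHom.inv_apply] at hb
    rw [map_mul, map_mul, map_inv, map_inv, hb]
  let m (γ : S) : S := ⟨γ.1.comp τ * γ.1⁻¹, S.mul_mem (hstab _ γ.2) (S.inv_mem γ.2)⟩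
  have hm : Function.Surjective m := Finite.injective_iff_surjective.1
    fun γ δ h ↦ Subtype.ext (hinj _ _ (congrArg Subtype.val h))
  have hl : l.comp τ * l⁻¹ ∈ S := by
    have h := hτ.conjFun_linearChar_mul ht l φ
    rw [hfix, hfixl] at h
    rw [hφ.mem_twistStabilizer, mul_comm (l.comp τ), linearChar_mul, mul_assoc, ← h, ← mul_assoc,
      ← linearChar_mul, show l⁻¹ * l = 1 from inv_mul_cancel l, hφ.linearChar_one_mul]
  obtain ⟨σ, hσ⟩ := hm ⟨_, hl⟩
  rw [← hinj _ _ (congrArg Subtype.val hσ)]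
  exact hφ.mem_twistStabilizer.1 σ.2

theorem mul_mul_inv_mem_of_ker_eq {s : T →* Z} (hs : s.ker = P.subgroupOf T) :
    ∀ x ∈ T, ∀ y ∈ T, x * y * (y * x)⁻¹ ∈ P := by
  intro x hx y hy
  have hmem : (⟨x, hx⟩ * ⟨y, hy⟩ * (⟨y, hy⟩ * ⟨x, hx⟩)⁻¹ : T) ∈ P.subgroupOf T := by
    rw [← hs, MonoidHom.mem_ker, map_mul, map_inv, map_mul, map_mul, mul_comm (s ⟨y, hy⟩),
      mul_inv_cancel]
  exact hmem

variable [Finite G]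

-- Suppose `t₁ ∉ P` fixes `ψ` and `t₂ ∉ P` fixes a twist of `ψ`. As `t₁` and `t₂` commute modulo
-- `P`, the conjugate of `ψ` by `t₂` is a twist of `ψ` fixed by `t₁`, so it is `ψ`.
theorem exists_inertia_linearChar_mul_eq [Finite A] (hPT : P ≤ T)
    (hnorm : T ≤ Subgroup.normalizer (P : Set G))
    (hcomm : ∀ s ∈ T, ∀ t ∈ T, s * t * (t * s)⁻¹ ∈ P)
    (hτ : ∀ t ∈ T, ∃ τ : A →* A, ConjInduces p t τ ∧
      (t ∉ P → Function.Surjective fun a ↦ τ a * a⁻¹))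
    (hψ : IsIrredCharacter P ψ) (hne : ∃ l : A →* ℂˣ, linearChar p l * ψ ≠ ψ) :
    ∃ l : A →* ℂˣ, inertia T (linearChar p l * ψ) = P := by
  by_contra! hno
  have hfixed (l : A →* ℂˣ) :
      ∃ t ∈ T, t ∉ P ∧ conjFun t (linearChar p l * ψ) = linearChar p l * ψ := by
    by_contra! hfree
    refine hno l (le_antisymm (fun t ht ↦ ?_)
      ((hψ.linearChar_mul p l).isCharacter.le_inertia hPT))
    by_contra htP
    exact hfree t ht.1 htP ht.2
  obtain ⟨l, hl⟩ := hne
  obtain ⟨t₁, ht₁, htP₁, hfix₁⟩ := hfixed 1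
  obtain ⟨t₂, ht₂, htP₂, hfix₂⟩ := hfixed l
  rw [hψ.isCharacter.linearChar_one_mul] at hfix₁
  obtain ⟨τ₁, hτ₁, hsurj₁⟩ := hτ t₁ ht₁
  obtain ⟨τ₂, hτ₂, hsurj₂⟩ := hτ t₂ ht₂
  have htwist : conjFun t₂ ψ = linearChar p (l⁻¹.comp τ₂ * l) * ψ := by
    have h := hτ₂.conjFun_linearChar_mul (hnorm ht₂) l⁻¹ (linearChar p l * ψ)
    rwa [hfix₂, ← mul_assoc, ← mul_assoc, ← linearChar_mul, ← linearChar_mul,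
      show l⁻¹ * l = 1 from inv_mul_cancel l, hψ.isCharacter.linearChar_one_mul] at h
  have hfix₁₂ : conjFun t₁ (conjFun t₂ ψ) = conjFun t₂ ψ := by
    have hP : conjFun (t₂ * t₁ * (t₁ * t₂)⁻¹) ψ = ψ :=
      funext (hψ.isCharacter.conj_mul (hcomm t₂ ht₂ t₁ ht₁))
    calc conjFun t₁ (conjFun t₂ ψ) = conjFun (t₂ * t₁ * (t₁ * t₂)⁻¹ * (t₁ * t₂)) ψ := by
          rw [conjFun_conjFun, inv_mul_cancel_right]
      _ = conjFun t₂ ψ := by rw [← conjFun_conjFun, hP, ← conjFun_conjFun, hfix₁]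
  have hfix : conjFun t₂ ψ = ψ := by
    rw [htwist] at hfix₁₂ ⊢
    exact hτ₁.linearChar_mul_eq_self (hnorm ht₁) (hsurj₁ htP₁) hψ.isCharacter hfix₁ hfix₁₂
  exact hl (hτ₂.linearChar_mul_eq_self (hnorm ht₂) (hsurj₂ htP₂) hψ.isCharacter hfix hfix₂)

-- When `e ^ 2` is not the order of `A`, some twist of the constituent of `η` on `P` is not fixed
-- by any element of `T` outside `P`, so inducing that twist to `T` gives an irreducible character.
theorem IsIrredCharacter.exists_charDegree_eq_of_twist [Finite A] (hp : Function.Surjective p)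
    (hNP : N ≤ P) (hker : p.ker = N.subgroupOf P) {s : T →* Z} (hs : Function.Surjective s)
    (hPT : P ≤ T) (hsker : s.ker = P.subgroupOf T)
    (hτ : ∀ t ∈ T, ∃ τ : A →* A, ConjInduces p t τ ∧
      (t ∉ P → Function.Surjective fun a ↦ τ a * a⁻¹))
    (hθ : IsIrredCharacter N θ) (hinv : ∀ t ∈ T, conjFun t θ = θ) (hη : IsIrredCharacter T η)
    (hηθ : charInner N η θ ≠ 0) :
    ∃ e k : ℕ, e ^ 2 ∣ Nat.card A ∧ k ∣ Nat.card Z ∧ charDegree η = k * e * charDegree θ ∧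
      (e ^ 2 < Nat.card A → ∃ η', IsIrredCharacter T η' ∧ charInner N η' θ ≠ 0 ∧
        charDegree η' = Nat.card Z * e * charDegree θ) := by
  have : Finite Z := Finite.of_surjective s hs
  have hnorm := le_normalizer_of_ker_eq hPT hsker
  obtain ⟨ψ, hψ, hηψ, hψθ⟩ :=
    hη.isCharacter.exists_intermediate_constituent hNP hPT hθ.isCharacter hηθ
  have hinertia : (inertia P θ).relIndex P = 1 :=
    Subgroup.relIndex_eq_one.2 fun t ht ↦ ⟨ht, hinv t (hPT ht)⟩
  have hψdeg := hψ.charDegree_eq_mul_relIndex hNP (le_normalizer_of_ker_eq hNP hker) hθ hψθ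
  have hstab := hψ.natCard_twistStabilizer_eq hp hNP hker hθ hψθ
  have hdvd := hψ.charMultiplicity_sq_mul_relIndex_dvd hp hNP hker hθ hψθ
  rw [hinertia, mul_one] at hψdeg hstab hdvd
  refine ⟨charMultiplicity N ψ θ, charMultiplicity P η ψ * (inertia T ψ).relIndex T, hdvd,
    dvd_trans (mul_dvd_mul_right (dvd_pow_self _ two_ne_zero) _)
      (hη.charMultiplicity_sq_mul_relIndex_dvd hs hPT hsker hψ hηψ), ?_, fun hlt ↦ ?_⟩
  · rw [hη.charDegree_eq_mul_relIndex hPT hnorm hψ hηψ, hψdeg]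
    ring
  have hne : ∃ l : A →* ℂˣ, linearChar p l * ψ ≠ ψ := by
    by_contra! hall
    have htop : twistStabilizer p ψ = ⊤ :=
      (Subgroup.eq_top_iff' _).2 fun l ↦ hψ.isCharacter.mem_twistStabilizer.2 (hall l)
    rw [htop, Subgroup.card_top, CommGroup.card_monoidHom_of_hasEnoughRootsOfUnity A ℂ] at hstab
    exact hlt.ne hstab.symm
  obtain ⟨l, hl⟩ :=
    exists_inertia_linearChar_mul_eq hPT hnorm (mul_mul_inv_mem_of_ker_eq hsker) hτ hψ hne
  have hψ' := hψ.linearChar_mul p l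
  obtain ⟨η', hη', hη'ψ'⟩ := hψ'.exists_irredCharacter_over hPT
  refine ⟨η', hη', hη'.isCharacter.charInner_ne_zero_trans hNP hPT hθ.isCharacter hψ' hη'ψ'
    (by rwa [charInner_linearChar_mul hNP hker hθ.isCharacter]), ?_⟩
  have hη'deg := hη'.charDegree_eq_relIndex_mul (ξ := linearChar p l * ψ) hPT hnorm hψ'
    (by rwa [hl]) (by rwa [hl]) (by rw [hψ'.charInner_self]; exact one_ne_zero)
  rw [hη'deg, hl, relIndex_eq_natCard_of_ker_eq hs hsker, charDegree, Pi.mul_apply,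
    linearChar_one_apply, one_mul, ← charDegree, hψdeg, mul_assoc]

end RegularTwist

/-! ### Degrees of irreducible representations -/

section CharDegrees

variable {G : Type} [Group G] [Finite G]

theorem exists_simple_comp_mulEquiv {K L : Type} [Group K] [Group L] [Finite L] (e : K ≃* L)
    (V : FDRep ℂ L) (hV : Simple V) :
    ∃ W : FDRep ℂ K, Simple W ∧ Module.finrank ℂ W = Module.finrank ℂ V ∧
      ∀ k, W.character k = V.character (e k) := by
  have := Fintype.ofFinite L
  have := Fintype.ofEquiv L e.symm.toEquiv
  refine ⟨FDRep.of (MonoidHom.comp V.ρ e.toMonoidHom : Representation ℂ K V), ?_, rfl,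
    fun k ↦ rfl⟩
  rw [FDRep.simple_iff_char_is_norm_one] at hV ⊢
  rw [Nat.card_congr e.toEquiv, ← hV]
  exact Fintype.sum_equiv e.toEquiv _ _ fun x ↦
    congrArg (V.character (e x) * V.character ·) (map_inv e x)

theorem IsIrredCharacter.charDegree_mem_charDegrees {χ : G → ℂ}
    (hχ : IsIrredCharacter (⊤ : Subgroup G) χ) : charDegree χ ∈ charDegrees G := by
  obtain ⟨V, hV, rfl⟩ := hχ
  obtain ⟨W, hW, hWrank, -⟩ := exists_simple_comp_mulEquiv Subgroup.topEquiv.symm V hV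
  exact ⟨W, hW, by rw [hWrank, charDegree_extendByZero]⟩

theorem isIrredCharacter_character (V : FDRep ℂ G) (hV : Simple V) :
    IsIrredCharacter (⊤ : Subgroup G) V.character := by
  obtain ⟨W, hW, -, hWchar⟩ := exists_simple_comp_mulEquiv (Subgroup.topEquiv (G := G)) V hV
  exact ⟨W, hW, eq_extendByZero_iff.2
    ⟨fun x ↦ (hWchar x).symm, fun g hg ↦ absurd (Subgroup.mem_top g) hg⟩⟩

omit [Finite G] in
theorem charDegree_character (V : FDRep ℂ G) : charDegree V.character = Module.finrank ℂ V := by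
  rw [charDegree, V.char_one]
  simp

theorem charInner_extendByZero_ne_zero_iff {N : Subgroup G} (χ : G → ℂ) (θ : N → ℂ) :
    charInner N χ (extendByZero N θ) ≠ 0 ↔ ∑ᶠ x : N, χ x * θ x⁻¹ ≠ 0 := by
  have := Fintype.ofFinite G
  have := Fintype.ofFinite N
  rw [charInner_eq_sum, sum_eq_sum_subgroup (X := N), finsum_eq_sum_of_fintype,
    mul_ne_zero_iff_left (inv_ne_zero (natCard_subgroup_ne_zero N))]
  · simp only [← Subgroup.coe_inv, extendByZero_coe]
  · intro g hg
    rw [extendByZero_of_notMem _ (mt N.inv_mem_iff.1 hg), mul_zero]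

theorem isIrredCharacter_top_one : IsIrredCharacter (⊤ : Subgroup G) (1 : G → ℂ) :=
  isIrredCharacter_of_map_mul rfl (fun x hx ↦ absurd (Subgroup.mem_top x) hx) (by simp)

end CharDegrees

section DoublyTransitive

variable {K Ω : Type} [Group K] [MulAction K Ω]

theorem natCard_orbits_prod_eq_two [Nontrivial Ω] (h2 : MulAction.IsMultiplyPretransitive K Ω 2) :
    Nat.card (MulAction.orbitRel.Quotient K (Ω × Ω)) = 2 := by
  rw [MulAction.is_two_pretransitive_iff] at h2
  obtain ⟨a, b, hab⟩ := exists_pair_ne Ω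
  rw [Nat.card_eq_two_iff]
  refine ⟨Quotient.mk _ (a, a), Quotient.mk _ (a, b), fun h ↦ ?_, Set.eq_univ_of_forall ?_⟩
  · obtain ⟨k, hk⟩ := Quotient.exact h
    obtain ⟨hka, hkb⟩ := Prod.mk.inj hk
    exact hab (smul_left_cancel k (hka.trans hkb.symm))
  · rintro ⟨c, d⟩
    by_cases hcd : c = d
    · obtain ⟨c', hc'⟩ := exists_ne c
      obtain ⟨k, hk, -⟩ := h2 hab hc'.symm
      exact Or.inl (Quotient.sound ⟨k, by simp [hk, ← hcd]⟩)
    · obtain ⟨k, hka, hkb⟩ := h2 hab hcd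
      exact Or.inr (Quotient.sound ⟨k, Prod.ext hka hkb⟩)

theorem sum_natCard_fixedBy_sq [Fintype K] [Finite Ω] [Nontrivial Ω]
    (h2 : MulAction.IsMultiplyPretransitive K Ω 2) :
    ∑ g : K, Nat.card (MulAction.fixedBy Ω g) ^ 2 = 2 * Nat.card K := by
  classical
  have := Fintype.ofFinite Ω
  have hburnside := MulAction.sum_card_fixedBy_eq_card_orbits_mul_card_group K (Ω × Ω)
  simp only [← Nat.card_eq_fintype_card] at hburnside
  rw [show Nat.card (Quotient (MulAction.orbitRel K (Ω × Ω))) = 2 from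
    natCard_orbits_prod_eq_two h2] at hburnside
  rw [← hburnside]
  refine Finset.sum_congr rfl fun g _ ↦ ?_
  have hprod : MulAction.fixedBy (Ω × Ω) g = MulAction.fixedBy Ω g ×ˢ MulAction.fixedBy Ω g := by
    ext x
    exact Prod.ext_iff
  rw [sq, ← Nat.card_prod, hprod]
  exact Nat.card_congr (Equiv.Set.prod _ _).symm

theorem isCharacter_natCard_fixedBy [Finite Ω] :
    IsCharacter (⊤ : Subgroup K) fun g ↦ (Nat.card (MulAction.fixedBy Ω g) : ℂ) := by
  obtain ⟨ρ, hρ⟩ := exists_representation_character_eq_card_fixedBy K Ω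
  exact isCharacter_of_representation (MonoidHom.comp ρ (Subgroup.subtype ⊤) :
    Representation ℂ (⊤ : Subgroup K) (Ω → ℂ)) (fun g ↦ (hρ g).symm)
    fun g hg ↦ absurd (Subgroup.mem_top g) hg

theorem charInner_comm (X : Subgroup K) (χ ψ : K → ℂ) : charInner X χ ψ = charInner X ψ χ := by
  unfold charInner
  rw [← finsum_comp_equiv (Equiv.inv K)]
  simp only [Equiv.inv_apply, inv_inv, mul_comm]

variable [Finite K]

theorem length_le_of_charInner_list_sum_self {X : Subgroup K} {l : List (K → ℂ)}
    (hl : ∀ φ ∈ l, IsIrredCharacter X φ) {n : ℕ} (hn : charInner X l.sum l.sum = n) :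
    l.length ≤ n := by
  classical
  have hsum : (l.map fun φ ↦ l.count φ).sum = n := by
    rw [← Nat.cast_inj (R := ℂ), ← hn, charInner_list_sum, Nat.cast_list_sum, List.map_map]
    refine congrArg List.sum (List.map_congr_left fun φ hφ ↦ ?_)
    rw [charInner_comm, (hl φ hφ).charInner_list_sum_eq_count hl, Function.comp_apply]
  have hle := List.length_le_sum_of_one_le (l.map fun φ ↦ l.count φ) (by simp)
  rwa [List.length_map, hsum] at hle

theorem charInner_natCard_fixedBy_self [Finite Ω] [Nontrivial Ω]
    (h2 : MulAction.IsMultiplyPretransitive K Ω 2) :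
    charInner (⊤ : Subgroup K) (fun g ↦ (Nat.card (MulAction.fixedBy Ω g) : ℂ))
      (fun g ↦ (Nat.card (MulAction.fixedBy Ω g) : ℂ)) = (2 : ℕ) := by
  have := Fintype.ofFinite K
  have hcard : (Nat.card K : ℂ) ≠ 0 := Nat.cast_ne_zero.2 Nat.card_pos.ne'
  rw [charInner_eq_sum, Subgroup.card_top]
  simp only [MulAction.fixedBy_inv, ← sq]
  rw [inv_mul_eq_iff_eq_mul₀ hcard, mul_comm]
  exact_mod_cast sum_natCard_fixedBy_sq h2

theorem charInner_natCard_fixedBy_one_ne_zero [Finite Ω] [Nonempty Ω] :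
    charInner (⊤ : Subgroup K) (fun g ↦ (Nat.card (MulAction.fixedBy Ω g) : ℂ)) 1 ≠ 0 := by
  have := Fintype.ofFinite K
  rw [charInner_eq_sum, Subgroup.card_top]
  simp only [Pi.one_apply, mul_one]
  refine mul_ne_zero (inv_ne_zero (Nat.cast_ne_zero.2 Nat.card_pos.ne')) ?_
  rw [← Nat.cast_sum, Nat.cast_ne_zero]
  refine (Finset.sum_pos' (fun _ _ ↦ Nat.zero_le _) ⟨1, Finset.mem_univ _, ?_⟩).ne'
  rw [MulAction.fixedBy_one_eq_univ, Nat.card_univ]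
  exact Nat.card_pos

-- The permutation character is the sum of the trivial character and an irreducible one.
theorem mem_charDegrees_of_isMultiplyPretransitive {q : ℕ} (hq : 0 < q)
    (hΩ : Nat.card Ω = q + 1) (h2 : MulAction.IsMultiplyPretransitive K Ω 2) :
    q ∈ charDegrees K := by
  classical
  have : Finite Ω := Nat.finite_of_card_ne_zero (by lia)
  have : Nontrivial Ω := Finite.one_lt_card_iff_nontrivial.1 (by lia)
  obtain ⟨l, hl, hsum⟩ := (isCharacter_natCard_fixedBy (K := K) (Ω := Ω)).exists_eq_list_sum
  have hlength := length_le_of_charInner_list_sum_self hl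
    (hsum ▸ charInner_natCard_fixedBy_self h2)
  have hmem : (1 : K → ℂ) ∈ l := by
    have h := charInner_natCard_fixedBy_one_ne_zero (K := K) (Ω := Ω)
    rw [hsum, isIrredCharacter_top_one.charInner_list_sum_eq_count hl, Nat.cast_ne_zero] at h
    exact List.count_pos_iff.1 (Nat.pos_of_ne_zero h)
  have hperm := List.perm_cons_erase hmem
  rw [hperm.length_eq, List.length_cons] at hlength
  have hone : (q + 1 : ℂ) = 1 + (l.erase 1).sum 1 := by
    have h := congrFun hsum 1
    rw [hperm.sum_eq, List.sum_cons, MulAction.fixedBy_one_eq_univ, Nat.card_univ, hΩ] at h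
    exact_mod_cast h
  match hχ : l.erase 1 with
  | [] => simp [hχ, hq.ne'] at hone
  | [χ] =>
    have hirr := hl χ (List.mem_of_mem_erase (hχ ▸ List.mem_singleton_self χ))
    have hdeg : charDegree χ = q := by
      rw [hχ, List.sum_singleton, add_comm, add_right_inj,
        ← hirr.isCharacter.natCast_charDegree] at hone
      exact_mod_cast hone.symm
    exact hdeg ▸ hirr.charDegree_mem_charDegrees
  | χ :: ψ :: l' => simp [hχ] at hlength

end DoublyTransitive

open scoped Pointwise

/-! ### Subgroups of `SL₂` over a finite field -/

/-- The special linear group of degree two. -/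
abbrev SL2 (R : Type*) [CommRing R] : Type _ := Matrix.SpecialLinearGroup (Fin 2) R

theorem mem_conj_smul_iff {L : Type*} [Group L] {x g : L} {H : Subgroup L} :
    g ∈ MulAut.conj x • H ↔ x⁻¹ * g * x ∈ H := by
  rw [Subgroup.mem_pointwise_smul_iff_inv_smul_mem, ← map_inv, MulAut.smul_def,
    MulAut.conj_apply, inv_inv]

theorem conj_mem_conj_smul_iff {L : Type*} [Group L] {x g : L} {H : Subgroup L} :
    x * g * x⁻¹ ∈ MulAut.conj x • H ↔ g ∈ H := by
  rw [mem_conj_smul_iff]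
  group

theorem natCard_conj_smul {L : Type*} [Group L] (x : L) (H : Subgroup L) :
    Nat.card (MulAut.conj x • H : Subgroup L) = Nat.card H :=
  Nat.card_congr (Subgroup.equivSMul (MulAut.conj x) H).toEquiv.symm

theorem index_conj_smul {L : Type*} [Group L] (x : L) (H : Subgroup L) :
    (MulAut.conj x • H).index = H.index :=
  Subgroup.index_map_of_bijective (MulAction.bijective (MulAut.conj x)) H

theorem natCard_eq_natCard_inf_add {L : Type*} [Group L] [Finite L] (H K : Subgroup L) :
    Nat.card H = Nat.card (H ⊓ K : Subgroup L) + Nat.card ((H : Set L) \ K : Set L) :=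
  (Set.ncard_inter_add_ncard_sdiff_eq_ncard (H : Set L) K (Set.toFinite _)).symm

theorem exists_conj_mem_of_pow_prime_eq_one {L : Type*} [Group L] {K : Subgroup L} {p : ℕ}
    [hp : Fact p.Prime] (hK : ¬ p ∣ K.index) {t : L} (ht : t ^ p = 1) :
    ∃ g, g⁻¹ * t * g ∈ K := by
  have hpt : IsPGroup p (Subgroup.zpowers t) := by
    rintro ⟨_, n, rfl⟩
    refine ⟨1, Subtype.ext ?_⟩
    change (t ^ n) ^ p ^ 1 = 1
    rw [pow_one, ← zpow_natCast, zpow_comm, zpow_natCast, ht, one_zpow]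
  obtain ⟨c, hc⟩ := hpt.nonempty_fixed_point_of_prime_not_dvd_card (L ⧸ K) hK
  obtain ⟨g, rfl⟩ := QuotientGroup.mk_surjective c
  refine ⟨g, ?_⟩
  rw [mul_assoc]
  exact QuotientGroup.eq.1 (hc ⟨t, Subgroup.mem_zpowers t⟩).symm

namespace SL2

section CommRing

variable {R : Type*} [CommRing R]

theorem ext_entries {g h : SL2 R} (h₀₀ : g 0 0 = h 0 0) (h₀₁ : g 0 1 = h 0 1)
    (h₁₀ : g 1 0 = h 1 0) (h₁₁ : g 1 1 = h 1 1) : g = h := by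
  ext i j
  fin_cases i <;> fin_cases j <;> assumption

protected theorem mul_apply (g h : SL2 R) (i j : Fin 2) :
    (g * h) i j = g i 0 * h 0 j + g i 1 * h 1 j := by
  rw [Matrix.SpecialLinearGroup.coe_mul, Matrix.mul_apply, Fin.sum_univ_two]

theorem inv_apply_zero_zero (g : SL2 R) : g⁻¹ 0 0 = g 1 1 := by
  simp [Matrix.SpecialLinearGroup.SL2_inv_expl]

theorem inv_apply_zero_one (g : SL2 R) : g⁻¹ 0 1 = -g 0 1 := by
  simp [Matrix.SpecialLinearGroup.SL2_inv_expl]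

theorem inv_apply_one_zero (g : SL2 R) : g⁻¹ 1 0 = -g 1 0 := by
  simp [Matrix.SpecialLinearGroup.SL2_inv_expl]

theorem inv_apply_one_one (g : SL2 R) : g⁻¹ 1 1 = g 0 0 := by
  simp [Matrix.SpecialLinearGroup.SL2_inv_expl]

theorem det_entries (g : SL2 R) : g 0 0 * g 1 1 - g 0 1 * g 1 0 = 1 := by
  rw [← Matrix.det_fin_two, g.det_coe]

/-- The upper unitriangular matrix with off-diagonal entry `a`. -/
def upper (a : R) : SL2 R := ⟨!![1, a; 0, 1], by simp⟩

@[simp] theorem upper_apply_zero_zero (a : R) : upper a 0 0 = 1 := rfl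
@[simp] theorem upper_apply_zero_one (a : R) : upper a 0 1 = a := rfl
@[simp] theorem upper_apply_one_zero (a : R) : upper a 1 0 = 0 := rfl
@[simp] theorem upper_apply_one_one (a : R) : upper a 1 1 = 1 := rfl

theorem upper_add (a b : R) : upper (a + b) = upper a * upper b := by
  apply ext_entries <;> simp [SL2.mul_apply, -Matrix.SpecialLinearGroup.coe_mul, add_comm]

theorem upper_zero : upper (0 : R) = 1 := by
  apply ext_entries <;> simp

theorem upper_neg (a : R) : upper (-a) = (upper a)⁻¹ := by
  rw [eq_inv_iff_mul_eq_one, ← upper_add, neg_add_cancel, upper_zero]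

theorem upper_injective : Function.Injective (upper : R → SL2 R) :=
  fun _ _ h ↦ congrArg (fun g : SL2 R ↦ g 0 1) h

theorem upper_mul_apply_zero (a : R) (g : SL2 R) (j : Fin 2) :
    (upper a * g) 0 j = g 0 j + a * g 1 j := by
  simp [SL2.mul_apply, -Matrix.SpecialLinearGroup.coe_mul]

theorem upper_mul_apply_one (a : R) (g : SL2 R) (j : Fin 2) : (upper a * g) 1 j = g 1 j := by
  simp [SL2.mul_apply, -Matrix.SpecialLinearGroup.coe_mul]

theorem mul_upper_apply_one_zero (g : SL2 R) (a : R) : (g * upper a) 1 0 = g 1 0 := by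
  simp [SL2.mul_apply, -Matrix.SpecialLinearGroup.coe_mul]

theorem trace_mul_upper (g : SL2 R) (a : R) :
    (g * upper a) 0 0 + (g * upper a) 1 1 = g 0 0 + g 1 1 + g 1 0 * a := by
  simp only [SL2.mul_apply, upper_apply_zero_zero, upper_apply_zero_one, upper_apply_one_zero,
    upper_apply_one_one]
  ring

theorem conj_upper_apply_one_zero (g : SL2 R) (a : R) :
    (g * upper a * g⁻¹) 1 0 = -(g 1 0 ^ 2 * a) := by
  simp only [SL2.mul_apply, inv_apply_zero_zero, inv_apply_one_zero, upper_apply_zero_zero,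
    upper_apply_zero_one, upper_apply_one_zero, upper_apply_one_one]
  ring

theorem trace_conj_upper (g : SL2 R) (a : R) :
    (g * upper a * g⁻¹) 0 0 + (g * upper a * g⁻¹) 1 1 = 2 := by
  simp only [SL2.mul_apply, inv_apply_zero_zero, inv_apply_zero_one, inv_apply_one_zero,
    inv_apply_one_one, upper_apply_zero_zero, upper_apply_zero_one, upper_apply_one_zero,
    upper_apply_one_one]
  linear_combination 2 * det_entries g

variable (R) in
/-- The Borel subgroup of upper triangular matrices. -/
def borel : Subgroup (SL2 R) where
  carrier := {g | g 1 0 = 0}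
  one_mem' := by simp
  mul_mem' {g h} (hg : g 1 0 = 0) (hh : h 1 0 = 0) := by
    rw [Set.mem_ofPred_eq, SL2.mul_apply, hg, hh, zero_mul, mul_zero, add_zero]
  inv_mem' {g} (hg : g 1 0 = 0) := by
    rw [Set.mem_ofPred_eq, inv_apply_one_zero, hg, neg_zero]

theorem mem_borel {g : SL2 R} : g ∈ borel R ↔ g 1 0 = 0 := Iff.rfl

theorem mul_diag_eq_one_of_mem_borel {g : SL2 R} (hg : g ∈ borel R) : g 0 0 * g 1 1 = 1 := by
  simpa [mem_borel.1 hg] using det_entries g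

variable (R) in
/-- The unipotent radical of the Borel subgroup, a copy of the additive group of `R`. -/
def unipotent : Subgroup (SL2 R) where
  carrier := Set.range upper
  one_mem' := ⟨0, upper_zero⟩
  mul_mem' := by
    rintro _ _ ⟨a, rfl⟩ ⟨b, rfl⟩
    exact ⟨a + b, upper_add a b⟩
  inv_mem' := by
    rintro _ ⟨a, rfl⟩
    exact ⟨-a, upper_neg a⟩

theorem upper_mem_unipotent (a : R) : upper a ∈ unipotent R := ⟨a, rfl⟩

theorem upper_mem_borel (a : R) : upper a ∈ borel R := rfl

theorem unipotent_le_borel : unipotent R ≤ borel R := by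
  rintro _ ⟨a, rfl⟩
  exact upper_mem_borel a

variable (R) in
/-- The character of the Borel subgroup given by the first diagonal entry; it identifies the
quotient by the unipotent radical with the torus. -/
def torusChar : borel R →* Rˣ where
  toFun g := ⟨g.1 0 0, g.1 1 1, mul_diag_eq_one_of_mem_borel g.2, by
    rw [mul_comm, mul_diag_eq_one_of_mem_borel g.2]⟩
  map_one' := by ext; simp
  map_mul' g h := by
    ext
    simp only [Units.val_mul, Subgroup.coe_mul, SL2.mul_apply, mem_borel.1 h.2, mul_zero, add_zero]

theorem coe_torusChar (g : borel R) : (torusChar R g : R) = g.1 0 0 := rfl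

theorem ker_torusChar : (torusChar R).ker = (unipotent R).subgroupOf (borel R) := by
  ext g
  rw [MonoidHom.mem_ker, Subgroup.mem_subgroupOf]
  constructor
  · intro h
    have h₀ : g.1 0 0 = 1 := by rw [← coe_torusChar, h, Units.val_one]
    have h₁ : g.1 1 1 = 1 := by simpa [h₀] using mul_diag_eq_one_of_mem_borel g.2
    exact ⟨g.1 0 1, ext_entries h₀.symm rfl (mem_borel.1 g.2).symm h₁.symm⟩
  · rintro ⟨a, ha⟩
    ext
    rw [coe_torusChar, ← ha, upper_apply_zero_zero, Units.val_one]

theorem conj_upper_of_mem_borel {g : SL2 R} (hg : g ∈ borel R) (a : R) :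
    g * upper a * g⁻¹ = upper (g 0 0 ^ 2 * a) := by
  have hd := mul_diag_eq_one_of_mem_borel hg
  have hg := mem_borel.1 hg
  apply ext_entries <;>
    simp only [SL2.mul_apply, inv_apply_zero_zero, inv_apply_zero_one, inv_apply_one_zero,
      inv_apply_one_one, upper_apply_zero_zero, upper_apply_zero_one, upper_apply_one_zero,
      upper_apply_one_one, hg]
  · linear_combination hd
  · ring
  · ring
  · linear_combination hd

/-- The subgroup of `R` corresponding to the unipotent upper triangular matrices in `H`. -/
def unipotentPart (H : Subgroup (SL2 R)) : AddSubgroup R where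
  carrier := {a | upper a ∈ H}
  zero_mem' := by rw [Set.mem_ofPred_eq, upper_zero]; exact H.one_mem
  add_mem' {a b} ha hb := by rw [Set.mem_ofPred_eq, upper_add]; exact H.mul_mem ha hb
  neg_mem' {a} ha := by rw [Set.mem_ofPred_eq, upper_neg]; exact H.inv_mem ha

theorem mem_unipotentPart {H : Subgroup (SL2 R)} {a : R} : a ∈ unipotentPart H ↔ upper a ∈ H :=
  Iff.rfl

/-- The image in the torus of the upper triangular matrices in `H`. -/
def torusPart (H : Subgroup (SL2 R)) : Subgroup Rˣ := (H.subgroupOf (borel R)).map (torusChar R)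

theorem mem_torusPart {H : Subgroup (SL2 R)} {z : Rˣ} :
    z ∈ torusPart H ↔ ∃ g ∈ H, g 1 0 = 0 ∧ g 0 0 = (z : R) := by
  constructor
  · rintro ⟨g, hg, rfl⟩
    exact ⟨g.1, hg, g.2, rfl⟩
  · rintro ⟨g, hg, hgB, h⟩
    exact ⟨⟨g, hgB⟩, hg, Units.ext h⟩

theorem sq_mul_mem_unipotentPart {H : Subgroup (SL2 R)} {z : Rˣ} (hz : z ∈ torusPart H) {a : R}
    (ha : a ∈ unipotentPart H) : (z : R) ^ 2 * a ∈ unipotentPart H := by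
  obtain ⟨g, hg, hgB, hgz⟩ := mem_torusPart.1 hz
  rw [mem_unipotentPart, ← hgz, ← conj_upper_of_mem_borel hgB]
  exact H.mul_mem (H.mul_mem hg ha) (H.inv_mem hg)

/-- The isomorphism `a ↦ upper a` from the unipotent part of `H` onto `H ⊓ unipotent R`. -/
noncomputable def unipotentPartEquiv (H : Subgroup (SL2 R)) :
    Multiplicative (unipotentPart H) ≃* (H ⊓ unipotent R : Subgroup (SL2 R)) :=
  MulEquiv.ofBijective
    ({  toFun a := ⟨upper (a.toAdd : R), a.toAdd.2, upper_mem_unipotent _⟩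
        map_one' := Subtype.ext upper_zero
        map_mul' a b := Subtype.ext (upper_add (a.toAdd : R) (b.toAdd : R)) } :
      Multiplicative (unipotentPart H) →* (H ⊓ unipotent R : Subgroup (SL2 R))) <| by
    constructor
    · intro a b h
      exact Multiplicative.toAdd.injective (Subtype.ext (upper_injective (congrArg Subtype.val h)))
    · rintro ⟨_, hg, a, rfl⟩
      exact ⟨.ofAdd ⟨a, hg⟩, rfl⟩

theorem natCard_unipotentPart (H : Subgroup (SL2 R)) :
    Nat.card (unipotentPart H) = Nat.card (H ⊓ unipotent R : Subgroup (SL2 R)) :=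
  Nat.card_congr (unipotentPartEquiv H).toEquiv

theorem natCard_inf_borel (H : Subgroup (SL2 R)) :
    Nat.card (H ⊓ borel R : Subgroup (SL2 R)) =
      Nat.card (unipotentPart H) * Nat.card (torusPart H) := by
  have hUB : H ⊓ unipotent R = unipotent R ⊓ (H ⊓ borel R) := by
    rw [inf_left_comm, inf_of_le_left unipotent_le_borel]
  have hZ : (H ⊓ unipotent R).relIndex (H ⊓ borel R) = Nat.card (torusPart H) := by
    rw [hUB, Subgroup.inf_relIndex_right, ← Subgroup.relIndex_subgroupOf inf_le_right,
      Subgroup.inf_subgroupOf_right, ← ker_torusChar, Subgroup.relIndex_ker]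
    rfl
  rw [natCard_unipotentPart, ← Subgroup.relIndex_bot_left, ← Subgroup.relIndex_bot_left, ← hZ,
    Subgroup.relIndex_mul_relIndex _ _ _ bot_le (inf_le_inf_left H unipotent_le_borel)]

/-- The lower unitriangular matrix with off-diagonal entry `a`. -/
def lower (a : R) : SL2 R := ⟨!![1, 0; a, 1], by simp⟩

@[simp] theorem lower_apply_zero_zero (a : R) : lower a 0 0 = 1 := rfl
@[simp] theorem lower_apply_zero_one (a : R) : lower a 0 1 = 0 := rfl
@[simp] theorem lower_apply_one_zero (a : R) : lower a 1 0 = a := rfl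
@[simp] theorem lower_apply_one_one (a : R) : lower a 1 1 = 1 := rfl

/-- The diagonal matrix with entries `z` and `z⁻¹`. -/
def diag (z : Rˣ) : SL2 R := ⟨!![(z : R), 0; 0, ((z⁻¹ : Rˣ) : R)], by simp⟩

@[simp] theorem diag_apply_zero_zero (z : Rˣ) : diag z 0 0 = z := rfl
@[simp] theorem diag_apply_zero_one (z : Rˣ) : diag z 0 1 = 0 := rfl
@[simp] theorem diag_apply_one_zero (z : Rˣ) : diag z 1 0 = 0 := rfl
@[simp] theorem diag_apply_one_one (z : Rˣ) : diag z 1 1 = ((z⁻¹ : Rˣ) : R) := rfl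

theorem unipotentPart_eq_top {H : Subgroup (SL2 R)} (hH : borel R ≤ H) : unipotentPart H = ⊤ :=
  (AddSubgroup.eq_top_iff' _).2 fun a ↦ hH (upper_mem_borel a)

theorem torusPart_eq_top {H : Subgroup (SL2 R)} (hH : borel R ≤ H) : torusPart H = ⊤ :=
  (Subgroup.eq_top_iff' _).2 fun z ↦ mem_torusPart.2 ⟨diag z, hH rfl, rfl, rfl⟩

end CommRing

section Field

variable {F : Type*} [Field F]

theorem not_top_le_borel : ¬ (⊤ : Subgroup (SL2 F)) ≤ borel F :=
  fun h ↦ one_ne_zero (α := F) (mem_borel.1 (h (Subgroup.mem_top (lower 1))))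

theorem inv_mul_mem_borel_iff {g h : SL2 F} (hg : g 1 0 ≠ 0) (hh : h 1 0 ≠ 0) :
    g⁻¹ * h ∈ borel F ↔ g 0 0 / g 1 0 = h 0 0 / h 1 0 := by
  rw [mem_borel, SL2.mul_apply, inv_apply_one_zero, inv_apply_one_one, div_eq_div_iff hg hh,
    ← sub_eq_zero (a := g 0 0 * h 1 0)]
  ring_nf

theorem mul_apply_one_zero_ne_zero {g b : SL2 F} (hg : g 1 0 ≠ 0) (hb : b ∈ borel F) :
    (g * b) 1 0 ≠ 0 :=
  fun h ↦ hg (((borel F).mul_mem_cancel_right hb).1 h)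

theorem inv_mul_mem_borel_of_conj_upper_eq {g h : SL2 F} {a b : F} (ha : a ≠ 0)
    (hgh : h * upper a * h⁻¹ = g * upper b * g⁻¹) : g⁻¹ * h ∈ borel F := by
  have hconj : (g⁻¹ * h) * upper a * (g⁻¹ * h)⁻¹ = upper b := by
    rw [mul_inv_rev, inv_inv, ← mul_assoc, mul_assoc g⁻¹, mul_assoc g⁻¹, hgh]
    group
  have hentry := conj_upper_apply_one_zero (g⁻¹ * h) a
  rw [hconj, upper_apply_one_zero, zero_eq_neg, mul_eq_zero, or_iff_left ha] at hentry
  exact eq_zero_of_pow_eq_zero hentry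

variable (F) in
theorem natCard_borel : Nat.card (borel F) = Nat.card F * (Nat.card F - 1) := by
  have h := natCard_inf_borel (⊤ : Subgroup (SL2 F))
  rwa [top_inf_eq, unipotentPart_eq_top le_top, torusPart_eq_top le_top, AddSubgroup.card_top,
    Subgroup.card_top, Nat.card_units] at h

theorem natCard_torusPart_dvd (H : Subgroup (SL2 F)) :
    Nat.card (torusPart H) ∣ Nat.card F - 1 := by
  rw [← Nat.card_units]
  exact Subgroup.card_subgroup_dvd_card _

/-- The nontrivial conjugates of the elements of `H ⊓ unipotent F` by elements of `H` outside the
Borel subgroup. -/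
def outerTransvections (H : Subgroup (SL2 F)) : Set (SL2 F) :=
  {x | ∃ h ∈ H, h 1 0 ≠ 0 ∧ ∃ a ∈ unipotentPart H, a ≠ 0 ∧ h * upper a * h⁻¹ = x}

theorem trace_of_mem_outerTransvections {H : Subgroup (SL2 F)} {x : SL2 F}
    (hx : x ∈ outerTransvections H) : x 0 0 + x 1 1 = 2 := by
  obtain ⟨h, -, -, a, -, -, rfl⟩ := hx
  exact trace_conj_upper h a

/-- Multiplication of outer transvections by upper unitriangular matrices. -/
def outerTransvectionsMul (H : Subgroup (SL2 F)) (x : outerTransvections H × unipotentPart H) :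
    ((H : Set (SL2 F)) \ borel F : Set (SL2 F)) :=
  ⟨x.1 * upper (x.2 : F), by
    obtain ⟨⟨_, h, hh, hhB, a, ha, ha₀, rfl⟩, b⟩ := x
    refine ⟨H.mul_mem (H.mul_mem (H.mul_mem hh ha) (H.inv_mem hh)) b.2, ?_⟩
    refine mul_apply_one_zero_ne_zero ?_ (upper_mem_borel _)
    rw [conj_upper_apply_one_zero]
    exact neg_ne_zero.2 (mul_ne_zero (pow_ne_zero 2 hhB) ha₀)⟩

theorem outerTransvectionsMul_injective (H : Subgroup (SL2 F)) :
    Function.Injective (outerTransvectionsMul H) := by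
  intro x y hxy
  have hB : (y.1 : SL2 F) 1 0 ≠ 0 := by
    have h := (outerTransvectionsMul H y).2.2
    rwa [SetLike.mem_coe, mem_borel, outerTransvectionsMul, mul_upper_apply_one_zero] at h
  have hxy : (x.1 : SL2 F) * upper (x.2 : F) = y.1 * upper (y.2 : F) := congrArg Subtype.val hxy
  have h₁₀ := congrArg (fun g : SL2 F ↦ g 1 0) hxy
  have htrace := congrArg (fun g : SL2 F ↦ g 0 0 + g 1 1) hxy
  simp only [mul_upper_apply_one_zero] at h₁₀
  simp only [trace_mul_upper, trace_of_mem_outerTransvections (Subtype.mem _), h₁₀,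
    add_right_inj, mul_right_inj' hB] at htrace
  rw [htrace, mul_left_inj] at hxy
  exact Prod.ext (Subtype.ext hxy) (Subtype.ext htrace)

end Field

section Finite

variable {F : Type*} [Field F] [Finite F] {H : Subgroup (SL2 F)}

-- `H` acts on the points `g 0 0 / g 1 0` of the affine line with `H ⊓ borel F` as the stabiliser
-- of `∞`, and `upper a` is the translation by `a`.
theorem natCard_eq_of_div_sub_div_mem (hH : ¬ H ≤ borel F)
    (hpt : ∀ g ∈ H, ∀ h ∈ H, g 1 0 ≠ 0 → h 1 0 ≠ 0 →
      g 0 0 / g 1 0 - h 0 0 / h 1 0 ∈ unipotentPart H) :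
    Nat.card H =
      Nat.card (H ⊓ borel F : Subgroup (SL2 F)) * (Nat.card (unipotentPart H) + 1) := by
  obtain ⟨h, hh, hhB : h 1 0 ≠ 0⟩ := SetLike.not_le_iff_exists.1 hH
  have hne (a : F) : (upper a * h) 1 0 ≠ 0 := by rwa [upper_mul_apply_one]
  have hdiv (a : F) : (upper a * h) 0 0 / (upper a * h) 1 0 = h 0 0 / h 1 0 + a := by
    rw [upper_mul_apply_zero, upper_mul_apply_one, add_div, mul_div_cancel_right₀ a hhB]
  let e (x : unipotentPart H × (H ⊓ borel F : Subgroup (SL2 F))) :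
      ((H : Set (SL2 F)) \ borel F : Set (SL2 F)) :=
    ⟨upper (x.1 : F) * h * x.2, H.mul_mem (H.mul_mem x.1.2 hh) x.2.2.1,
      mul_apply_one_zero_ne_zero (hne x.1) x.2.2.2⟩
  have hinj : Function.Injective e := by
    rintro ⟨a, b⟩ ⟨a', b'⟩ hab
    have hab : upper (a : F) * h * b = upper (a' : F) * h * b' :=
      congrArg Subtype.val hab
    have hB : (upper (a : F) * h)⁻¹ * (upper (a' : F) * h) ∈ borel F := by
      rw [← (borel F).mul_mem_cancel_right b'.2.2, mul_assoc, ← hab, inv_mul_cancel_left]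
      exact b.2.2
    rw [inv_mul_mem_borel_iff (hne a) (hne a'), hdiv, hdiv, add_right_inj] at hB
    rw [hB] at hab
    exact Prod.ext (Subtype.ext hB) (Subtype.ext (mul_left_cancel hab))
  have hsurj : Function.Surjective e := by
    rintro ⟨g, hg, hgB⟩
    let a : unipotentPart H := ⟨_, hpt g hg h hh hgB hhB⟩
    refine ⟨⟨a, (upper (a : F) * h)⁻¹ * g, H.mul_mem (H.inv_mem (H.mul_mem a.2 hh)) hg, ?_⟩, ?_⟩
    · exact (inv_mul_mem_borel_iff (hne a) hgB).2 ((hdiv a).trans (add_sub_cancel _ _))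
    · exact Subtype.ext (mul_inv_cancel_left _ _)
  have hcard := Nat.card_congr (Equiv.ofBijective e ⟨hinj, hsurj⟩)
  rw [natCard_eq_natCard_inf_add H (borel F), ← hcard, Nat.card_prod]
  ring

theorem natCard_eq_of_borel_le (hB : borel F ≤ H) (hH : ¬ H ≤ borel F) :
    Nat.card H = Nat.card (borel F) * (Nat.card F + 1) := by
  have h := natCard_eq_of_div_sub_div_mem hH fun g _ h _ _ _ ↦ hB (upper_mem_borel _)
  rwa [inf_of_le_right hB, unipotentPart_eq_top hB, AddSubgroup.card_top] at h

variable (F) in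
theorem natCard_eq_natCard_borel_mul :
    Nat.card (SL2 F) = Nat.card (borel F) * (Nat.card F + 1) := by
  rw [← Subgroup.card_top, natCard_eq_of_borel_le le_top not_top_le_borel]

variable (F) in
theorem natCard_SL2 : Nat.card (SL2 F) = Nat.card F * (Nat.card F ^ 2 - 1) := by
  rw [natCard_eq_natCard_borel_mul, natCard_borel, mul_assoc, mul_comm (_ - 1), ← Nat.sq_sub_sq,
    one_pow]

variable (F) in
theorem index_borel : (borel F).index = Nat.card F + 1 :=
  Nat.eq_of_mul_eq_mul_left Nat.card_pos
    ((Subgroup.card_mul_index _).trans (natCard_eq_natCard_borel_mul F))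

theorem eq_top_of_borel_le (hB : borel F ≤ H) (hH : ¬ H ≤ borel F) : H = ⊤ :=
  Subgroup.eq_top_of_card_eq _ <|
    (natCard_eq_of_borel_le hB hH).trans (natCard_eq_natCard_borel_mul F).symm

theorem card_diff_borel_mul_le (H : Subgroup (SL2 F)) :
    Nat.card ((H : Set (SL2 F)) \ borel F : Set (SL2 F)) * (Nat.card (unipotentPart H) - 1) ≤
      Nat.card (outerTransvections H) * Nat.card (H ⊓ borel F : Subgroup (SL2 F)) := by
  have hA : Nat.card {a : unipotentPart H // a ≠ 0} = Nat.card (unipotentPart H) - 1 := by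
    have := Fintype.ofFinite (unipotentPart H)
    classical
    rw [Nat.card_eq_fintype_card, Nat.card_eq_fintype_card, Fintype.card_subtype_compl,
      Fintype.card_subtype_eq]
  choose h hh _ a _ _ hx using fun x : outerTransvections H ↦ x.2
  rw [← hA, ← Nat.card_prod, ← Nat.card_prod]
  let x (y : ((H : Set (SL2 F)) \ borel F : Set (SL2 F)) × {a : unipotentPart H // a ≠ 0}) :
      outerTransvections H :=
    ⟨_, y.1, y.1.2.1, y.1.2.2, y.2.1, y.2.1.2, fun h ↦ y.2.2 (Subtype.ext h), rfl⟩
  refine Nat.card_le_card_of_injective (fun y ↦ ⟨x y, (h (x y))⁻¹ * y.1,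
    H.mul_mem (H.inv_mem (hh _)) y.1.2.1, inv_mul_mem_borel_of_conj_upper_eq
      (fun h ↦ y.2.2 (Subtype.ext h)) (hx (x y)).symm⟩) fun y y' hyy ↦ ?_
  obtain ⟨hxx, hyy⟩ := Prod.ext_iff.1 hyy
  have hy : (y.1 : SL2 F) = y'.1 := by
    have := congrArg Subtype.val hyy
    dsimp only at this hxx
    rwa [hxx, mul_right_inj] at this
  have hconj : (y.1 : SL2 F) * upper (y.2.1 : F) * (y.1 : SL2 F)⁻¹ =
    y'.1 * upper (y'.2.1 : F) * (y'.1 : SL2 F)⁻¹ := congrArg Subtype.val hxx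
  rw [hy, mul_left_inj, mul_right_inj] at hconj
  exact Prod.ext (Subtype.ext hy) (Subtype.ext (Subtype.ext (upper_injective hconj)))

section CharTwo

variable [CharP F 2]

theorem natCard_torusPart_lt (hA : 1 < Nat.card (unipotentPart H)) :
    Nat.card (torusPart H) < Nat.card (unipotentPart H) := by
  have := Finite.one_lt_card_iff_nontrivial.1 hA
  obtain ⟨a, ha⟩ := exists_ne (0 : unipotentPart H)
  have ha₀ : (a : F) ≠ 0 := fun h ↦ ha (Subtype.ext h)
  let e (z : torusPart H) : unipotentPart H := ⟨_, sq_mul_mem_unipotentPart z.2 a.2⟩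
  have he : Function.Injective e := fun z w hzw ↦ Subtype.ext (Units.ext
    (CharTwo.sq_inj.1 (mul_right_cancel₀ ha₀ (congrArg Subtype.val hzw))))
  by_contra! hle
  obtain ⟨z, hz⟩ := (he.bijective_of_nat_card_le hle).2 0
  exact mul_ne_zero (pow_ne_zero 2 z.1.ne_zero) ha₀ (congrArg Subtype.val hz)

-- Both counts of outer transvections are sharp, since `torusPart H` is as large as possible.
theorem natCard_torusPart_eq_and_surjective (hH : ¬ H ≤ borel F)
    (hA : 1 < Nat.card (unipotentPart H)) :
    Nat.card (torusPart H) = Nat.card (unipotentPart H) - 1 ∧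
      Function.Surjective (outerTransvectionsMul H) := by
  obtain ⟨h, hh, hhB⟩ := SetLike.not_le_iff_exists.1 hH
  have hpos : 0 < Nat.card ((H : Set (SL2 F)) \ borel F : Set (SL2 F)) :=
    Nat.card_pos_iff.2 ⟨⟨⟨h, hh, hhB⟩⟩, inferInstance⟩
  have hle := card_diff_borel_mul_le H
  have hle' := Nat.card_le_card_of_injective _ (outerTransvectionsMul_injective H)
  have hlt := natCard_torusPart_lt hA
  rw [natCard_inf_borel] at hle
  rw [Nat.card_prod] at hle'
  have hchain := Nat.mul_le_mul_right (Nat.card (torusPart H)) hle'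
  have hZ : Nat.card (torusPart H) = Nat.card (unipotentPart H) - 1 :=
    le_antisymm (Nat.le_sub_one_of_lt hlt)
      (Nat.le_of_mul_le_mul_left (by linarith) hpos)
  refine ⟨hZ, ((outerTransvectionsMul_injective H).bijective_of_nat_card_le ?_).2⟩
  rw [← hZ] at hle
  rw [Nat.card_prod]
  exact Nat.le_of_mul_le_mul_right (by linarith) (Nat.card_pos (α := torusPart H))

theorem trace_div_mem_unipotentPart (hA : 1 < Nat.card (unipotentPart H)) {g : SL2 F}
    (hg : g ∈ H) (hgB : g 1 0 ≠ 0) : (g 0 0 + g 1 1) / g 1 0 ∈ unipotentPart H := by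
  obtain ⟨⟨x, b⟩, hx⟩ :=
    (natCard_torusPart_eq_and_surjective (fun h ↦ hgB (h hg)) hA).2 ⟨g, hg, hgB⟩
  obtain rfl : x.1 * upper b.1 = g := congrArg Subtype.val hx
  rw [mul_upper_apply_one_zero] at hgB ⊢
  rw [trace_mul_upper, trace_of_mem_outerTransvections x.2, CharTwo.two_eq_zero, zero_add,
    mul_div_cancel_left₀ _ hgB]
  exact b.2

theorem mem_unipotentPart_of_sq_add_one_mul_mem {z : Fˣ} (hz : z ∈ torusPart H) (hz₁ : z ≠ 1)
    {c : F} (hc : ((z : F) ^ 2 + 1) * c ∈ unipotentPart H) : c ∈ unipotentPart H := by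
  have hne : (z : F) ^ 2 + 1 ≠ 0 := by
    rw [← one_pow 2, ← CharTwo.add_sq]
    refine pow_ne_zero 2 fun h ↦ hz₁ (Units.ext ?_)
    rw [Units.val_one, CharTwo.add_eq_zero.1 h]
  let e (a : unipotentPart H) : unipotentPart H :=
    ⟨((z : F) ^ 2 + 1) * a, by
      rw [add_one_mul]
      exact add_mem (sq_mul_mem_unipotentPart hz a.2) a.2⟩
  have he : Function.Injective e := fun a b hab ↦
    Subtype.ext (mul_left_cancel₀ hne (congrArg Subtype.val hab))
  obtain ⟨a, ha⟩ := Finite.surjective_of_injective he ⟨_, hc⟩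
  rw [← mul_left_cancel₀ hne (congrArg Subtype.val ha)]
  exact a.2

theorem torusPart_eq_bot_of_index_eq_two (h : (unipotentPart H).index = 2) :
    torusPart H = ⊥ := by
  by_contra hne
  obtain ⟨z, hz⟩ := Subgroup.ne_bot_iff_exists_ne_one.1 hne
  have hA : unipotentPart H ≠ ⊤ := fun h' ↦ by rw [h', AddSubgroup.index_top] at h; omega
  obtain ⟨x, -, hx⟩ := SetLike.exists_of_lt hA.lt_top
  refine hx (mem_unipotentPart_of_sq_add_one_mul_mem z.2 (fun h ↦ hz (Subtype.ext h)) ?_)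
  rw [add_one_mul, AddSubgroup.add_mem_iff_of_index_two h, iff_false_right hx]
  intro hzx
  have hx' := sq_mul_mem_unipotentPart (inv_mem z.2) hzx
  rw [← mul_assoc, ← mul_pow, ← Units.val_mul, inv_mul_cancel, Units.val_one, one_pow,
    one_mul] at hx'
  exact hx hx'

theorem sq_add_one_mul_div_add_mem_unipotentPart (hA : 1 < Nat.card (unipotentPart H))
    {d g : SL2 F} (hd : d ∈ H) (hdB : d ∈ borel F) (hg : g ∈ H) (hgB : g 1 0 ≠ 0) :
    (d 0 0 ^ 2 + 1) * (g 0 0 / g 1 0) + d 0 0 * d 0 1 ∈ unipotentPart H := by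
  have hdet := mul_diag_eq_one_of_mem_borel hdB
  have hd₀ : d 0 0 ≠ 0 := left_ne_zero_of_mul_eq_one hdet
  have hdg : (d * g) 1 0 = d 1 1 * g 1 0 := by
    rw [SL2.mul_apply, mem_borel.1 hdB, zero_mul, zero_add]
  have htrace := trace_div_mem_unipotentPart hA (H.mul_mem hd hg)
    (hdg ▸ mul_ne_zero (right_ne_zero_of_mul_eq_one hdet) hgB)
  convert add_mem htrace (trace_div_mem_unipotentPart hA hg hgB) using 1
  rw [hdg, SL2.mul_apply, SL2.mul_apply, mem_borel.1 hdB, eq_inv_of_mul_eq_one_right hdet]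
  field_simp
  linear_combination -g 1 1 * CharTwo.two_eq_zero (R := F)

theorem div_sub_div_mem_unipotentPart (hA : 2 < Nat.card (unipotentPart H)) {g h : SL2 F}
    (hg : g ∈ H) (hh : h ∈ H) (hgB : g 1 0 ≠ 0) (hhB : h 1 0 ≠ 0) :
    g 0 0 / g 1 0 - h 0 0 / h 1 0 ∈ unipotentPart H := by
  have hA₁ : 1 < Nat.card (unipotentPart H) := by omega
  have hZ := (natCard_torusPart_eq_and_surjective (fun h ↦ hgB (h hg)) hA₁).1
  have : Nontrivial (torusPart H) := Finite.one_lt_card_iff_nontrivial.1 (by omega)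
  obtain ⟨z, hz⟩ := exists_ne (1 : torusPart H)
  obtain ⟨d, hd, hdB, hdz⟩ := mem_torusPart.1 z.2
  refine mem_unipotentPart_of_sq_add_one_mul_mem z.2 (fun h ↦ hz (Subtype.ext h)) ?_
  rw [← hdz, mul_sub, ← add_sub_add_right_eq_sub _ _ (d 0 0 * d 0 1)]
  exact sub_mem (sq_add_one_mul_div_add_mem_unipotentPart hA₁ hd hdB hg hgB)
    (sq_add_one_mul_div_add_mem_unipotentPart hA₁ hd hdB hh hhB)

/-- The structure of a proper subgroup of `SL₂(16)` not contained in a Borel subgroup but with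
Sylow `2`-subgroups of index `4`; such subgroups are isomorphic to `SL₂(4)`. -/
structure IsSubfieldType (H : Subgroup (SL2 F)) : Prop where
  natCard_field : Nat.card F = 16
  natCard_unipotentPart : Nat.card (unipotentPart H) = 4
  natCard_inf_borel : Nat.card (H ⊓ borel F : Subgroup (SL2 F)) = 12
  natCard : Nat.card H = 60

theorem le_borel_or_isSubfieldType (hF : 16 ≤ Nat.card F) (hH : H ≠ ⊤)
    (hdvd : Nat.card F ∣ 4 * Nat.card (unipotentPart H)) : H ≤ borel F ∨ IsSubfieldType H := by
  rw [or_iff_not_imp_left]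
  intro hHB
  obtain ⟨c, hc⟩ := AddSubgroup.card_addSubgroup_dvd_card (unipotentPart H)
  have hA₀ : 0 < Nat.card (unipotentPart H) := Nat.card_pos
  have hc₄ : c ∣ 4 := by
    rw [hc, mul_comm 4] at hdvd
    exact Nat.dvd_of_mul_dvd_mul_left hA₀ hdvd
  have hA : 4 ≤ Nat.card (unipotentPart H) := by
    nlinarith [Nat.le_of_dvd (by norm_num) hc₄]
  have hZ := (natCard_torusPart_eq_and_surjective hHB (by omega)).1
  have hcard := natCard_eq_of_div_sub_div_mem hHB fun g hg h hh hgB hhB ↦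
    div_sub_div_mem_unipotentPart (by omega) hg hh hgB hhB
  have hZdvd := natCard_torusPart_dvd H
  rw [natCard_inf_borel, hZ] at hcard
  have hc₁ : c ≠ 1 := by
    rintro rfl
    refine hH (Subgroup.eq_top_of_card_eq _ ?_)
    rw [hcard, natCard_eq_natCard_borel_mul, natCard_borel, hc, mul_one]
  obtain ⟨hA₄, rfl⟩ : Nat.card (unipotentPart H) = 4 ∧ c = 4 := by
    have hsub : Nat.card (unipotentPart H) - 1 ∣ c - 1 := by
      rw [hZ] at hZdvd
      refine (Nat.dvd_add_right (dvd_mul_right _ c)).1 (hZdvd.trans (dvd_of_eq ?_))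
      have := Nat.sub_add_cancel hA₀
      have := Nat.pos_of_dvd_of_pos hc₄ (by norm_num)
      rw [hc, Nat.sub_mul, one_mul, ← Nat.add_sub_assoc this, Nat.sub_add_cancel]
      exact Nat.le_mul_of_pos_left _ hA₀
    have := Nat.le_of_dvd (by norm_num) hc₄
    interval_cases c
    · omega
    · exact absurd rfl hc₁
    · have := Nat.le_of_dvd one_pos hsub
      omega
    · omega
    · have := Nat.le_of_dvd (by norm_num) hsub
      omega
  exact ⟨by omega, hA₄, by rw [natCard_inf_borel, hZ, hA₄], by rw [hcard, hA₄]⟩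

omit [CharP F 2] in
theorem IsSubfieldType.exists_transvection {x t : SL2 F}
    (hH : IsSubfieldType (MulAut.conj x • H)) (ht : t ∈ H) (ht₃ : t ^ 3 = 1) :
    ∃ y a, a ≠ 0 ∧ y⁻¹ * t * y ∈ borel F ∧ y * upper a * y⁻¹ ∈ H := by
  set K := MulAut.conj x • H
  have hindex : ((borel F).subgroupOf K).index = 5 := by
    have h := Subgroup.relIndex_mul_relIndex ⊥ (K ⊓ borel F) K bot_le inf_le_left
    rw [Subgroup.relIndex_bot_left, Subgroup.relIndex_bot_left, hH.natCard_inf_borel, hH.natCard,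
      inf_comm, Subgroup.inf_relIndex_right] at h
    exact Nat.eq_of_mul_eq_mul_left (by norm_num) h
  have := Fact.mk Nat.prime_three
  obtain ⟨⟨y, hy⟩, hyB⟩ := exists_conj_mem_of_pow_prime_eq_one (p := 3)
    (K := (borel F).subgroupOf K) (by rw [hindex]; norm_num)
    (t := ⟨x * t * x⁻¹, conj_mem_conj_smul_iff.2 ht⟩)
    (Subtype.ext (by rw [SubmonoidClass.coe_pow, conj_pow, ht₃, mul_one, mul_inv_cancel]; rfl))
  have : Nontrivial (unipotentPart K) :=
    Finite.one_lt_card_iff_nontrivial.1 (by rw [hH.natCard_unipotentPart]; norm_num)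
  obtain ⟨a, ha⟩ := exists_ne (0 : unipotentPart K)
  refine ⟨x⁻¹ * y, a, fun h ↦ ha (Subtype.ext h), ?_, ?_⟩
  · convert Subgroup.mem_subgroupOf.1 hyB using 1
    simp only [Subgroup.coe_mul, Subgroup.coe_inv]
    group
  · rw [← conj_mem_conj_smul_iff (x := x)]
    convert K.mul_mem (K.mul_mem hy a.2) (K.inv_mem hy) using 1
    group

omit [Finite F] in
variable (F) in
theorem isPGroup_unipotent : IsPGroup 2 (unipotent F) := by
  rintro ⟨_, a, rfl⟩
  refine ⟨1, Subtype.ext ?_⟩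
  rw [SubmonoidClass.coe_pow, pow_one, pow_two, ← upper_add, CharTwo.add_self_eq_zero, upper_zero]
  rfl

omit [Finite F] [CharP F 2] in
variable (F) in
theorem natCard_unipotent : Nat.card (unipotent F) = Nat.card F := by
  rw [← top_inf_eq (unipotent F), ← natCard_unipotentPart, unipotentPart_eq_top le_top,
    AddSubgroup.card_top]

variable (F) in
theorem not_two_dvd_index_unipotent : ¬ 2 ∣ (unipotent F).index := by
  have hindex : (unipotent F).index = Nat.card F ^ 2 - 1 := by
    refine Nat.eq_of_mul_eq_mul_left (Nat.card_pos (α := unipotent F)) ?_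
    rw [Subgroup.card_mul_index, natCard_SL2, natCard_unipotent]
  have hF : 2 ∣ Nat.card F := by
    have := Fintype.ofFinite F
    rw [← CharP.cast_eq_zero_iff F 2, Nat.card_eq_fintype_card, Nat.cast_card_eq_zero]
  have : 2 ∣ Nat.card F ^ 2 := dvd_pow hF two_ne_zero
  have : 0 < Nat.card F ^ 2 := pow_pos Nat.card_pos 2
  omega

variable (F) in
/-- The unipotent subgroup as a Sylow `2`-subgroup. -/
noncomputable def sylowUnipotent : Sylow 2 (SL2 F) :=
  (isPGroup_unipotent F).toSylow (not_two_dvd_index_unipotent F)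

theorem exists_odd_natCard_eq_mul (H : Subgroup (SL2 F)) :
    ∃ (x : SL2 F) (n : ℕ), Odd n ∧
      Nat.card H = Nat.card (unipotentPart (MulAut.conj x • H)) * n := by
  obtain ⟨P⟩ := (inferInstance : Nonempty (Sylow 2 H))
  obtain ⟨Q, hQ⟩ := P.exists_comap_subtype_eq
  obtain ⟨x, hx⟩ := MulAction.exists_smul_eq (SL2 F) Q (sylowUnipotent F)
  have hU : MulAut.conj x • (Q : Subgroup (SL2 F)) = unipotent F :=
    congrArg Sylow.toSubgroup hx
  have hP : Nat.card P = Nat.card (H ⊓ Q : Subgroup (SL2 F)) := by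
    rw [inf_comm, ← Subgroup.subgroupOf_map_subtype,
      Subgroup.card_map_of_injective H.subtype_injective]
    exact congrArg (fun K : Subgroup H ↦ Nat.card K) hQ.symm
  refine ⟨x, P.index, ?_, ?_⟩
  · rw [← Nat.not_even_iff_odd, even_iff_two_dvd]
    exact P.not_dvd_index
  · rw [natCard_unipotentPart, ← hU, ← Subgroup.smul_inf, natCard_conj_smul, ← hP]
    exact P.card_mul_index.symm

theorem exists_conj_le_borel_or_isSubfieldType (hF : 16 ≤ Nat.card F) (hH : H ≠ ⊤)
    (hdvd : Nat.card F ∣ 4 * Nat.card H) :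
    ∃ (x : SL2 F) (n : ℕ), Odd n ∧
      Nat.card H = Nat.card (unipotentPart (MulAut.conj x • H)) * n ∧
      (MulAut.conj x • H ≤ borel F ∨ IsSubfieldType (MulAut.conj x • H)) := by
  obtain ⟨x, n, hn, hx⟩ := exists_odd_natCard_eq_mul H
  obtain ⟨f, hf⟩ := (isPGroup_unipotent F).exists_card_eq
  rw [natCard_unipotent] at hf
  refine ⟨x, n, hn, hx, le_borel_or_isSubfieldType hF (fun h ↦ hH ?_) ?_⟩
  · rw [← Subgroup.card_eq_iff_eq_top, ← natCard_conj_smul x, h, Subgroup.card_top]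
  · rw [hx, ← mul_assoc] at hdvd
    refine Nat.Coprime.dvd_of_dvd_mul_right ?_ hdvd
    rw [hf]
    exact Nat.Coprime.pow_left f (Nat.coprime_two_left.2 hn)

theorem natCard_add_one_dvd_index (hF : 16 ≤ Nat.card F) (hH : H ≠ ⊤)
    (hdvd : Nat.card F ∣ 4 * Nat.card H) : Nat.card F + 1 ∣ H.index := by
  obtain ⟨x, -, -, -, hB | hS⟩ := exists_conj_le_borel_or_isSubfieldType hF hH hdvd
  · rw [← index_conj_smul x H, ← index_borel]
    exact Subgroup.index_dvd_of_le hB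
  · have h := Subgroup.card_mul_index H
    rw [← natCard_conj_smul x H, hS.natCard, natCard_SL2, hS.natCard_field] at h
    rw [hS.natCard_field]
    exact ⟨4, by omega⟩

end CharTwo

end Finite

end SL2

/-! ### Automorphisms of `SL₂(F)` -/

theorem smul_normalizer {A L : Type*} [Group A] [Group L] [MulDistribMulAction A L] (α : A)
    (H : Subgroup L) :
    α • Subgroup.normalizer (H : Set L) = Subgroup.normalizer ((α • H : Subgroup L) : Set L) :=
  Subgroup.map_equiv_normalizer_eq H (MulDistribMulAction.toMulEquiv L α)

namespace SL2

section CommRing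

variable {R : Type*} [CommRing R]

/-- The standard representative of the nontrivial element of the Weyl group. -/
def weyl : SL2 R := ⟨!![0, -1; 1, 0], by simp⟩

@[simp] theorem weyl_apply_zero_zero : (weyl : SL2 R) 0 0 = 0 := rfl
@[simp] theorem weyl_apply_zero_one : (weyl : SL2 R) 0 1 = -1 := rfl
@[simp] theorem weyl_apply_one_zero : (weyl : SL2 R) 1 0 = 1 := rfl
@[simp] theorem weyl_apply_one_one : (weyl : SL2 R) 1 1 = 0 := rfl

theorem weyl_conj_upper (a : R) : weyl * upper a * weyl⁻¹ = lower (-a) := by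
  apply ext_entries <;>
    simp [SL2.mul_apply, inv_apply_zero_zero, inv_apply_zero_one, inv_apply_one_zero,
      inv_apply_one_one, -Matrix.SpecialLinearGroup.coe_mul, -Matrix.SpecialLinearGroup.coe_inv]

theorem mem_conj_weyl_unipotent {g : SL2 R} :
    g ∈ MulAut.conj (weyl : SL2 R) • unipotent R ↔ ∃ a, lower a = g := by
  rw [Subgroup.mem_smul_pointwise_iff_exists]
  constructor
  · rintro ⟨_, ⟨a, rfl⟩, rfl⟩
    exact ⟨-a, (weyl_conj_upper a).symm⟩
  · rintro ⟨a, rfl⟩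
    exact ⟨upper (-a), upper_mem_unipotent _, (weyl_conj_upper _).trans (by rw [neg_neg])⟩

theorem mem_conj_weyl_borel {g : SL2 R} :
    g ∈ MulAut.conj (weyl : SL2 R) • borel R ↔ g 0 1 = 0 := by
  rw [mem_conj_smul_iff, mem_borel]
  simp [SL2.mul_apply, inv_apply_one_zero, inv_apply_one_one,
    -Matrix.SpecialLinearGroup.coe_mul, -Matrix.SpecialLinearGroup.coe_inv]

theorem diag_mem_borel (z : Rˣ) : diag z ∈ borel R := rfl

theorem diag_mem_conj_weyl_borel (z : Rˣ) : diag z ∈ MulAut.conj (weyl : SL2 R) • borel R :=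
  mem_conj_weyl_borel.2 rfl

theorem upper_mul_diag_torusChar (g : borel R) :
    upper (g.1 0 1 * g.1 0 0) * diag (torusChar R g) = g := by
  have hdiag : g.1 0 0 * g.1 1 1 = 1 := mul_diag_eq_one_of_mem_borel g.2
  have hinv : ((torusChar R g)⁻¹ : Rˣ) = g.1 1 1 := rfl
  apply ext_entries <;>
    simp [SL2.mul_apply, hinv, coe_torusChar, -Matrix.SpecialLinearGroup.coe_mul, mul_assoc, hdiag,
      mem_borel.1 g.2]

theorem upper_one_mul_lower_pow_three_apply_zero_one (a : R) :
    ((upper 1 * lower a : SL2 R) ^ 3) 0 1 = a ^ 2 + 4 * a + 3 := by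
  simp [pow_three, SL2.mul_apply, -Matrix.SpecialLinearGroup.coe_mul]
  ring

theorem upper_one_mul_lower_one_pow_three [CharP R 2] :
    (upper 1 * lower 1 : SL2 R) ^ 3 = 1 := by
  have h2 : (2 : R) = 0 := CharTwo.two_eq_zero
  apply ext_entries <;> simp [pow_three, SL2.mul_apply, -Matrix.SpecialLinearGroup.coe_mul]
  · linear_combination 6 * h2
  · linear_combination 4 * h2
  · linear_combination 4 * h2
  · linear_combination 2 * h2

theorem borel_le_normalizer_unipotent :
    borel R ≤ Subgroup.normalizer (unipotent R : Set (SL2 R)) := by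
  have hconj : ∀ g ∈ borel R, ∀ u ∈ unipotent R, g * u * g⁻¹ ∈ unipotent R := by
    rintro g hg _ ⟨a, rfl⟩
    exact conj_upper_of_mem_borel hg a ▸ upper_mem_unipotent _
  refine fun g hg ↦ Subgroup.mem_normalizer_iff.2 fun u ↦ ⟨hconj g hg u, fun hu ↦ ?_⟩
  simpa [mul_assoc] using hconj g⁻¹ (inv_mem hg) _ hu

end CommRing

theorem normalizer_unipotent {F : Type*} [Field F] :
    Subgroup.normalizer (unipotent F : Set (SL2 F)) = borel F := by
  refine le_antisymm (fun g hg ↦ ?_) borel_le_normalizer_unipotent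
  have h : (g * upper 1 * g⁻¹ : SL2 F) 1 0 = 0 :=
    unipotent_le_borel ((Subgroup.mem_normalizer_iff.1 hg _).1 (upper_mem_unipotent 1))
  simpa [mem_borel, conj_upper_apply_one_zero] using h

section CharTwo

variable {F : Type*} [Field F] [Finite F] [CharP F 2]

theorem smul_sylowUnipotent_of_mem_borel {g : SL2 F} (hg : g ∈ borel F) :
    g • sylowUnipotent F = sylowUnipotent F :=
  Sylow.smul_eq_iff_mem_normalizer.2 (borel_le_normalizer_unipotent hg)

theorem weyl_smul_sylowUnipotent_ne : (weyl : SL2 F) • sylowUnipotent F ≠ sylowUnipotent F := by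
  intro h
  have hw : weyl ∈ Subgroup.normalizer (unipotent F : Set (SL2 F)) :=
    Sylow.smul_eq_iff_mem_normalizer.1 h
  simp [normalizer_unipotent, mem_borel] at hw

theorem exists_smul_eq_sylowUnipotent {P Q : Sylow 2 (SL2 F)} (hPQ : P ≠ Q) :
    ∃ l : SL2 F, l • P = sylowUnipotent F ∧ l • Q = (weyl : SL2 F) • sylowUnipotent F := by
  obtain ⟨x, hx⟩ := MulAction.exists_smul_eq (SL2 F) P (sylowUnipotent F)
  obtain ⟨y, hy⟩ := MulAction.exists_smul_eq (SL2 F) (sylowUnipotent F) (x • Q)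
  have hy₀ : y 1 0 ≠ 0 := fun h ↦
    hPQ (smul_left_cancel x (hx.trans ((smul_sylowUnipotent_of_mem_borel h).symm.trans hy)))
  set u : SL2 F := upper (-(y 0 0 / y 1 0)) with hu
  have hmem : weyl⁻¹ * (u * y) ∈ borel F := by
    simp [inv_apply_one_zero, inv_apply_one_one, mem_borel, SL2.mul_apply weyl⁻¹, hu,
      upper_mul_apply_zero, -Matrix.SpecialLinearGroup.coe_mul,
      -Matrix.SpecialLinearGroup.coe_inv, hy₀]
  refine ⟨u * x, ?_, ?_⟩
  · rw [mul_smul, hx, smul_sylowUnipotent_of_mem_borel (upper_mem_borel _)]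
  · rw [mul_smul, ← hy, ← mul_smul, ← mul_inv_cancel_left weyl (u * y), mul_smul,
      smul_sylowUnipotent_of_mem_borel hmem]

theorem natCard_sylow_two : Nat.card (Sylow 2 (SL2 F)) = Nat.card F + 1 := by
  rw [(sylowUnipotent F).card_eq_index_normalizer, ← index_borel F, ← normalizer_unipotent]
  rfl

end CharTwo

-- The degree comes from the action of `K` on the `q + 1` Sylow `2`-subgroups.
theorem natCard_mem_charDegrees {F : Type} [Field F] [Finite F] [CharP F 2] {K : Type}
    [Group K] [Finite K] (c : K →* MulAut (SL2 F))
    (hc : ∀ l, ∃ k, c k = MulAut.conj l) : Nat.card F ∈ charDegrees K := by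
  let _ : MulAction K (Sylow 2 (SL2 F)) := MulAction.compHom _ c
  have hact (l : SL2 F) : ∃ k : K, ∀ P : Sylow 2 (SL2 F), k • P = l • P := by
    obtain ⟨k, hk⟩ := hc l
    exact ⟨k, fun P ↦ congrArg (· • P) hk⟩
  refine mem_charDegrees_of_isMultiplyPretransitive Nat.card_pos natCard_sylow_two
    (MulAction.is_two_pretransitive_iff.2 fun {P Q P' Q'} hPQ hPQ' ↦ ?_)
  obtain ⟨l, hlP, hlQ⟩ := exists_smul_eq_sylowUnipotent hPQ
  obtain ⟨l', hlP', hlQ'⟩ := exists_smul_eq_sylowUnipotent hPQ'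
  obtain ⟨k, hk⟩ := hact (l'⁻¹ * l)
  refine ⟨k, ?_, ?_⟩
  · rw [hk, mul_smul, hlP, ← hlP', inv_smul_smul]
  · rw [hk, mul_smul, hlQ, ← hlQ', inv_smul_smul]

section StandardAut

variable {F : Type*} [Field F]

variable (F) in
/-- The automorphisms of `SL₂(F)` fixing the two opposite unipotent subgroups and the
transvection `upper 1`. They turn out to be the field automorphisms. -/
def standardAut : Subgroup (MulAut (SL2 F)) :=
  MulAction.stabilizer (MulAut (SL2 F)) (unipotent F) ⊓
    MulAction.stabilizer (MulAut (SL2 F)) (MulAut.conj (weyl : SL2 F) • unipotent F) ⊓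
    MulAction.stabilizer (MulAut (SL2 F)) (upper 1 : SL2 F)

variable {α : MulAut (SL2 F)}

theorem smul_borel_of_mem_standardAut (hα : α ∈ standardAut F) : α • borel F = borel F := by
  rw [← normalizer_unipotent, smul_normalizer, hα.1.1]

theorem smul_conj_weyl_borel_of_mem_standardAut (hα : α ∈ standardAut F) :
    α • MulAut.conj (weyl : SL2 F) • borel F = MulAut.conj (weyl : SL2 F) • borel F := by
  rw [← normalizer_unipotent, smul_normalizer, smul_normalizer, hα.1.2]

theorem exists_apply_upper_eq (hα : α • unipotent F = unipotent F) (a : F) :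
    ∃ b, upper b = α (upper a) :=
  hα.le (Subgroup.smul_mem_pointwise_smul _ α _ (upper_mem_unipotent a))

/-- The map `φ` with `α (upper a) = upper (φ a)`, for `α` in `standardAut F`. -/
def fieldMap (α : MulAut (SL2 F)) (a : F) : F := α (upper a) 0 1

theorem apply_upper (hα : α ∈ standardAut F) (a : F) : α (upper a) = upper (fieldMap α a) := by
  obtain ⟨b, hb⟩ := exists_apply_upper_eq hα.1.1 a
  rw [fieldMap, ← hb, upper_apply_zero_one]

theorem apply_diag_mem_borel (hα : α ∈ standardAut F) (z : Fˣ) : α (diag z) ∈ borel F :=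
  (smul_borel_of_mem_standardAut hα).le
    (Subgroup.smul_mem_pointwise_smul _ α _ (diag_mem_borel z))

theorem apply_diag_apply_zero_one (hα : α ∈ standardAut F) (z : Fˣ) : α (diag z) 0 1 = 0 :=
  mem_conj_weyl_borel.1 <| (smul_conj_weyl_borel_of_mem_standardAut hα).le
    (Subgroup.smul_mem_pointwise_smul _ α _ (diag_mem_conj_weyl_borel z))

theorem fieldMap_add (hα : α ∈ standardAut F) (a b : F) :
    fieldMap α (a + b) = fieldMap α a + fieldMap α b := by
  apply upper_injective
  rw [upper_add, ← apply_upper hα, ← apply_upper hα, ← apply_upper hα, upper_add, map_mul]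

theorem fieldMap_zero (hα : α ∈ standardAut F) : fieldMap α 0 = 0 := by
  simpa using fieldMap_add hα 0 0

theorem fieldMap_one (hα : α ∈ standardAut F) : fieldMap α 1 = 1 := by
  have h : α (upper 1) = upper 1 := hα.2
  rw [fieldMap, h, upper_apply_zero_one]

theorem fieldMap_sq_mul (hα : α ∈ standardAut F) (z : Fˣ) (a : F) :
    fieldMap α ((z : F) ^ 2 * a) = α (diag z) 0 0 ^ 2 * fieldMap α a := by
  apply upper_injective
  rw [← conj_upper_of_mem_borel (apply_diag_mem_borel hα z), ← apply_upper hα, ← apply_upper hα,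
    ← diag_apply_zero_zero z, ← conj_upper_of_mem_borel (diag_mem_borel z), map_mul, map_mul,
    map_inv]

theorem fieldMap_mul_apply {β : MulAut (SL2 F)} (hα : α ∈ standardAut F)
    (hβ : β ∈ standardAut F) (a : F) : fieldMap (α * β) a = fieldMap α (fieldMap β a) := by
  apply upper_injective
  rw [← apply_upper (mul_mem hα hβ), ← apply_upper hα, ← apply_upper hβ, MulAut.mul_apply]

variable [CharP F 2]

theorem apply_diag_eq (hα : α ∈ standardAut F) (hφ : ∀ a, fieldMap α a = a) (z : Fˣ) :
    α (diag z) = diag z := by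
  have h₀₀ : α (diag z) 0 0 = z := by
    have h := fieldMap_sq_mul hα z 1
    rw [hφ, hφ, mul_one, mul_one] at h
    exact (CharTwo.sq_injective h).symm
  have hdiag := mul_diag_eq_one_of_mem_borel (apply_diag_mem_borel hα z)
  rw [h₀₀] at hdiag
  exact ext_entries h₀₀ (apply_diag_apply_zero_one hα z) (apply_diag_mem_borel hα z)
    (mul_left_cancel₀ z.ne_zero (by simpa using hdiag))

-- `upper 1 * lower a` has order `3` only for `a = 1`.
theorem apply_lower_one (hα : α ∈ standardAut F) : α (lower 1) = lower 1 := by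
  obtain ⟨a, ha⟩ : ∃ a, lower a = α (lower 1) := mem_conj_weyl_unipotent.1 <|
    (show α • MulAut.conj (weyl : SL2 F) • unipotent F = _ from hα.1.2).le
      (Subgroup.smul_mem_pointwise_smul _ α _ (mem_conj_weyl_unipotent.2 ⟨1, rfl⟩))
  have hpow := congrArg α (upper_one_mul_lower_one_pow_three (R := F))
  rw [map_pow, map_mul, apply_upper hα, fieldMap_one hα, ← ha, map_one] at hpow
  have hquad : (0 : F) = a ^ 2 + 4 * a + 3 := by
    simpa [hpow] using upper_one_mul_lower_pow_three_apply_zero_one a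
  have hsq : (a + 1) ^ 2 = 0 := by
    linear_combination -hquad - (a + 1) * CharTwo.two_eq_zero (R := F)
  rw [← ha, CharTwo.add_eq_zero.1 (eq_zero_of_pow_eq_zero hsq)]

variable [Finite F]

theorem exists_sq_eq (a : F) : ∃ b, b ^ 2 = a :=
  (Finite.injective_iff_surjective (f := fun x : F ↦ x ^ 2)).1 CharTwo.sq_injective a

theorem fieldMap_mul (hα : α ∈ standardAut F) (a b : F) :
    fieldMap α (a * b) = fieldMap α a * fieldMap α b := by
  obtain ⟨c, rfl⟩ := exists_sq_eq a
  obtain rfl | hc := eq_or_ne c 0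
  · simp [fieldMap_zero hα]
  · have h₁ := fieldMap_sq_mul hα (Units.mk0 c hc) 1
    rw [fieldMap_one hα, mul_one, mul_one, Units.val_mk0] at h₁
    rw [h₁]
    exact fieldMap_sq_mul hα (Units.mk0 c hc) b

theorem eq_one_of_fieldMap_eq (hα : α ∈ standardAut F) (hφ : ∀ a, fieldMap α a = a) : α = 1 := by
  set E := (α : SL2 F →* SL2 F).eqLocus (MonoidHom.id _)
  have hborel : borel F ≤ E := fun g hg ↦ by
    change α g = g
    have hg' : upper (g 0 1 * g 0 0) * diag (torusChar F ⟨g, hg⟩) = g :=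
      upper_mul_diag_torusChar ⟨g, hg⟩
    rw [← hg', map_mul, apply_upper hα, hφ, apply_diag_eq hα hφ]
  have hlower : lower 1 ∈ E := apply_lower_one hα
  have htop : E = ⊤ := eq_top_of_borel_le hborel fun h ↦ one_ne_zero (h hlower)
  exact MulEquiv.ext fun g ↦ (htop.ge (Subgroup.mem_top g) : g ∈ E)

variable [Algebra (ZMod 2) F]

variable (F) in
/-- The field endomorphism `fieldMap α` induced by `α`, as a homomorphism of monoids. -/
def fieldHom : standardAut F →* (F →ₐ[ZMod 2] F) where
  toFun α :=
    let φ : F →+* F :=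
      { toFun := fieldMap α.1
        map_one' := fieldMap_one α.2
        map_mul' := fieldMap_mul α.2
        map_zero' := fieldMap_zero α.2
        map_add' := fieldMap_add α.2 }
    { φ with commutes' := RingHom.congr_fun (Subsingleton.elim (φ.comp (algebraMap _ F)) _) }
  map_one' := AlgHom.ext fun _ ↦ rfl
  map_mul' α β := AlgHom.ext (fieldMap_mul_apply α.2 β.2)

variable (F) in
/-- The field automorphism induced by an element of `standardAut F`. -/
def fieldAut : standardAut F →* (F ≃ₐ[ZMod 2] F) :=
  (AlgEquiv.algHomUnitsEquiv (ZMod 2) F).toMonoidHom.comp (fieldHom F).toHomUnits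

variable (F) in
theorem fieldAut_injective : Function.Injective (fieldAut F) :=
  (injective_iff_map_eq_one _).2 fun α hα ↦
    Subtype.ext (eq_one_of_fieldMap_eq α.2 fun a ↦ AlgEquiv.congr_fun hα a)

end StandardAut

section CharTwo

variable {F : Type*} [Field F] [Finite F] [CharP F 2]

theorem smul_weyl_smul_sylowUnipotent {g : SL2 F}
    (hg : g ∈ MulAut.conj (weyl : SL2 F) • borel F) :
    g • (weyl : SL2 F) • sylowUnipotent F = (weyl : SL2 F) • sylowUnipotent F := by
  rw [← inv_smul_eq_iff, ← mul_smul, ← mul_smul]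
  exact smul_sylowUnipotent_of_mem_borel (mem_conj_smul_iff.1 hg)

theorem mem_standardAut_of_smul_eq {α : MulAut (SL2 F)}
    (hU : α • sylowUnipotent F = sylowUnipotent F)
    (hW : α • (weyl : SL2 F) • sylowUnipotent F = (weyl : SL2 F) • sylowUnipotent F)
    (h1 : α (upper 1) = upper 1) : α ∈ standardAut F :=
  ⟨⟨congrArg Sylow.toSubgroup hU, congrArg Sylow.toSubgroup hW⟩, h1⟩

theorem exists_conj_mul_mem_standardAut (α : MulAut (SL2 F)) :
    ∃ l, MulAut.conj l * α ∈ standardAut F := by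
  obtain ⟨l, hl, hlw⟩ := exists_smul_eq_sylowUnipotent
    ((MulAction.injective α).ne (weyl_smul_sylowUnipotent_ne (F := F)).symm)
  set β := MulAut.conj l * α
  have hU : β • sylowUnipotent F = sylowUnipotent F := (mul_smul _ _ _).trans hl
  have hW : β • (weyl : SL2 F) • sylowUnipotent F = (weyl : SL2 F) • sylowUnipotent F :=
    (mul_smul _ _ _).trans hlw
  obtain ⟨y, hy⟩ := exists_apply_upper_eq (congrArg Sylow.toSubgroup hU) 1
  have hy₀ : y ≠ 0 := by
    rintro rfl
    rw [upper_zero, eq_comm, map_eq_one_iff β β.injective, ← upper_zero] at hy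
    exact one_ne_zero (upper_injective hy)
  obtain ⟨c, hc⟩ := exists_sq_eq y⁻¹
  have hc₀ : c ≠ 0 := fun h ↦ inv_ne_zero hy₀ (by rw [← hc, h, zero_pow two_ne_zero])
  set d : SL2 F := diag (Units.mk0 c hc₀)
  refine ⟨d * l, ?_⟩
  rw [map_mul, mul_assoc]
  refine mem_standardAut_of_smul_eq ?_ ?_ ?_
  · rw [mul_smul, hU]
    exact smul_sylowUnipotent_of_mem_borel (diag_mem_borel _)
  · rw [mul_smul, hW]
    exact smul_weyl_smul_sylowUnipotent (diag_mem_conj_weyl_borel _)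
  · have hd : d * upper y * d⁻¹ = upper (c ^ 2 * y) := conj_upper_of_mem_borel (diag_mem_borel _) y
    rw [MulAut.mul_apply, ← hy, MulAut.conj_apply, hd, hc, inv_mul_cancel₀ hy₀]

end CharTwo

end SL2

/-! ### Normal sections isomorphic to `SL₂(F)` -/

/-- The situation of the theorem: `proj` identifies the section `M / N` with `SL₂(F)`, and only
the elements of `N` centralize this section. -/
structure SL2Section (F : Type) [Field F] {G : Type} [Group G] (N M : Subgroup G) [M.Normal] where
  proj : M →* SL2 F
  le : N ≤ M
  surjective : Function.Surjective proj
  ker_proj : proj.ker = N.subgroupOf M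
  mem_of_conj : ∀ g : G, (∀ m : M, proj (MulAut.conjNormal g m) = proj m) → g ∈ N

theorem SL2.center_eq_bot {F : Type*} [Field F] [CharP F 2] :
    Subgroup.center (SL2 F) = ⊥ := by
  refine (Subgroup.eq_bot_iff_forall _).2 fun g hg ↦ ?_
  obtain ⟨r, hr, hg⟩ := Matrix.SpecialLinearGroup.mem_center_iff.1 hg
  obtain rfl : r = 1 := CharTwo.sq_injective (by simpa using hr)
  exact Subtype.ext (by rw [← hg, map_one, Matrix.SpecialLinearGroup.coe_one])

namespace SL2Section

section Existence

variable {F : Type} [Field F] [CharP F 2] {G : Type} [Group G] {N M : Subgroup G} [N.Normal]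
  [M.Normal]

theorem nonempty_of_centralizer_eq_bot (hNM : N ≤ M)
    (hiso : Nonempty (M.map (QuotientGroup.mk' N) ≃* PSL2 F))
    (hcent : Subgroup.centralizer (M.map (QuotientGroup.mk' N) : Set (G ⧸ N)) = ⊥) :
    Nonempty (SL2Section F N M) := by
  obtain ⟨e⟩ := hiso
  let e' : M.map (QuotientGroup.mk' N) ≃* SL2 F := e.trans <|
    (QuotientGroup.quotientMulEquivOfEq SL2.center_eq_bot).trans QuotientGroup.quotientBot
  let r := (QuotientGroup.mk' N).subgroupMap M
  refine ⟨⟨e'.toMonoidHom.comp r, hNM,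
    e'.surjective.comp ((QuotientGroup.mk' N).subgroupMap_surjective M), ?_, fun g hg ↦ ?_⟩⟩
  · ext m
    have hr : r m = 1 ↔ (m : G) ∈ N := Subtype.ext_iff.trans (QuotientGroup.eq_one_iff (m : G))
    exact (map_eq_one_iff e' e'.injective).trans (hr.trans Subgroup.mem_subgroupOf.symm)
  · rw [← QuotientGroup.eq_one_iff, ← Subgroup.mem_bot, ← hcent, Subgroup.mem_centralizer_iff]
    rintro _ ⟨m, hm, rfl⟩
    have hconj : ((g * m * g⁻¹ : G) : G ⧸ N) = (m : G ⧸ N) :=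
      congrArg Subtype.val (e'.injective (hg ⟨m, hm⟩))
    rw [QuotientGroup.mk_mul, QuotientGroup.mk_mul, QuotientGroup.mk_inv,
      mul_inv_eq_iff_eq_mul] at hconj
    exact hconj.symm

end Existence

variable {F : Type} [Field F] {G : Type} [Group G] {N M : Subgroup G} [M.Normal]
  (S : SL2Section F N M)

theorem proj_eq_one_iff {m : M} : S.proj m = 1 ↔ (m : G) ∈ N := by
  rw [← MonoidHom.mem_ker, S.ker_proj, Subgroup.mem_subgroupOf]

/-- The section with the identification of `M / N` with `SL₂(F)` changed by an inner
automorphism. -/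
def conj (x : SL2 F) : SL2Section F N M where
  proj := (MulAut.conj x).toMonoidHom.comp S.proj
  le := S.le
  surjective := (MulAut.conj x).surjective.comp S.surjective
  ker_proj := by
    rw [← S.ker_proj]
    exact MonoidHom.ker_mulEquiv_comp S.proj (MulAut.conj x)
  mem_of_conj g h := S.mem_of_conj g fun m ↦ (MulAut.conj x).injective (h m)

section Action

variable [N.Normal]

/-- The endomorphism of `SL₂(F)` induced by conjugation by `g`. -/
noncomputable def conjEnd (g : G) : SL2 F →* SL2 F :=
  S.proj.liftOfSurjective S.surjective
    ⟨S.proj.comp (MulAut.conjNormal g : MulAut M).toMonoidHom, fun m hm ↦ by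
      rw [MonoidHom.mem_ker, S.proj_eq_one_iff] at hm
      exact S.proj_eq_one_iff.2 (‹N.Normal›.conj_mem _ hm g)⟩

theorem conjEnd_proj (g : G) (m : M) :
    S.conjEnd g (S.proj m) = S.proj (MulAut.conjNormal g m) :=
  S.proj.liftOfRightInverse_comp_apply _ _ _ m

theorem conjEnd_one : S.conjEnd 1 = MonoidHom.id _ :=
  (MonoidHom.cancel_right S.surjective).1 <| MonoidHom.ext fun m ↦ by
    simp [conjEnd_proj]

theorem conjEnd_mul (g h : G) : S.conjEnd (g * h) = (S.conjEnd g).comp (S.conjEnd h) :=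
  (MonoidHom.cancel_right S.surjective).1 <| MonoidHom.ext fun m ↦ by
    simp [conjEnd_proj]

/-- The action of `G` on the section `M / N ≅ SL₂(F)` by conjugation. -/
noncomputable def conjAut : G →* MulAut (SL2 F) where
  toFun g := MonoidHom.toMulEquiv (S.conjEnd g) (S.conjEnd g⁻¹)
    (by rw [← conjEnd_mul, inv_mul_cancel, conjEnd_one])
    (by rw [← conjEnd_mul, mul_inv_cancel, conjEnd_one])
  map_one' := MulEquiv.ext fun x ↦ DFunLike.congr_fun S.conjEnd_one x
  map_mul' g h := MulEquiv.ext fun x ↦ DFunLike.congr_fun (S.conjEnd_mul g h) x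

theorem conjAut_proj (g : G) (m : M) : S.conjAut g (S.proj m) = S.proj (MulAut.conjNormal g m) :=
  S.conjEnd_proj g m

theorem conjAut_coe (m : M) : S.conjAut (m : G) = MulAut.conj (S.proj m) := by
  ext1 x
  obtain ⟨k, rfl⟩ := S.surjective x
  rw [conjAut_proj, MulAut.conj_apply, ← map_inv, ← map_mul, ← map_mul]
  rfl

theorem ker_conjAut : S.conjAut.ker = N := by
  ext g
  refine ⟨fun hg ↦ S.mem_of_conj g fun m ↦ ?_, fun hg ↦ ?_⟩
  · rw [← conjAut_proj, MonoidHom.mem_ker.1 hg, MulAut.one_apply]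
  · rw [MonoidHom.mem_ker, S.conjAut_coe ⟨g, S.le hg⟩, S.proj_eq_one_iff.2 hg, map_one]

theorem exists_mul_mem_comap_standardAut [Finite F] [CharP F 2] (g : G) :
    ∃ m ∈ M, m * g ∈ (SL2.standardAut F).comap S.conjAut := by
  obtain ⟨l, hl⟩ := SL2.exists_conj_mul_mem_standardAut (S.conjAut g)
  obtain ⟨m, rfl⟩ := S.surjective l
  exact ⟨m, m.2, by rwa [Subgroup.mem_comap, map_mul, conjAut_coe]⟩

include S in
theorem exists_subgroup_algEquiv_surjective [Finite F] [CharP F 2] [Algebra (ZMod 2) F] :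
    ∃ (A : Subgroup (F ≃ₐ[ZMod 2] F)) (ψ : A →* G ⧸ M), Function.Surjective ψ := by
  let G₀ := (SL2.standardAut F).comap S.conjAut
  let φ : G₀ →* (F ≃ₐ[ZMod 2] F) :=
    (SL2.fieldAut F).comp (S.conjAut.subgroupComap (SL2.standardAut F))
  let π : G₀ →* G ⧸ M := (QuotientGroup.mk' M).comp G₀.subtype
  have hker : φ.ker ≤ π.ker := fun g hg ↦ by
    have h : S.conjAut g = 1 := congrArg Subtype.val
      ((map_eq_one_iff _ (SL2.fieldAut_injective F)).1 hg)
    exact (QuotientGroup.eq_one_iff _).2 (S.le (S.ker_conjAut.le h))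
  refine ⟨φ.range, φ.rangeRestrict.liftOfSurjective φ.rangeRestrict_surjective
    ⟨π, φ.ker_rangeRestrict.trans_le hker⟩, fun x ↦ ?_⟩
  obtain ⟨g, rfl⟩ := QuotientGroup.mk_surjective x
  obtain ⟨m, hm, hmg⟩ := S.exists_mul_mem_comap_standardAut g
  refine ⟨φ.rangeRestrict ⟨m * g, hmg⟩, ?_⟩
  refine (MonoidHom.liftOfRightInverse_comp_apply _ _ _ _ _).trans ?_
  change ((m * g : G) : G ⧸ M) = g
  rw [QuotientGroup.mk_mul, (QuotientGroup.eq_one_iff m).2 hm, one_mul]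

include S in
theorem isCyclic_quotient [Finite F] [CharP F 2] : IsCyclic (G ⧸ M) := by
  let _ : Algebra (ZMod 2) F := ZMod.algebra F 2
  obtain ⟨A, ψ, hψ⟩ := S.exists_subgroup_algEquiv_surjective
  exact isCyclic_of_surjective ψ hψ

include S in
theorem natCard_quotient_dvd [Finite F] [CharP F 2] {f : ℕ} (hF : Nat.card F = 2 ^ f) :
    Nat.card (G ⧸ M) ∣ f := by
  let _ : Algebra (ZMod 2) F := ZMod.algebra F 2
  obtain ⟨A, ψ, hψ⟩ := S.exists_subgroup_algEquiv_surjective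
  have hgal : Nat.card (F ≃ₐ[ZMod 2] F) = f := by
    have hfinrank := Module.natCard_eq_pow_finrank (K := ZMod 2) (V := F)
    rw [hF, Nat.card_zmod] at hfinrank
    rw [IsGalois.card_aut_eq_finrank, Nat.pow_right_injective le_rfl hfinrank.symm]
  rw [← hgal]
  exact (Subgroup.card_dvd_of_surjective ψ hψ).trans A.card_subgroup_dvd_card

variable [Finite G] [Finite F] [CharP F 2]

include S in
theorem natCard_mem_charDegrees : Nat.card F ∈ charDegrees G :=
  SL2.natCard_mem_charDegrees S.conjAut fun l ↦ by
    obtain ⟨m, rfl⟩ := S.surjective l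
    exact ⟨m, S.conjAut_coe m⟩

include S in
theorem natCard_mem_charDegrees_quotient : Nat.card F ∈ charDegrees (G ⧸ N) :=
  SL2.natCard_mem_charDegrees (QuotientGroup.lift N S.conjAut S.ker_conjAut.ge) fun l ↦ by
    obtain ⟨m, rfl⟩ := S.surjective l
    exact ⟨(m : G), S.conjAut_coe m⟩

end Action

end SL2Section

/-! ### The two-prime hypothesis -/

section TwoPrime

open scoped ArithmeticFunction.Omega

theorem cardFactors_le_of_dvd {m n : ℕ} (hn : n ≠ 0) (h : m ∣ n) : Ω m ≤ Ω n := by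
  obtain ⟨k, rfl⟩ := h
  rw [ArithmeticFunction.cardFactors_mul (left_ne_zero_of_mul hn) (right_ne_zero_of_mul hn)]
  exact Nat.le_add_right _ _

theorem cardFactors_four : Ω 4 = 2 :=
  ArithmeticFunction.cardFactors_apply_prime_pow (k := 2) Nat.prime_two

theorem three_le_cardFactors_four_mul {n : ℕ} (hn : 1 < n) : 3 ≤ Ω (4 * n) := by
  have hpos := ArithmeticFunction.cardFactors_pos_iff_one_lt.2 hn
  rw [ArithmeticFunction.cardFactors_mul (by norm_num) (by lia), cardFactors_four]
  lia

theorem three_le_cardFactors_two_pow_add_one_mul {f : ℕ} (hf : 3 ≤ f) :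
    3 ≤ Ω ((2 ^ f + 1) * (2 ^ f - 1)) := by
  have hq : 2 ^ 3 ≤ 2 ^ f := Nat.pow_le_pow_right two_pos hf
  rw [ArithmeticFunction.cardFactors_mul (by lia) (by lia)]
  have hadd : 0 < Ω (2 ^ f + 1) := ArithmeticFunction.cardFactors_pos_iff_one_lt.2 (by lia)
  have hsub : 0 < Ω (2 ^ f - 1) := ArithmeticFunction.cardFactors_pos_iff_one_lt.2 (by lia)
  by_contra! hlt
  have hadd' : (2 ^ f + 1).Prime := ArithmeticFunction.cardFactors_eq_one_iff_prime.1 (by lia)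
  have hsub' : (2 ^ f - 1).Prime := ArithmeticFunction.cardFactors_eq_one_iff_prime.1 (by lia)
  have hthree : ¬ 3 ∣ 2 ^ f := fun h ↦
    absurd (Nat.prime_three.dvd_of_dvd_pow h) (by norm_num)
  -- `3` divides one of the three consecutive numbers `2 ^ f - 1`, `2 ^ f`, `2 ^ f + 1`
  rcases (by lia : 3 ∣ 2 ^ f + 1 ∨ 3 ∣ 2 ^ f - 1) with h | h
  · have := (Nat.prime_dvd_prime_iff_eq Nat.prime_three hadd').1 h
    lia
  · have := (Nat.prime_dvd_prime_iff_eq Nat.prime_three hsub').1 h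
    lia

variable {G : Type} [Group G]

theorem TwoPrimeHypothesis.cardFactors_gcd_le_two (hG : TwoPrimeHypothesis G) {a b : ℕ}
    (ha : a ∈ charDegrees G) (hb : b ∈ charDegrees G) (hab : a ≠ b) : Ω (a.gcd b) ≤ 2 := by
  rw [ArithmeticFunction.cardFactors_apply]
  exact hG a ha b hb hab

variable [Finite G]

theorem ne_zero_of_mem_charDegrees {n : ℕ} (hn : n ∈ charDegrees G) : n ≠ 0 := by
  obtain ⟨V, hV, rfl⟩ := hn
  rw [← charDegree_character]
  exact (isIrredCharacter_character V hV).charDegree_pos.ne'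

theorem TwoPrimeHypothesis.cardFactors_le_two (hG : TwoPrimeHypothesis G) {a b d : ℕ}
    (ha : a ∈ charDegrees G) (hb : b ∈ charDegrees G) (hab : a ≠ b) (hda : d ∣ a) (hdb : d ∣ b) :
    Ω d ≤ 2 :=
  (cardFactors_le_of_dvd (Nat.gcd_ne_zero_left (ne_zero_of_mem_charDegrees ha))
    (Nat.dvd_gcd hda hdb)).trans (hG.cardFactors_gcd_le_two ha hb hab)

theorem TwoPrimeHypothesis.eq_of_dvd (hG : TwoPrimeHypothesis G) {a b d : ℕ} (hd : 3 ≤ Ω d)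
    (ha : a ∈ charDegrees G) (hb : b ∈ charDegrees G) (hda : d ∣ a) (hdb : d ∣ b) : a = b := by
  by_contra hab
  have := hG.cardFactors_le_two ha hb hab hda hdb
  lia

theorem TwoPrimeHypothesis.exists_forall_eq (hG : TwoPrimeHypothesis G) {d : ℕ} (hd : 3 ≤ Ω d) :
    ∃ c, ∀ n ∈ charDegrees G, d ∣ n → n = c := by
  by_cases h : ∃ c ∈ charDegrees G, d ∣ c
  · obtain ⟨c, hc, hdc⟩ := h
    exact ⟨c, fun n hn hdn ↦ hG.eq_of_dvd hd hn hc hdn hdc⟩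
  · push Not at h
    exact ⟨0, fun n hn hdn ↦ absurd hdn (h n hn)⟩

theorem TwoPrimeHypothesis.not_eight_dvd (hG : TwoPrimeHypothesis G) {a f : ℕ} (hf : 3 ≤ f)
    (hq : 2 ^ f ∈ charDegrees G) (ha : a ∈ charDegrees G) (haq : a ≠ 2 ^ f) : ¬ 8 ∣ a := fun h ↦
  haq <| hG.eq_of_dvd (three_le_cardFactors_four_mul one_lt_two) ha hq h
    (pow_dvd_pow 2 hf : 2 ^ 3 ∣ 2 ^ f)

end TwoPrime

theorem two_pow_dvd_two_pow_mul {f k n m : ℕ} (hdvd : 2 ^ f ∣ n * m) (hn : ¬ 2 ^ (k + 1) ∣ n) :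
    2 ^ f ∣ 2 ^ k * m := by
  obtain ⟨i, l, hl, rfl⟩ := Nat.exists_eq_two_pow_mul_odd (n := n) (by rintro rfl; simp at hn)
  have hi : i ≤ k := by
    by_contra! hik
    exact hn (Dvd.dvd.mul_right (pow_dvd_pow 2 hik) l)
  have hcop : Nat.Coprime (2 ^ f) l := Nat.Coprime.pow_left f (Nat.coprime_two_left.2 hl)
  rw [mul_comm (2 ^ i), mul_assoc] at hdvd
  exact (hcop.dvd_of_dvd_mul_left hdvd).trans (mul_dvd_mul_right (pow_dvd_pow 2 hi) m)

/-! ### Images of inertia groups in `SL₂(F)` -/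

namespace SL2

variable {F : Type*} [Field F]

theorem index_torusPart_mul_natCard (H : Subgroup (SL2 F)) :
    (torusPart H).index * Nat.card (torusPart H) = Nat.card F - 1 := by
  rw [Subgroup.index_mul_card, Nat.card_units]

/-- A subgroup of the Borel subgroup meeting the group of upper unitriangular matrices in index
`1` or `2`. -/
structure IsStandard (H : Subgroup (SL2 F)) : Prop where
  le_borel : H ≤ borel F
  index_unipotentPart_dvd : (unipotentPart H).index ∣ 2

variable [Finite F]

theorem index_eq_of_le_borel {H : Subgroup (SL2 F)} (hH : H ≤ borel F) :
    H.index = (unipotentPart H).index * (torusPart H).index * (Nat.card F + 1) := by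
  have hcard := natCard_inf_borel H
  have hsq : Nat.card F ^ 2 - 1 = (Nat.card F + 1) * (Nat.card F - 1) := by
    simpa using Nat.sq_sub_sq (Nat.card F) 1
  have hmul := H.card_mul_index
  rw [inf_eq_left.2 hH] at hcard
  rw [natCard_SL2, hsq, ← index_torusPart_mul_natCard H, hcard] at hmul
  refine Nat.eq_of_mul_eq_mul_left (Nat.mul_pos Nat.card_pos Nat.card_pos) (hmul.trans ?_)
  nth_rw 1 [← (unipotentPart H).card_mul_index]
  ring

theorem natCard_dvd_of_index_dvd {f k a : ℕ} (hF : Nat.card F = 2 ^ f) {H : Subgroup (SL2 F)}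
    (hH : H.index ∣ a) (ha : ¬ 2 ^ (k + 1) ∣ a) : Nat.card F ∣ 2 ^ k * Nat.card H := by
  rw [hF]
  refine two_pow_dvd_two_pow_mul ?_ fun h ↦ ha (h.trans hH)
  rw [mul_comm, H.card_mul_index, natCard_SL2, hF]
  exact dvd_mul_right _ _

theorem exists_isStandard_conj_smul [CharP F 2] (hF : 16 ≤ Nat.card F) {H : Subgroup (SL2 F)}
    (hH : H ≠ ⊤) (hdvd : Nat.card F ∣ 2 * Nat.card H) :
    ∃ x : SL2 F, IsStandard (MulAut.conj x • H) := by
  obtain ⟨x, n, hn, hcard, hle | hsub⟩ := exists_conj_le_borel_or_isSubfieldType hF hH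
    (hdvd.trans (mul_dvd_mul_right (by norm_num) _))
  · refine ⟨x, hle, ?_⟩
    obtain ⟨f, hf⟩ := (isPGroup_unipotent F).exists_card_eq
    rw [natCard_unipotent] at hf
    have hcop : Nat.Coprime (unipotentPart (MulAut.conj x • H)).index n :=
      (hf ▸ Nat.Coprime.pow_left f (Nat.coprime_two_left.2 hn)).coprime_dvd_left
        (AddSubgroup.index_dvd_card _)
    refine hcop.dvd_of_dvd_mul_right (Nat.dvd_of_mul_dvd_mul_left Nat.card_pos
      (?_ : Nat.card (unipotentPart (MulAut.conj x • H)) * _ ∣ _))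
    rwa [AddSubgroup.card_mul_index, mul_left_comm, ← hcard]
  · have hH60 := hsub.natCard
    rw [natCard_conj_smul] at hH60
    rw [hsub.natCard_field, hH60] at hdvd
    norm_num at hdvd

end SL2

namespace SL2Section

variable {F : Type} [Field F] {G : Type} [Group G] {N M : Subgroup G} [M.Normal]
  (S : SL2Section F N M) {T : Subgroup G} {θ χ : G → ℂ}

/-- The image of `T ∩ M` in `SL₂(F)`. -/
def image (T : Subgroup G) : Subgroup (SL2 F) := (T.subgroupOf M).map S.proj

theorem proj_mem_image_iff (hNT : N ≤ T) {m : M} : S.proj m ∈ S.image T ↔ (m : G) ∈ T := by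
  have hker : S.proj.ker ≤ T.subgroupOf M := S.ker_proj.trans_le (Subgroup.comap_mono hNT)
  rw [image, ← Subgroup.mem_comap, Subgroup.comap_map_eq_self hker, Subgroup.mem_subgroupOf]

theorem image_conj (x : SL2 F) (T : Subgroup G) :
    (S.conj x).image T = MulAut.conj x • S.image T :=
  (Subgroup.map_map _ _ _).symm

theorem index_image (hNT : N ≤ T) : (S.image T).index = T.relIndex M :=
  Subgroup.index_map_eq _ S.surjective (S.ker_proj.trans_le (Subgroup.comap_mono hNT))

theorem image_ne_top (hNT : N ≤ T) (hT : ¬ M ≤ T) : S.image T ≠ ⊤ := by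
  rwa [Ne, ← Subgroup.index_eq_one, S.index_image hNT, Subgroup.relIndex_eq_one]

section Degrees

variable [N.Normal] [Finite G] (hθ : IsIrredCharacter N θ) (hχ : IsIrredCharacter ⊤ χ)
  (hχθ : charInner N χ θ ≠ 0)

include hθ hχ hχθ

theorem index_image_dvd_charDegree : (S.image (inertia M θ)).index ∣ charDegree χ := by
  obtain ⟨Y, hY, hχY, hYθ⟩ :=
    hχ.isCharacter.exists_intermediate_constituent S.le le_top hθ.isCharacter hχθ
  refine dvd_trans ?_ (hχ.charDegree_dvd le_top Subgroup.le_normalizer_of_normal hY hχY)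
  rw [S.index_image (hθ.isCharacter.le_inertia S.le),
    hY.charDegree_eq_mul_relIndex S.le Subgroup.le_normalizer_of_normal hθ hYθ]
  exact Dvd.dvd.mul_right (dvd_mul_left _ _) _

variable [Finite F] [CharP F 2] {f : ℕ} (hf : 4 ≤ f) (hF : Nat.card F = 2 ^ f)
  (hG : TwoPrimeHypothesis G) (hχq : charDegree χ ≠ 2 ^ f)

include hf hF hG hχq

theorem natCard_dvd_four_mul_natCard_image :
    Nat.card F ∣ 4 * Nat.card (S.image (inertia M θ)) :=
  SL2.natCard_dvd_of_index_dvd (k := 2) hF (S.index_image_dvd_charDegree hθ hχ hχθ)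
    (hG.not_eight_dvd (by lia) (hF ▸ S.natCard_mem_charDegrees) hχ.charDegree_mem_charDegrees hχq)

variable (hinv : ¬ M ≤ inertia M θ)

include S hinv

theorem two_pow_add_one_dvd_charDegree : 2 ^ f + 1 ∣ charDegree χ := by
  have hq : 2 ^ 4 ≤ Nat.card F := hF ▸ Nat.pow_le_pow_right two_pos hf
  rw [← hF]
  exact (SL2.natCard_add_one_dvd_index hq
    (S.image_ne_top (hθ.isCharacter.le_inertia S.le) hinv)
    (S.natCard_dvd_four_mul_natCard_image hθ hχ hχθ hf hF hG hχq)).trans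
    (S.index_image_dvd_charDegree hθ hχ hχθ)

theorem four_mul_dvd_charDegree (h4 : 4 ∣ charDegree χ) : 4 * (2 ^ f + 1) ∣ charDegree χ := by
  have hodd : Odd (2 ^ f + 1) := (even_two.pow_of_ne_zero (by lia)).add_one
  exact (Nat.Coprime.pow_left 2 (Nat.coprime_two_left.2 hodd)).mul_dvd_of_dvd_of_dvd h4
    (S.two_pow_add_one_dvd_charDegree hθ hχ hχθ hf hF hG hχq hinv)

end Degrees

include S in
theorem exists_isStandard_image [N.Normal] [Finite G] [Finite F] [CharP F 2] {f : ℕ} (hf : 4 ≤ f)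
    (hF : Nat.card F = 2 ^ f) (hθ : IsIrredCharacter N θ) (hχ : IsIrredCharacter ⊤ χ)
    (hχθ : charInner N χ θ ≠ 0) (hinv : ¬ M ≤ inertia M θ) (h4 : ¬ 4 ∣ charDegree χ) :
    ∃ S' : SL2Section F N M, SL2.IsStandard (S'.image (inertia M θ)) := by
  have hq : 2 ^ 4 ≤ Nat.card F := hF ▸ Nat.pow_le_pow_right two_pos hf
  obtain ⟨x, hx⟩ := SL2.exists_isStandard_conj_smul hq
    (S.image_ne_top (hθ.isCharacter.le_inertia S.le) hinv)
    (SL2.natCard_dvd_of_index_dvd (k := 1) hF (S.index_image_dvd_charDegree hθ hχ hχθ) h4)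
  exact ⟨S.conj x, by rwa [image_conj]⟩

end SL2Section

/-! ### Degrees over characters whose inertia group has standard image -/

namespace SL2

variable {F : Type*} [Field F] {H : Subgroup (SL2 F)}

/-- The character of the torus restricted to a subgroup `H` of the Borel subgroup. -/
def torusHom (hH : H ≤ borel F) : H →* torusPart H :=
  ((torusChar F).subgroupMap (H.subgroupOf (borel F))).comp
    (Subgroup.subgroupOfEquivOfLe hH).symm.toMonoidHom

theorem torusHom_surjective (hH : H ≤ borel F) : Function.Surjective (torusHom hH) :=
  ((torusChar F).subgroupMap_surjective _).comp (Subgroup.subgroupOfEquivOfLe hH).symm.surjective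

theorem ker_torusHom (hH : H ≤ borel F) :
    (torusHom hH).ker = (unipotent F).subgroupOf H := by
  ext g
  have hker := SetLike.ext_iff.1 (ker_torusChar (R := F)) ⟨g, hH g.2⟩
  rw [MonoidHom.mem_ker, Subgroup.mem_subgroupOf] at hker ⊢
  exact Subtype.ext_iff.trans hker

/-- Multiplication by `z ^ 2` on the unipotent part of `H`, for `z` in its torus part. -/
def sqMulHom (z : torusPart H) :
    Multiplicative (unipotentPart H) →* Multiplicative (unipotentPart H) :=
  AddMonoidHom.toMultiplicative
    { toFun a := ⟨((z : Fˣ) : F) ^ 2 * (a : F), sq_mul_mem_unipotentPart z.2 a.2⟩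
      map_zero' := Subtype.ext (mul_zero _)
      map_add' a b := Subtype.ext (mul_add _ (a : F) (b : F)) }

theorem sqMulHom_mul_inv_surjective [Finite F] [CharP F 2] {z : torusPart H} (hz : z ≠ 1) :
    Function.Surjective fun a ↦ sqMulHom z a * a⁻¹ := by
  have hz : ((z : Fˣ) : F) ^ 2 - 1 ≠ 0 := fun h ↦
    hz (Subtype.ext (Units.ext (CharTwo.sq_injective (by simpa using sub_eq_zero.1 h))))
  refine Finite.surjective_of_injective fun a b hab ↦ ?_
  have hab : ((z : Fˣ) : F) ^ 2 * (a.toAdd : F) + -a.toAdd = (z : Fˣ) ^ 2 * b.toAdd + -b.toAdd :=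
    congrArg (fun c ↦ ((Multiplicative.toAdd c : unipotentPart H) : F)) hab
  exact Multiplicative.toAdd.injective
    (Subtype.ext (mul_left_cancel₀ hz (by linear_combination hab)))

theorem conj_unipotentPartEquiv (hH : H ≤ borel F) (g : H)
    (a : Multiplicative (unipotentPart H)) :
    (g : SL2 F) * unipotentPartEquiv H a * (g : SL2 F)⁻¹ =
      unipotentPartEquiv H (sqMulHom (torusHom hH g) a) :=
  conj_upper_of_mem_borel (hH g.2) a.toAdd

end SL2

namespace SL2Section

section Preimage

variable {F : Type} [Field F] {G : Type} [Group G] {N M : Subgroup G} [M.Normal]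
  (S : SL2Section F N M)

/-- The subgroup of `M` lying over the subgroup `H` of `SL₂(F)`. -/
def preimage (H : Subgroup (SL2 F)) : Subgroup G := (H.comap S.proj).map M.subtype

variable {S} {H K : Subgroup (SL2 F)}

theorem mem_preimage {g : G} : g ∈ S.preimage H ↔ ∃ hg : g ∈ M, S.proj ⟨g, hg⟩ ∈ H := by
  constructor
  · rintro ⟨m, hm, rfl⟩
    exact ⟨m.2, hm⟩
  · rintro ⟨hg, h⟩
    exact ⟨⟨g, hg⟩, h, rfl⟩

variable (S)

theorem preimage_mono (hHK : H ≤ K) : S.preimage H ≤ S.preimage K :=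
  Subgroup.map_mono (Subgroup.comap_mono hHK)

theorem le_preimage (H : Subgroup (SL2 F)) : N ≤ S.preimage H := fun g hg ↦
  mem_preimage.2 ⟨S.le hg, (S.proj_eq_one_iff.2 hg : S.proj ⟨g, S.le hg⟩ = 1) ▸ H.one_mem⟩

theorem preimage_image {T : Subgroup G} (hNT : N ≤ T) (hTM : T ≤ M) :
    S.preimage (S.image T) = T := by
  ext g
  rw [mem_preimage]
  exact ⟨fun ⟨_, h⟩ ↦ (S.proj_mem_image_iff hNT).1 h,
    fun hg ↦ ⟨hTM hg, (S.proj_mem_image_iff hNT).2 hg⟩⟩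

/-- The restriction of `S.proj` to the group lying over `H`. -/
def preimageHom (H : Subgroup (SL2 F)) : S.preimage H →* H where
  toFun g := ⟨S.proj ⟨g, (mem_preimage.1 g.2).fst⟩, (mem_preimage.1 g.2).snd⟩
  map_one' := Subtype.ext (map_one S.proj)
  map_mul' g h := Subtype.ext (map_mul S.proj ⟨g, (mem_preimage.1 g.2).fst⟩
    ⟨h, (mem_preimage.1 h.2).fst⟩)

theorem preimageHom_surjective (H : Subgroup (SL2 F)) :
    Function.Surjective (S.preimageHom H) := fun h ↦ by
  obtain ⟨m, hm⟩ := S.surjective h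
  exact ⟨⟨m, mem_preimage.2 ⟨m.2, hm ▸ h.2⟩⟩, Subtype.ext hm⟩

theorem ker_preimageHom (H : Subgroup (SL2 F)) :
    (S.preimageHom H).ker = N.subgroupOf (S.preimage H) := by
  ext g
  rw [MonoidHom.mem_ker, Subgroup.mem_subgroupOf, Subtype.ext_iff]
  exact S.proj_eq_one_iff

theorem comap_preimageHom (H K : Subgroup (SL2 F)) :
    (K.subgroupOf H).comap (S.preimageHom H) = (S.preimage K).subgroupOf (S.preimage H) := by
  ext g
  have hg := mem_preimage.1 g.2
  rw [Subgroup.mem_comap, Subgroup.mem_subgroupOf, Subgroup.mem_subgroupOf, mem_preimage]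
  exact ⟨fun h ↦ ⟨hg.fst, h⟩, fun h ↦ h.snd⟩

theorem coe_preimageHom_conj (t : S.preimage H) (x : S.preimage K)
    (hx : (t * x * (t : G)⁻¹ : G) ∈ S.preimage K) :
    (S.preimageHom K ⟨t * x * (t : G)⁻¹, hx⟩ : SL2 F) =
      S.preimageHom H t * S.preimageHom K x * (S.preimageHom H t : SL2 F)⁻¹ := by
  let t' : M := ⟨t, (mem_preimage.1 t.2).fst⟩
  let x' : M := ⟨x, (mem_preimage.1 x.2).fst⟩
  calc S.proj (t' * x' * t'⁻¹) = S.proj t' * S.proj x' * (S.proj t')⁻¹ := by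
        rw [map_mul, map_mul, map_inv]

end Preimage

section Degrees

variable {F : Type} [Field F] [Finite F] [CharP F 2] {G : Type} [Group G] [Finite G]
  {N M : Subgroup G} [M.Normal] (S : SL2Section F N M) {θ χ : G → ℂ}

theorem exists_charDegree_eq_mul_of_preimage {H : Subgroup (SL2 F)} (hH : H ≤ SL2.borel F)
    (hθ : IsIrredCharacter N θ) (hinv : ∀ t ∈ S.preimage H, conjFun t θ = θ) {η : G → ℂ}
    (hη : IsIrredCharacter (S.preimage H) η) (hηθ : charInner N η θ ≠ 0) :
    ∃ e k : ℕ, e ^ 2 ∣ Nat.card (SL2.unipotentPart H) ∧ k ∣ Nat.card (SL2.torusPart H) ∧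
      charDegree η = k * e * charDegree θ ∧
      (e ^ 2 < Nat.card (SL2.unipotentPart H) → ∃ η', IsIrredCharacter (S.preimage H) η' ∧
        charInner N η' θ ≠ 0 ∧ charDegree η' = Nat.card (SL2.torusPart H) * e * charDegree θ) := by
  let K := H ⊓ SL2.unipotent F
  let e := SL2.unipotentPartEquiv H
  let p : S.preimage K →* Multiplicative (SL2.unipotentPart H) :=
    e.symm.toMonoidHom.comp (S.preimageHom K)
  let s := (SL2.torusHom hH).comp (S.preimageHom H)
  have hsker : s.ker = (S.preimage K).subgroupOf (S.preimage H) := by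
    rw [← S.comap_preimageHom H K, Subgroup.inf_subgroupOf_left,
      ← SL2.ker_torusHom hH, MonoidHom.comap_ker]
  refine IsIrredCharacter.exists_charDegree_eq_of_twist (p := p)
    (e.symm.surjective.comp (S.preimageHom_surjective K)) (S.le_preimage K)
    ((MonoidHom.ker_mulEquiv_comp _ e.symm).trans (S.ker_preimageHom K))
    ((SL2.torusHom_surjective hH).comp (S.preimageHom_surjective H))
    (S.preimage_mono inf_le_left) hsker (fun t ht ↦ ⟨SL2.sqMulHom (s ⟨t, ht⟩), ?_, fun htP ↦ ?_⟩)
    hθ hinv hη hηθ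
  · intro x hx
    refine (MulEquiv.symm_apply_eq e).2 (Subtype.ext ?_)
    refine (S.coe_preimageHom_conj ⟨t, ht⟩ x hx).trans ?_
    rw [← e.apply_symm_apply (S.preimageHom K x)]
    exact SL2.conj_unipotentPartEquiv hH _ _
  · refine SL2.sqMulHom_mul_inv_surjective fun hst ↦ htP ?_
    exact (SetLike.ext_iff.1 hsker ⟨t, ht⟩).1 hst

variable [N.Normal]

include S in
theorem exists_dvd_charDegree_eq_mul {f : ℕ} (hF : Nat.card F = 2 ^ f) {Y : G → ℂ}
    (hχ : IsIrredCharacter ⊤ χ) (hY : IsIrredCharacter M Y) (hχY : charInner M χ Y ≠ 0) :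
    ∃ r, r ∣ f ∧ charDegree χ = r * charDegree Y := by
  have := S.isCyclic_quotient
  let _ : CommGroup (G ⧸ M) := IsCyclic.commGroup
  let p : (⊤ : Subgroup G) →* G ⧸ M := (QuotientGroup.mk' M).comp (⊤ : Subgroup G).subtype
  have hp : Function.Surjective p :=
    (QuotientGroup.mk'_surjective M).comp Subgroup.topEquiv.surjective
  have hker : p.ker = M.subgroupOf ⊤ := by
    rw [← MonoidHom.comap_ker, QuotientGroup.ker_mk']
    rfl
  refine ⟨_, dvd_trans ?_ (S.natCard_quotient_dvd hF),
    hχ.charDegree_eq_mul_relIndex le_top Subgroup.le_normalizer_of_normal hY hχY⟩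
  exact (mul_dvd_mul_right (dvd_pow_self _ two_ne_zero) _).trans
    (hχ.charMultiplicity_sq_mul_relIndex_dvd hp le_top hker hY hχY)

theorem exists_dvd_charDegree_eq_mul_index {f : ℕ} (hF : Nat.card F = 2 ^ f) {η Y : G → ℂ}
    (hθ : IsIrredCharacter N θ) (hη : IsIrredCharacter (inertia M θ) η)
    (hηθ : charInner N η θ ≠ 0) (hY : IsIrredCharacter M Y)
    (hYη : charInner (inertia M θ) Y η ≠ 0) (hχ : IsIrredCharacter ⊤ χ)
    (hχY : charInner M χ Y ≠ 0) :
    ∃ r, r ∣ f ∧ charDegree χ = r * ((S.image (inertia M θ)).index * charDegree η) := by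
  rw [S.index_image (hθ.isCharacter.le_inertia S.le),
    ← hY.charDegree_eq_relIndex_mul S.le Subgroup.le_normalizer_of_normal hθ hη hYη hηθ]
  exact S.exists_dvd_charDegree_eq_mul hF hχ hY hχY

theorem exists_charDegree_eq_of_le_borel {f : ℕ} (hF : Nat.card F = 2 ^ f)
    (hθ : IsIrredCharacter N θ) (hχ : IsIrredCharacter ⊤ χ) (hχθ : charInner N χ θ ≠ 0)
    {H : Subgroup (SL2 F)} (hH : S.image (inertia M θ) = H) (hB : H ≤ SL2.borel F) :
    ∃ e k r : ℕ, e ^ 2 ∣ Nat.card (SL2.unipotentPart H) ∧ k ∣ Nat.card (SL2.torusPart H) ∧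
      r ∣ f ∧ charDegree χ = r * (H.index * (k * e * charDegree θ)) ∧
      (e ^ 2 < Nat.card (SL2.unipotentPart H) → ∃ r', r' ∣ f ∧
        r' * (H.index * (Nat.card (SL2.torusPart H) * e * charDegree θ)) ∈ charDegrees G) := by
  have hNT := hθ.isCharacter.le_inertia S.le
  have hpre : S.preimage H = inertia M θ := hH ▸ S.preimage_image hNT (inertia_le M θ)
  obtain ⟨Y, hY, hχY, hYθ⟩ :=
    hχ.isCharacter.exists_intermediate_constituent S.le le_top hθ.isCharacter hχθ
  obtain ⟨η, hη, hYη, hηθ⟩ :=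
    hY.isCharacter.exists_intermediate_constituent hNT (inertia_le M θ) hθ.isCharacter hYθ
  obtain ⟨e, k, he, hk, hdeg, hpartner⟩ := S.exists_charDegree_eq_mul_of_preimage hB hθ
    (fun t ht ↦ (mem_inertia.1 (hpre ▸ ht)).2) (hpre ▸ hη) hηθ
  obtain ⟨r, hr, hχr⟩ := S.exists_dvd_charDegree_eq_mul_index hF hθ hη hηθ hY hYη hχ hχY
  refine ⟨e, k, r, he, hk, hr, by rw [hχr, hH, hdeg], fun hlt ↦ ?_⟩
  obtain ⟨η', hη', hη'θ, hdeg'⟩ := hpartner hlt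
  rw [hpre] at hη'
  obtain ⟨Y', hY', hY'η'⟩ := hη'.exists_irredCharacter_over (inertia_le M θ)
  obtain ⟨χ', hχ', hχ'Y'⟩ := hY'.exists_irredCharacter_over le_top
  obtain ⟨r', hr', hχ'r'⟩ :=
    S.exists_dvd_charDegree_eq_mul_index hF hθ hη' hη'θ hY' hY'η' hχ' hχ'Y'
  exact ⟨r', hr', by rw [← hdeg', ← hH, ← hχ'r']; exact hχ'.charDegree_mem_charDegrees⟩

end Degrees

end SL2Section

/-- The numbers that determine a degree not divisible by `4` over a character of degree `d` whose
inertia group has standard image: `z` and `w` are the order and the index of the torus part of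
the image, `k`, `r` and `r'` are ramification indices, and `s` collects the powers of `2`. -/
structure DegreePair (f : ℕ) where
  (w z k r r' s d : ℕ)
  w_mul_z : w * z = 2 ^ f - 1
  k_dvd : k ∣ z
  r_dvd : r ∣ f
  r'_dvd : r' ∣ f
  s_dvd : s ∣ 2

namespace DegreePair

variable {f : ℕ} (P : DegreePair f)

/-- The degree described by `P`. -/
def degree : ℕ := (2 ^ f + 1) * P.w * P.s * P.k * P.r * P.d

/-- The degree, over the same character of `N`, obtained from a regular orbit of the torus
part. -/
def partner : ℕ := (2 ^ f + 1) * (2 ^ f - 1) * P.s * P.r' * P.d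

end DegreePair

theorem mul_dvd_two_and_sq_lt {f u a e : ℕ} (hf : 4 ≤ f) (hua : u * a = 2 ^ f) (hu : u ∣ 2)
    (he : e ^ 2 ∣ a) (h4 : ¬ 4 ∣ u * e) : u * e ∣ 2 ∧ e ^ 2 < a := by
  have h16 : 2 ^ 4 ≤ u * a := hua ▸ Nat.pow_le_pow_right two_pos hf
  obtain ⟨i, -, hi⟩ := (Nat.dvd_prime_pow Nat.prime_two (m := f)).1
    (hua ▸ mul_dvd_mul_left u ((dvd_pow_self e two_ne_zero).trans he))
  have hi1 : i ≤ 1 := by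
    by_contra! h
    exact h4 (hi ▸ pow_dvd_pow 2 h)
  have hue : u * e ∣ 2 := hi ▸ pow_dvd_pow 2 hi1
  refine ⟨hue, ?_⟩
  have he2 : e ≤ 2 := Nat.le_of_dvd two_pos ((dvd_mul_left e u).trans hue)
  have hu2 := Nat.le_of_dvd two_pos hu
  nlinarith

theorem SL2Section.exists_degreePair {F : Type} [Field F] [Finite F] [CharP F 2] {G : Type}
    [Group G] [Finite G] {N M : Subgroup G} [N.Normal] [M.Normal] (S : SL2Section F N M)
    {θ χ : G → ℂ} {f : ℕ} (hf : 4 ≤ f) (hF : Nat.card F = 2 ^ f) (hθ : IsIrredCharacter N θ)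
    (hχ : IsIrredCharacter ⊤ χ) (hχθ : charInner N χ θ ≠ 0) (h4 : ¬ 4 ∣ charDegree χ)
    (hstd : SL2.IsStandard (S.image (inertia M θ))) :
    ∃ P : DegreePair f, P.d = charDegree θ ∧
      P.z = Nat.card (SL2.torusPart (S.image (inertia M θ))) ∧
      P.degree = charDegree χ ∧ P.partner ∈ charDegrees G := by
  set H := S.image (inertia M θ) with hH
  obtain ⟨e, k, r, he, hk, hr, hdeg, hpartner⟩ :=
    S.exists_charDegree_eq_of_le_borel hF hθ hχ hχθ hH.symm hstd.le_borel
  have hwz := SL2.index_torusPart_mul_natCard H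
  rw [SL2.index_eq_of_le_borel hstd.le_borel, hF] at hdeg hpartner
  have hchar : charDegree χ = (2 ^ f + 1) * (SL2.torusPart H).index *
      ((SL2.unipotentPart H).index * e) * k * r * charDegree θ := by rw [hdeg]; ring
  obtain ⟨hs, hlt⟩ := mul_dvd_two_and_sq_lt hf (hF ▸ (SL2.unipotentPart H).index_mul_card)
    hstd.index_unipotentPart_dvd he fun h ↦ h4 <| by
      rw [hchar]
      exact (((h.mul_left _).mul_right _).mul_right _).mul_right _
  obtain ⟨r', hr', hmem⟩ := hpartner hlt
  let P : DegreePair f := ⟨_, _, k, r, r', _, charDegree θ, hF ▸ hwz, hk, hr, hr', hs⟩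
  refine ⟨P, rfl, rfl, hchar.symm, ?_⟩
  convert hmem using 1
  simp only [DegreePair.partner, P, ← hF, ← hwz]
  ring

/-! ### Inertia groups of linear characters -/

namespace SL2

section CommRing

variable {R : Type*} [CommRing R]

theorem weyl_conj_lower (a : R) : weyl * lower a * weyl⁻¹ = upper (-a) := by
  apply ext_entries <;>
    simp [SL2.mul_apply, inv_apply_zero_zero, inv_apply_zero_one, inv_apply_one_zero,
      inv_apply_one_one, -Matrix.SpecialLinearGroup.coe_mul, -Matrix.SpecialLinearGroup.coe_inv]

theorem weyl_conj_diag (z : Rˣ) : weyl * diag z * weyl⁻¹ = diag z⁻¹ := by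
  apply ext_entries <;>
    simp [SL2.mul_apply, inv_apply_zero_zero, inv_apply_zero_one, inv_apply_one_zero,
      inv_apply_one_one, -Matrix.SpecialLinearGroup.coe_mul, -Matrix.SpecialLinearGroup.coe_inv]

theorem lower_zero : lower (0 : R) = 1 := by
  apply ext_entries <;> simp

theorem diag_one : diag (1 : Rˣ) = 1 := by
  apply ext_entries <;> simp

theorem diag_mul (y z : Rˣ) : diag y * diag z = diag (y * z) := by
  apply ext_entries <;>
    simp [SL2.mul_apply, -Matrix.SpecialLinearGroup.coe_mul, mul_comm]

theorem diag_pow_three (z : Rˣ) : diag z ^ 3 = diag (z ^ 3) := by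
  rw [pow_three, pow_three, diag_mul, diag_mul]

theorem weyl_mul_weyl [CharP R 2] : (weyl * weyl : SL2 R) = 1 := by
  apply ext_entries <;>
    simp [SL2.mul_apply, -Matrix.SpecialLinearGroup.coe_mul, CharTwo.neg_eq]

theorem diag_mem_of_unipotentPart_eq_top {H : Subgroup (SL2 R)} (hH : unipotentPart H = ⊤)
    {z : Rˣ} (hz : z ∈ torusPart H) : diag z ∈ H := by
  obtain ⟨g, hg, rfl⟩ := hz
  have hu : upper (g.1 0 1 * g.1 0 0) ∈ H := mem_unipotentPart.1 (hH ▸ AddSubgroup.mem_top _)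
  rw [← H.mul_mem_cancel_left hu, upper_mul_diag_torusChar]
  exact hg

end CommRing

section CharTwo

variable {F : Type*} [Field F] [CharP F 2] {x : SL2 F} {α : Fˣ}

-- A diagonal matrix other than `1` fixes only the two coordinate lines.
theorem apply_one_eq_zero_of_conj_diag_mem_borel (hα : α ≠ 1)
    (h : x * diag α * x⁻¹ ∈ borel F) : x 1 0 = 0 ∨ x 1 1 = 0 := by
  have hα' : (α : F) - ((α⁻¹ : Fˣ) : F) ≠ 0 := fun h₀ ↦ hα <| Units.ext <|
    CharTwo.sq_inj.1 <| by
      rw [sq, Units.val_one, one_pow]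
      nth_rw 2 [sub_eq_zero.1 h₀]
      exact α.mul_inv
  rw [mem_borel] at h
  simp only [SL2.mul_apply, inv_apply_zero_zero, inv_apply_one_zero, diag_apply_zero_zero,
    diag_apply_zero_one, diag_apply_one_zero, diag_apply_one_one] at h
  exact mul_eq_zero.1 (mul_right_cancel₀ hα' (by linear_combination h))

theorem conj_weyl_notMem_borel (hα : α ≠ 1) (h : x * diag α * x⁻¹ ∈ borel F) :
    x * weyl * x⁻¹ ∉ borel F := fun hw ↦ by
  have hdet := det_entries x
  rw [mem_borel] at hw
  simp only [SL2.mul_apply, inv_apply_zero_zero, inv_apply_one_zero, weyl_apply_zero_zero,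
    weyl_apply_zero_one, weyl_apply_one_zero, weyl_apply_one_one] at hw
  rcases apply_one_eq_zero_of_conj_diag_mem_borel hα h with h₀ | h₀ <;> simp_all

theorem conj_upper_eq_upper_or_lower (hα : α ≠ 1) (h : x⁻¹ * diag α * x ∈ borel F) (a : F) :
    (∃ b, x * upper a * x⁻¹ = upper b) ∨ ∃ b, x * upper a * x⁻¹ = lower b := by
  rw [← inv_inv x, inv_inv x⁻¹] at h
  rcases apply_one_eq_zero_of_conj_diag_mem_borel hα h with h₀ | h₀
  · rw [inv_apply_one_zero, neg_eq_zero] at h₀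
    exact .inl ⟨_, conj_upper_of_mem_borel h₀ a⟩
  · rw [inv_apply_one_one] at h₀
    have hB : weyl⁻¹ * x ∈ borel F := by
      simp [mem_borel, SL2.mul_apply, inv_apply_one_zero, inv_apply_one_one, h₀,
        -Matrix.SpecialLinearGroup.coe_mul, -Matrix.SpecialLinearGroup.coe_inv]
    refine .inr ⟨-((weyl⁻¹ * x : SL2 F) 0 0 ^ 2 * a), ?_⟩
    rw [← weyl_conj_upper, ← conj_upper_of_mem_borel hB a]
    group

variable {K : Subgroup (SL2 F)}

theorem two_dvd_natCard_of_weyl_mem (hw : weyl ∈ K) : 2 ∣ Nat.card K := by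
  have hord : orderOf (⟨weyl, hw⟩ : K) = 2 :=
    orderOf_eq_prime (by rw [sq]; exact Subtype.ext weyl_mul_weyl) fun h ↦ by
      simpa using congrArg (fun g : K ↦ (g : SL2 F) 0 0) h
  exact hord.symm.dvd.trans (orderOf_dvd_natCard _)

variable [Finite F]

omit [CharP F 2] in
theorem natCard_le_of_unipotentPart_eq_bot (hK : unipotentPart K = ⊥) :
    Nat.card K ≤ Nat.card F ^ 2 - 1 := by
  have hdisj : Disjoint K (unipotent F) := Subgroup.disjoint_def.2 <| by
    rintro _ haK ⟨a, rfl⟩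
    have ha : a ∈ unipotentPart K := mem_unipotentPart.2 haK
    rw [hK, AddSubgroup.mem_bot] at ha
    simp [ha, upper_zero]
  refine Nat.le_of_mul_le_mul_right ?_ (Nat.card_pos (α := F))
  rw [mul_comm (_ - 1), ← natCard_SL2 F, ← natCard_unipotent F, ← Nat.card_prod]
  exact Nat.card_le_card_of_injective _ (Subgroup.mul_injective_of_disjoint hdisj)

theorem not_index_dvd_natCard (hw : weyl ∈ K) (hK : unipotentPart K = ⊥) :
    ¬ K.index ∣ Nat.card F := fun hdvd ↦ by
  have hq : 0 < Nat.card F := Nat.card_pos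
  have hq₂ : 2 ∣ Nat.card F := by
    have := Fintype.ofFinite F
    rw [Nat.card_eq_fintype_card, ← CharP.cast_eq_zero_iff F 2]
    exact Nat.cast_card_eq_zero F
  have hcop : (Nat.card F).Coprime (Nat.card F ^ 2 - 1) := by
    refine Nat.Coprime.coprime_dvd_left (dvd_pow_self _ two_ne_zero) ?_
    obtain ⟨n, hn⟩ := Nat.exists_eq_add_one_of_ne_zero (pow_pos hq 2).ne'
    simp [hn]
  have hmul : Nat.card K * K.index = Nat.card F * (Nat.card F ^ 2 - 1) :=
    K.card_mul_index.trans (natCard_SL2 F)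
  have hdvdK : Nat.card F ^ 2 - 1 ∣ Nat.card K :=
    (hcop.coprime_dvd_left hdvd).symm.dvd_of_dvd_mul_right (hmul ▸ dvd_mul_left _ _)
  have h₂dvd : 2 * (Nat.card F ^ 2 - 1) ∣ Nat.card K :=
    (hcop.coprime_dvd_left hq₂).mul_dvd_of_dvd_of_dvd (two_dvd_natCard_of_weyl_mem hw) hdvdK
  have hle := (Nat.le_of_dvd Nat.card_pos h₂dvd).trans (natCard_le_of_unipotentPart_eq_bot hK)
  have : 2 ^ 2 ≤ Nat.card F ^ 2 := Nat.pow_le_pow_left (Nat.le_of_dvd hq hq₂) 2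
  lia

theorem isSubfieldType_of_diag_mem (hF : 16 ≤ Nat.card F) (hdvd : Nat.card F ∣ 4 * Nat.card K)
    (hw : weyl ∈ K) (hK : unipotentPart K = ⊥) (hα : α ≠ 1) (hαK : diag α ∈ K) :
    ∃ x : SL2 F, IsSubfieldType (MulAut.conj x • K) := by
  have hne : K ≠ ⊤ := by
    rintro rfl
    exact bot_ne_top (hK.symm.trans (unipotentPart_eq_top le_top))
  obtain ⟨x, -, -, -, hB | hS⟩ := exists_conj_le_borel_or_isSubfieldType hF hne hdvd
  · exact absurd (hB (conj_mem_conj_smul_iff.2 hw))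
      (conj_weyl_notMem_borel hα (hB (conj_mem_conj_smul_iff.2 hαK)))
  · exact ⟨x, hS⟩

theorem IsSubfieldType.pow_three_ne_one (hS : IsSubfieldType (MulAut.conj x • K))
    (hw : weyl ∈ K) (hK : unipotentPart K = ⊥) (hα : α ≠ 1) (hαK : diag α ∈ K) :
    α ^ 3 ≠ 1 := fun hα₃ ↦ by
  have hU {b : F} (hb : upper b ∈ K) : b = 0 :=
    AddSubgroup.mem_bot.1 (hK ▸ mem_unipotentPart.2 hb)
  have hone {y : SL2 F} {a : F} (h : y * upper a * y⁻¹ = 1) : a = 0 :=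
    upper_injective (by rwa [conj_eq_one_iff, ← upper_zero] at h)
  obtain ⟨y, a, ha, hyB, hyK⟩ := hS.exists_transvection hαK
    (by rw [diag_pow_three, hα₃, diag_one])
  rcases conj_upper_eq_upper_or_lower hα hyB a with ⟨b, hb⟩ | ⟨b, hb⟩ <;> rw [hb] at hyK
  · exact ha (hone (by rw [hb, hU hyK, upper_zero]))
  · have hupper := K.mul_mem (K.mul_mem hw hyK) (K.inv_mem hw)
    rw [weyl_conj_lower] at hupper
    exact ha (hone (by rw [hb, neg_eq_zero.1 (hU hupper), lower_zero]))

theorem natCard_eq_five_of_diag_mem (hF : 16 ≤ Nat.card F) (hdvd : Nat.card F ∣ 4 * Nat.card K)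
    (hw : weyl ∈ K) (hK : unipotentPart K = ⊥) {T : Subgroup Fˣ} (hT : T ≠ ⊥)
    (hTK : ∀ α ∈ T, diag α ∈ K) : Nat.card F = 16 ∧ Nat.card T = 5 := by
  obtain ⟨⟨α, hαT⟩, hα⟩ := Subgroup.ne_bot_iff_exists_ne_one.1 hT
  obtain ⟨x, hS⟩ := isSubfieldType_of_diag_mem hF hdvd hw hK (fun h ↦ hα (Subtype.ext h))
    (hTK α hαT)
  refine ⟨hS.natCard_field, ?_⟩
  have h3 : ¬ 3 ∣ Nat.card T := fun h ↦ by
    have := Fact.mk Nat.prime_three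
    obtain ⟨⟨β, hβT⟩, hβ⟩ := exists_prime_orderOf_dvd_card' 3 h
    rw [Subgroup.orderOf_mk] at hβ
    exact hS.pow_three_ne_one hw hK (by rintro rfl; simp at hβ) (hTK β hβT)
      (hβ ▸ pow_orderOf_eq_one β)
  have h15 : Nat.card T ∣ 15 := by
    have := T.card_subgroup_dvd_card
    rwa [Nat.card_units, hS.natCard_field] at this
  have h1 : Nat.card T ≠ 1 := mt Subgroup.card_eq_one.1 hT
  have hle := Nat.le_of_dvd (by norm_num) h15
  interval_cases Nat.card T <;> lia

end CharTwo

end SL2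

section

variable {G : Type} [Group G] {N M : Subgroup G} {θ ψ : G → ℂ}

theorem conjFun_mul (k : G) (θ ψ : G → ℂ) : conjFun k (θ * ψ) = conjFun k θ * conjFun k ψ := rfl

theorem mem_inertia_conjFun {ω m : G} (hω : ω ∈ M) :
    m ∈ inertia M (conjFun ω ψ) ↔ ω * m * ω⁻¹ ∈ inertia M ψ := by
  have hinj {φ φ' : G → ℂ} : conjFun ω φ = conjFun ω φ' ↔ φ = φ' :=
    ⟨fun h ↦ by simpa [conjFun_conjFun] using congrArg (conjFun ω⁻¹) h, congrArg _⟩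
  rw [mem_inertia, mem_inertia, M.mul_mem_cancel_right (M.inv_mem hω), M.mul_mem_cancel_left hω,
    ← hinj (φ := conjFun (ω * m * ω⁻¹) ψ), conjFun_conjFun, conjFun_conjFun, inv_mul_cancel_right]

theorem IsIrredCharacter.apply_one_eq_one (hθ : IsIrredCharacter N θ) (hd : charDegree θ = 1) :
    θ 1 = 1 := by
  rw [← hθ.isCharacter.natCast_charDegree, hd, Nat.cast_one]

theorem IsIrredCharacter.apply_ne_zero (hθ : IsIrredCharacter N θ) (hd : charDegree θ = 1) {x : G}
    (hx : x ∈ N) : θ x ≠ 0 := fun h ↦ by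
  have hone := hθ.apply_one_eq_one hd
  have hmul := hθ.isCharacter.apply_mul_of_apply_one_eq_one hone x hx x⁻¹ (N.inv_mem hx)
  rw [mul_inv_cancel, hone, h, zero_mul] at hmul
  exact one_ne_zero hmul

theorem IsIrredCharacter.mul [Finite G] (hθ : IsIrredCharacter N θ) (hψ : IsIrredCharacter N ψ)
    (hdθ : charDegree θ = 1) (hdψ : charDegree ψ = 1) : IsIrredCharacter N (θ * ψ) := by
  have hθ₁ := hθ.apply_one_eq_one hdθ
  have hψ₁ := hψ.apply_one_eq_one hdψ
  refine isIrredCharacter_of_map_mul (by simp [hθ₁, hψ₁])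
    (fun x hx ↦ by simp [hθ.isCharacter.eq_zero hx]) fun x hx y hy ↦ ?_
  simp only [Pi.mul_apply, hθ.isCharacter.apply_mul_of_apply_one_eq_one hθ₁ x hx y hy,
    hψ.isCharacter.apply_mul_of_apply_one_eq_one hψ₁ x hx y hy]
  ring

theorem mem_inertia_mul_iff [N.Normal] (hθ : ∀ x ∈ N, θ x ≠ 0) (hψ : IsCharacter N ψ) {m : G}
    (hm : m ∈ inertia M θ) : m ∈ inertia M (θ * ψ) ↔ m ∈ inertia M ψ := by
  simp only [mem_inertia, conjFun_mul, hm.2]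
  refine and_congr_right fun _ ↦ ⟨fun h ↦ funext fun x ↦ ?_, fun h ↦ by rw [h]⟩
  by_cases hx : x ∈ N
  · exact mul_left_cancel₀ (hθ x hx) (congrFun h x)
  · rw [hψ.eq_zero hx,
      (hψ.conj (Subgroup.le_normalizer_of_normal (Subgroup.mem_top m))).eq_zero hx]

end

namespace SL2Section

variable {F : Type} [Field F] [CharP F 2] {G : Type} [Group G] [Finite G] {N M : Subgroup G}
  [N.Normal] [M.Normal] {θ : G → ℂ}

-- The twist is `θ` times its conjugate by a preimage of `weyl`.
theorem exists_weyl_mem_image_inertia (S : SL2Section F N M) (hθ : IsIrredCharacter N θ)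
    (hd : charDegree θ = 1) : ∃ μ, IsIrredCharacter N μ ∧ SL2.weyl ∈ S.image (inertia M μ) ∧
      ∀ g ∈ S.image (inertia M θ), g ∈ S.image (inertia M μ) ↔
        SL2.weyl * g * SL2.weyl⁻¹ ∈ S.image (inertia M θ) := by
  obtain ⟨ω, hω⟩ := S.surjective SL2.weyl
  have hψ : IsIrredCharacter N (conjFun (ω : G) θ) :=
    hθ.conj (Subgroup.le_normalizer_of_normal (Subgroup.mem_top _))
  have hμ := hθ.mul hψ hd (by rw [charDegree, conjFun_apply]; simpa [charDegree] using hd)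
  have hmem {φ : G → ℂ} (hφ : IsIrredCharacter N φ) {m : M} :
      S.proj m ∈ S.image (inertia M φ) ↔ (m : G) ∈ inertia M φ :=
    S.proj_mem_image_iff (hφ.isCharacter.le_inertia S.le)
  refine ⟨_, hμ, ?_, fun g hg ↦ ?_⟩
  · have hsq : (ω * ω : G) ∈ N :=
      S.proj_eq_one_iff (m := ω * ω).1 (by rw [map_mul, hω, SL2.weyl_mul_weyl])
    rw [← hω, hmem hμ, mem_inertia, conjFun_mul, conjFun_conjFun,
      (hθ.isCharacter.le_inertia S.le hsq).2, mul_comm]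
    exact ⟨ω.2, rfl⟩
  · obtain ⟨m, rfl⟩ := S.surjective g
    rw [← hω, ← map_inv, ← map_mul, ← map_mul, hmem hμ, hmem hθ,
      mem_inertia_mul_iff (fun _ ↦ hθ.apply_ne_zero hd) hψ.isCharacter ((hmem hθ).1 hg)]
    exact mem_inertia_conjFun ω.2

theorem exists_unipotentPart_image_inertia_eq_bot (S : SL2Section F N M)
    (hθ : IsIrredCharacter N θ) (hd : charDegree θ = 1)
    (hH : S.image (inertia M θ) ≤ SL2.borel F)
    (hU : SL2.unipotentPart (S.image (inertia M θ)) = ⊤) :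
    ∃ μ, IsIrredCharacter N μ ∧ SL2.weyl ∈ S.image (inertia M μ) ∧
      SL2.unipotentPart (S.image (inertia M μ)) = ⊥ ∧
      ∀ α ∈ SL2.torusPart (S.image (inertia M θ)), SL2.diag α ∈ S.image (inertia M μ) := by
  obtain ⟨μ, hμ, hw, hiff⟩ := S.exists_weyl_mem_image_inertia hθ hd
  refine ⟨μ, hμ, hw, (AddSubgroup.eq_bot_iff_forall _).2 fun a ha ↦ ?_, fun α hα ↦ ?_⟩
  · have hUa := SL2.mem_unipotentPart.1 (hU ▸ AddSubgroup.mem_top a)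
    have hB := hH ((hiff _ hUa).1 (SL2.mem_unipotentPart.1 ha))
    simpa [SL2.weyl_conj_upper, SL2.mem_borel] using hB
  · rw [hiff _ (SL2.diag_mem_of_unipotentPart_eq_top hU hα), SL2.weyl_conj_diag]
    exact SL2.diag_mem_of_unipotentPart_eq_top hU (inv_mem hα)

theorem eq_four_and_natCard_torusPart_eq_five [Finite F] (S : SL2Section F N M) {f : ℕ}
    (hf : 4 ≤ f) (hF : Nat.card F = 2 ^ f) (hG : TwoPrimeHypothesis G)
    (hθ : IsIrredCharacter N θ) (hd : charDegree θ = 1)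
    (hstd : SL2.IsStandard (S.image (inertia M θ)))
    (hz : Nat.card (SL2.torusPart (S.image (inertia M θ))) ≠ 1) :
    f = 4 ∧ Nat.card (SL2.torusPart (S.image (inertia M θ))) = 5 := by
  have hT : SL2.torusPart (S.image (inertia M θ)) ≠ ⊥ := mt Subgroup.card_eq_one.2 hz
  have hU : SL2.unipotentPart (S.image (inertia M θ)) = ⊤ := by
    rcases (Nat.dvd_prime Nat.prime_two).1 hstd.index_unipotentPart_dvd with h | h
    · exact AddSubgroup.index_eq_one.1 h
    · exact absurd (SL2.torusPart_eq_bot_of_index_eq_two h) hT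
  obtain ⟨μ, hμ, hw, hbot, hdiag⟩ :=
    S.exists_unipotentPart_image_inertia_eq_bot hθ hd hstd.le_borel hU
  obtain ⟨χ, hχ, hχμ⟩ := hμ.exists_irredCharacter_over le_top
  have hχq : charDegree χ ≠ 2 ^ f := fun h ↦ SL2.not_index_dvd_natCard hw hbot <| by
    rw [hF, ← h]
    exact S.index_image_dvd_charDegree hμ hχ hχμ
  obtain ⟨h16, h5⟩ := SL2.natCard_eq_five_of_diag_mem (hF ▸ Nat.pow_le_pow_right two_pos hf)
    (S.natCard_dvd_four_mul_natCard_image hμ hχ hχμ hf hF hG hχq) hw hbot hT hdiag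
  exact ⟨Nat.pow_right_injective le_rfl (hF.symm.trans h16), h5⟩

end SL2Section

/-! ### Counting the degrees -/

section Arithmetic

open scoped ArithmeticFunction.Omega

theorem mul_two_pow_eq_or_eq {m i : ℕ} (h4 : ¬ 4 ∣ m * 2 ^ i) :
    m * 2 ^ i = m ∨ m * 2 ^ i = 2 * m := by
  match i with
  | 0 => exact .inl (mul_one m)
  | 1 => exact .inr (mul_comm m 2)
  | i + 2 => exact absurd ((Dvd.intro_left (2 ^ i) (pow_add 2 i 2).symm).mul_left m) h4

theorem exists_mul_eq_two_pow {m r s : ℕ} (hr : r ∣ 2 ^ m) (hs : s ∣ 2) : ∃ i, s * r = 2 ^ i := by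
  obtain ⟨i, -, hi⟩ := (Nat.dvd_prime_pow Nat.prime_two).1 (pow_succ' 2 m ▸ mul_dvd_mul hs hr)
  exact ⟨i, hi⟩

/-- The degrees not divisible by `4` over non-invariant characters that can differ from their
partner degree `c`, in terms of the odd part `R` of `c / (4 ^ f - 1)`. -/
def exceptionalDegrees (f R : ℕ) : Finset ℕ :=
  if R = 1 then {2 * (2 ^ f + 1), 51, 102} else {(2 ^ f + 1) * R, 2 * ((2 ^ f + 1) * R)}

theorem card_exceptionalDegrees_le (f R : ℕ) : (exceptionalDegrees f R).card ≤ 3 := by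
  unfold exceptionalDegrees
  split_ifs
  · exact Finset.card_le_three
  · exact Finset.card_le_two.trans (Nat.le_succ 2)

namespace DegreePair

variable {f m : ℕ} (P : DegreePair f)

theorem dvd_partner : (2 ^ f + 1) * (2 ^ f - 1) ∣ P.partner := by
  rw [partner, mul_assoc, mul_assoc]
  exact dvd_mul_right _ _

theorem exists_degree_eq (hfm : f = 2 ^ m) (hk : P.k = 1) :
    ∃ i, P.degree = (2 ^ f + 1) * P.w * P.d * 2 ^ i := by
  obtain ⟨i, hi⟩ := exists_mul_eq_two_pow (P.r_dvd.trans hfm.dvd) P.s_dvd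
  exact ⟨i, by rw [degree, hk, ← hi]; ring⟩

theorem ordCompl_partner_div (hfm : f = 2 ^ m) :
    ordCompl[2] (P.partner / ((2 ^ f + 1) * (2 ^ f - 1))) = ordCompl[2] P.d := by
  obtain ⟨i, hi⟩ := exists_mul_eq_two_pow (P.r'_dvd.trans hfm.dvd) P.s_dvd
  have hpos : 0 < 2 ^ f - 1 :=
    Nat.sub_pos_of_lt (Nat.one_lt_two_pow (hfm ▸ pow_ne_zero m two_ne_zero))
  rw [partner, mul_assoc, mul_assoc, Nat.mul_div_cancel_left _ (by positivity), ← mul_assoc, hi,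
    Nat.ordCompl_self_pow_mul _ _ Nat.prime_two]

section CardFactors

variable (h₀ : P.degree ≠ 0) (hgcd : Ω (P.degree.gcd P.partner) ≤ 2)

include h₀ hgcd

theorem cardFactors_le_two {n : ℕ} (hn : n ∣ P.degree) (hn' : n ∣ P.partner) : Ω n ≤ 2 :=
  (cardFactors_le_of_dvd (Nat.gcd_ne_zero_left h₀) (Nat.dvd_gcd hn hn')).trans hgcd

theorem z_ne_one (hf : 3 ≤ f) : P.z ≠ 1 := fun hz ↦ by
  have hw := P.w_mul_z
  rw [hz, mul_one] at hw
  have hdvd : (2 ^ f + 1) * (2 ^ f - 1) ∣ P.degree :=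
    ⟨P.s * P.k * P.r * P.d, by rw [degree, hw]; ring⟩
  have := P.cardFactors_le_two h₀ hgcd hdvd P.dvd_partner
  have := three_le_cardFactors_two_pow_add_one_mul hf
  lia

theorem cardFactors_add_le_two : Ω (2 ^ f + 1) + Ω P.w + Ω P.k + Ω P.d ≤ 2 := by
  obtain ⟨l, hl⟩ := P.k_dvd
  have hle := P.cardFactors_le_two (n := (2 ^ f + 1) * P.w * P.k * P.d) h₀ hgcd
    ⟨P.s * P.r, by rw [degree]; ring⟩
    ⟨l * P.s * P.r', by rw [partner, ← P.w_mul_z, hl]; ring⟩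
  simp only [degree, mul_ne_zero_iff] at h₀
  obtain ⟨⟨⟨⟨⟨hq, hw⟩, -⟩, hk⟩, -⟩, hd⟩ := h₀
  rwa [ArithmeticFunction.cardFactors_mul (by positivity) hd,
    ArithmeticFunction.cardFactors_mul (by positivity) hk,
    ArithmeticFunction.cardFactors_mul hq hw] at hle

theorem eq_one_and_prime_of_d_ne_one (hd : P.d ≠ 1) :
    P.w = 1 ∧ P.k = 1 ∧ (2 ^ f + 1).Prime ∧ P.d.Prime := by
  have hsum := P.cardFactors_add_le_two h₀ hgcd
  simp only [degree, mul_ne_zero_iff] at h₀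
  obtain ⟨⟨⟨⟨⟨-, hw⟩, -⟩, hk⟩, -⟩, hd₀⟩ := h₀
  have hΩd : 0 < Ω P.d := ArithmeticFunction.cardFactors_pos_iff_one_lt.2 (by lia)
  have hΩq : 0 < Ω (2 ^ f + 1) :=
    ArithmeticFunction.cardFactors_pos_iff_one_lt.2 (Nat.lt_add_of_pos_left (by positivity))
  have eq_one {n : ℕ} (hn₀ : n ≠ 0) (hn : Ω n = 0) : n = 1 :=
    (ArithmeticFunction.cardFactors_eq_zero_iff_eq_zero_or_one.1 hn).resolve_left hn₀
  exact ⟨eq_one hw (by lia), eq_one hk (by lia),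
    ArithmeticFunction.cardFactors_eq_one_iff_prime.1 (by lia),
    ArithmeticFunction.cardFactors_eq_one_iff_prime.1 (by lia)⟩

variable (h4 : ¬ 4 ∣ P.degree)

include h4

theorem degree_mem_of_d_ne_one (hf : f ≠ 0) (hd : P.d ≠ 1) : P.degree ∈
    exceptionalDegrees f (ordCompl[2] (P.partner / ((2 ^ f + 1) * (2 ^ f - 1)))) := by
  obtain ⟨hw, hk, hq, hdp⟩ := P.eq_one_and_prime_of_d_ne_one h₀ hgcd hd
  obtain ⟨m, hm⟩ := Nat.pow_of_pow_add_prime one_lt_two hf hq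
  obtain ⟨i, hi⟩ := P.exists_degree_eq hm hk
  rw [hw, mul_one] at hi
  rw [P.ordCompl_partner_div hm]
  rw [hi] at h4 ⊢
  rcases hdp.eq_two_or_odd' with h2 | hodd
  · rw [h2] at h4 ⊢
    have hone : ordCompl[2] 2 = 1 := Nat.ordCompl_self_pow (k := 1) Nat.prime_two
    rw [hone, (mul_two_pow_eq_or_eq h4).resolve_right fun h ↦ h4 ⟨2 ^ f + 1, by rw [h]; ring⟩]
    simp [exceptionalDegrees, mul_comm]
  · rw [(Nat.ordCompl_eq_self_iff_zero_or_not_dvd P.d Nat.prime_two).2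
      (.inr hodd.not_two_dvd_nat), exceptionalDegrees, if_neg hd]
    simpa using mul_two_pow_eq_or_eq h4

theorem degree_mem_of_d_eq_one (hd : P.d = 1) (hf : f = 4) (hz : P.z = 5) : P.degree ∈
    exceptionalDegrees f (ordCompl[2] (P.partner / ((2 ^ f + 1) * (2 ^ f - 1)))) := by
  subst hf
  have hw : P.w = 3 := by
    have := P.w_mul_z
    rw [hz] at this
    lia
  have hk : P.k = 1 := by
    refine ((Nat.dvd_prime Nat.prime_five).1 (hz ▸ P.k_dvd)).resolve_right fun hk ↦ ?_
    have hsum := P.cardFactors_add_le_two h₀ hgcd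
    rw [hw, hk, ArithmeticFunction.cardFactors_apply_prime (p := 2 ^ 4 + 1) (by norm_num),
      ArithmeticFunction.cardFactors_apply_prime Nat.prime_three,
      ArithmeticFunction.cardFactors_apply_prime Nat.prime_five] at hsum
    lia
  have hm : 4 = 2 ^ 2 := rfl
  obtain ⟨i, hi⟩ := P.exists_degree_eq hm hk
  have hdeg : P.degree = 51 * 2 ^ i := by rw [hi, hw, hd]; norm_num
  rw [hdeg] at h4
  rw [P.ordCompl_partner_div hm, hd, hdeg]
  rcases mul_two_pow_eq_or_eq h4 with h | h <;> simp [h, exceptionalDegrees]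

theorem degree_mem_exceptionalDegrees (hf : 3 ≤ f)
    (hlin : P.d = 1 → P.z ≠ 1 → f = 4 ∧ P.z = 5) : P.degree ∈
      exceptionalDegrees f (ordCompl[2] (P.partner / ((2 ^ f + 1) * (2 ^ f - 1)))) := by
  by_cases hd : P.d = 1
  · obtain ⟨hf4, hz⟩ := hlin hd (P.z_ne_one h₀ hgcd hf)
    exact P.degree_mem_of_d_eq_one h₀ hgcd h4 hd hf4 hz
  · exact P.degree_mem_of_d_ne_one h₀ hgcd h4 (by lia) hd

end CardFactors

end DegreePair

end Arithmetic

namespace SL2Section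

variable {F : Type} [Field F] [Finite F] [CharP F 2] {G : Type} [Group G] [Finite G]
  {N M : Subgroup G} [N.Normal] [M.Normal] (S : SL2Section F N M) {f : ℕ} (hf : 4 ≤ f)
  (hF : Nat.card F = 2 ^ f) (hG : TwoPrimeHypothesis G)

include S hf hF hG

theorem charDegree_mem_of_not_four_dvd {θ χ : G → ℂ} (hθ : IsIrredCharacter N θ)
    (hχ : IsIrredCharacter ⊤ χ) (hχθ : charInner N χ θ ≠ 0) (hinv : ¬ M ≤ inertia M θ)
    (h4 : ¬ 4 ∣ charDegree χ) {c : ℕ}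
    (hc : ∀ n ∈ charDegrees G, (2 ^ f + 1) * (2 ^ f - 1) ∣ n → n = c) :
    charDegree χ = c ∨ charDegree χ ∈
      exceptionalDegrees f (ordCompl[2] (c / ((2 ^ f + 1) * (2 ^ f - 1)))) := by
  obtain ⟨S', hstd⟩ := S.exists_isStandard_image hf hF hθ hχ hχθ hinv h4
  obtain ⟨P, hd, hz, hdeg, hpartner⟩ := S'.exists_degreePair hf hF hθ hχ hχθ h4 hstd
  have hmem := hχ.charDegree_mem_charDegrees
  rw [← hdeg] at hmem h4 ⊢
  obtain rfl := hc _ hpartner P.dvd_partner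
  refine or_iff_not_imp_left.2 fun hne ↦ P.degree_mem_exceptionalDegrees
    (ne_zero_of_mem_charDegrees hmem) (hG.cardFactors_gcd_le_two hmem hpartner hne) h4
    (by lia) fun hd₁ hz₁ ↦ ?_
  rw [hz] at hz₁ ⊢
  exact S'.eq_four_and_natCard_torusPart_eq_five hf hF hG hθ (hd ▸ hd₁) hstd hz₁

theorem exists_finset_charDegree_mem : ∃ D : Finset ℕ, D.card ≤ 5 ∧ ∀ θ χ : G → ℂ,
    IsIrredCharacter N θ → IsIrredCharacter ⊤ χ → charInner N χ θ ≠ 0 → ¬ M ≤ inertia M θ →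
      charDegree χ ≠ 2 ^ f → charDegree χ ∈ D := by
  obtain ⟨c₁, hc₁⟩ := hG.exists_forall_eq
    (three_le_cardFactors_four_mul (Nat.lt_add_of_pos_left (pow_pos two_pos f)))
  obtain ⟨c₂, hc₂⟩ := hG.exists_forall_eq
    (three_le_cardFactors_two_pow_add_one_mul (Nat.le_of_succ_le hf))
  refine ⟨{c₁, c₂} ∪ exceptionalDegrees f (ordCompl[2] (c₂ / ((2 ^ f + 1) * (2 ^ f - 1)))),
    (Finset.card_union_le _ _).trans
      (Nat.add_le_add Finset.card_le_two (card_exceptionalDegrees_le _ _)),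
    fun θ χ hθ hχ hχθ hinv hχq ↦ ?_⟩
  rw [Finset.mem_union, Finset.mem_insert, Finset.mem_singleton]
  by_cases h4 : 4 ∣ charDegree χ
  · exact .inl <| .inl <| hc₁ _ hχ.charDegree_mem_charDegrees <|
      S.four_mul_dvd_charDegree hθ hχ hχθ hf hF hG hχq hinv h4
  · exact (S.charDegree_mem_of_not_four_dvd hf hF hG hθ hχ hχθ hinv h4 hc₂).imp_left .inr

end SL2Section

theorem isMInvariant_of_le_inertia {G : Type} [Group G] {N M : Subgroup G} {θ : FDRep ℂ N}
    (h : M ≤ inertia M (extendByZero N θ.character)) : IsMInvariant M θ := fun m hm x hx ↦ by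
  have := congrFun (h hm).2 (x : G)
  rwa [conjFun_apply, extendByZero_of_mem _ hx, extendByZero_coe] at this

/-- Let `q = 2^f` with `f ≥ 4` and `G` a finite group satisfying the two-prime hypothesis
with normal subgroups `N ≤ M` such that `M/N ≅ PSL₂(q)` and the centralizer of `M/N` in
`G/N` is trivial.  Then the union `B₂`, over all irreducible characters `θ` of `N` that are
not `M`-invariant, of `cd(G|θ) \ cd(G/N)`, has at most `5` elements. -/
theorem B2_bound_psl2_even
    (f : ℕ) (hf : 4 ≤ f)
    (F : Type) [Field F] [Fintype F] (hF : Fintype.card F = 2 ^ f)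
    (G : Type) [Group G] [Finite G] (hG : TwoPrimeHypothesis G)
    (N M : Subgroup G) [N.Normal] [M.Normal] (hNM : N ≤ M)
    (hiso : Nonempty ((M.map (QuotientGroup.mk' N)) ≃* PSL2 F))
    (hcent : Subgroup.centralizer ((M.map (QuotientGroup.mk' N)) : Set (G ⧸ N)) = ⊥) :
    {n | ∃ θ : FDRep ℂ N, Simple θ ∧ ¬ IsMInvariant M θ ∧
      n ∈ charDegreesOver G N θ ∧ n ∉ charDegrees (G ⧸ N)}.ncard ≤ 5 := by
  have hcard : Nat.card F = 2 ^ f := Nat.card_eq_fintype_card.trans hF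
  have : CharP F 2 := charP_of_card_eq_prime_pow hF
  obtain ⟨S⟩ := SL2Section.nonempty_of_centralizer_eq_bot hNM hiso hcent
  obtain ⟨D, hD, hmem⟩ := S.exists_finset_charDegree_mem hf hcard hG
  refine (Set.ncard_le_ncard ?_ D.finite_toSet).trans ((Set.ncard_coe_finset D).trans_le hD)
  rintro n ⟨θ, hθ, hinv, ⟨V, hV, rfl, hVθ⟩, hquot⟩
  rw [← charDegree_character V] at hquot ⊢
  have hne : charDegree V.character ≠ 2 ^ f := fun h ↦
    hquot (h ▸ hcard ▸ S.natCard_mem_charDegrees_quotient)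
  exact hmem (extendByZero N θ.character) V.character ⟨θ, hθ, rfl⟩
    (isIrredCharacter_character V hV) ((charInner_extendByZero_ne_zero_iff _ _).2 hVθ)
    (mt isMInvariant_of_le_inertia hinv) hne
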